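/- arXiv:2305.07456 — 3 statements merged into one kernel-verified Lean document; each statement's English description precedes it below -/
import Mathlib

section
/- (Coarse Menger Theorem for two paths) Let X be a graph or a geodesic metric space, and let A, Z be two subsets of X. For every K > 0, either (1) there is a set S ⊂ X with diam(S) ≤ K such that X ∖ S contains no path joining A to Z, or (2) there are two paths joining A to Z at distance at least K/272 from each other. -/
/-!
Write `r = K / 272` and suppose no set of diameter at most `K` separates `A` from `Z`; in
particular no ball of radius `136 * r` does. Let `p` be an almost shortest geodesic from `A` to `Z`,
of length `L`. The plan is to build two paths out of `p` itself and of pieces of `X` far from `p`.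

A *core* is a path component of the set of points at distance more than `4 * r` from `p`, and its
*shadow* is the set of positions of `p` within `5 * r` of it. A path avoiding the ball of radius
`136 * r` about `p t` must, between its last visit near the part of `p` before that ball and its
first visit near the part beyond it, run through a core; so for each `t` some core has shadow on both
sides of `t`, at distance at least `125 * r` from `t`, or touches `A`, respectively `Z`, instead
(`Setting.passing`). The almost minimality of `p` guarantees that the path does not start near the
part beyond the ball, nor end near the part before it.

One may step from a core to another at a cost `k` between `2` and `5`: if they are within `3 * r`; if
they are within `6 * r`, provided `3 ≤ k`; or if the shadow of the first reaches at least
`(6 - k) * 25 * r` beyond some position of the shadow of the second (`Edge`). By the previous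
paragraph and a supremum argument, a core touching `Z` can be reached from one touching `A`.
Take a cheapest chain `c 0, …, c n`. Minimality rules out all shortcuts: cores that are not
consecutive are `6 * r` apart; two cores whose costs differ by more than `k` do not overlap by
`(6 - k) * 25 * r`; and two cores whose costs differ by more than `4` have shadows `25 * r` apart, in
the order of the chain, for otherwise a core passing a position of the first shadow gives a detour of
cost `4`. The grading of the overlap by the cost is what makes overlaps of different steps comparable:
a pair of cores spanning a step and another one overlaps less than that step, by `25 * r`
(`Layout.no_skip`). The outcome is recorded in the structure `Layout`, built in
`Setting.exists_layout`.

Consecutive cores at distance less than `3 * r` (or `6 * r`, if the step has cost `3`) are joined by a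
short geodesic, a bridge; this partitions the chain into runs. At a step between two runs, the shadow
of `c i` reaches a position `t i` well beyond a position `s i` of the shadow of `c (i + 1)`. The two
paths alternate: while one goes through a run of cores, the other one follows `p`. At a step
between runs, the former drops from `c i` to `p (t i)` and goes on along `p`, and the latter, which
follows `p` up to `s i`, climbs from `p (s i)` to `c (i + 1)`. So the pieces attached to runs of
even index make up one path, and those attached to runs of odd index the other (`Layout.two_steps`). That
any two pieces of different parity are `r` apart is `Layout.piece_sep`: near `p` this follows from the
order of the positions `s i` and `t i`, which the lack of shortcuts forces, and away from `p` from the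
distances between the cores.
-/

/-- A metric space is geodesic if every two points are joined by a geodesic. -/
def IsGeodesicSpace (X : Type*) [MetricSpace X] : Prop :=
  ∀ x y : X, ∃ f : ℝ → X, f 0 = x ∧ f (dist x y) = y ∧
    ∀ s ∈ Set.Icc 0 (dist x y), ∀ t ∈ Set.Icc 0 (dist x y), dist (f s) (f t) = |s - t|

/-! ### Layouts -/

/-- The union of all geodesics from `x` to `y`. -/
def mseg {X : Type*} [MetricSpace X] (x y : X) : Set X := {w | dist x w + dist w y = dist x y}

/-- The position `t` lies in the shadow of `C` on the geodesic `p : [0, L] → X`: some point of `C`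
is within `5 * r` of `p t`. -/
def Sh {X : Type*} [MetricSpace X] (p : ℝ → X) (L r : ℝ) (C : Set X) (t : ℝ) : Prop :=
  t ∈ Set.Icc 0 L ∧ ∃ x ∈ C, dist x (p t) ≤ 5 * r

/-- A chain of cores `c 0, …, c n` leading from `A` to `Z` along the geodesic `p : [0, L] → X`, with
costs `D i` and with the points used to pass from `c i` to `c (i + 1)`. For `i < n` there are two
kinds of step. If `Br i` holds, `c i` and `c (i + 1)` are joined by a bridge from `x i` to `x' i`.
Otherwise the shadow of `c i` reaches a position `t i`, near `y i ∈ c i`, well beyond a position `s i`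
of the shadow of `c (i + 1)`, near `y' i ∈ c (i + 1)`. By convention `s n = L`. -/
structure Layout {X : Type*} [MetricSpace X] (p : ℝ → X) (L r : ℝ) (A Z : Set X) where
  n : ℕ
  c : ℕ → Set X
  D : ℕ → ℕ
  Br : ℕ → Prop
  t : ℕ → ℝ
  s : ℕ → ℝ
  x : ℕ → X
  x' : ℕ → X
  y : ℕ → X
  y' : ℕ → X
  hr : 0 < r
  hL : 0 ≤ L
  hp : ∀ a ∈ Set.Icc 0 L, ∀ b ∈ Set.Icc 0 L, dist (p a) (p b) = |a - b|
  startA : (c 0 ∩ A).Nonempty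
  endZ : (c n ∩ Z).Nonempty
  conn : ∀ i ≤ n, IsPathConnected (c i)
  far : ∀ i ≤ n, ∀ w ∈ c i, ∀ a ∈ Set.Icc 0 L, 4 * r < dist w (p a)
  lo : ∀ i < n, D i + 2 ≤ D (i + 1)
  near : ∀ i j, i + 2 ≤ j → j ≤ n → ∀ w ∈ c i, ∀ w' ∈ c j, 6 * r ≤ dist w w'
  overlap : ∀ i j k : ℕ, i < j → j ≤ n → 2 ≤ k → k ≤ 5 → ∀ a b, Sh p L r (c i) a → Sh p L r (c j) b →
    (6 - (k : ℝ)) * (25 * r) ≤ a - b → D j ≤ D i + k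
  detour : ∀ i j, i < j → j ≤ n → ∀ a b, Sh p L r (c i) a → Sh p L r (c j) b →
    b ≤ a + 25 * r → D j ≤ D i + 4
  x_mem : ∀ i < n, Br i → x i ∈ c i
  x'_mem : ∀ i < n, Br i → x' i ∈ c (i + 1)
  br_len : ∀ i < n, Br i → dist (x i) (x' i) < 6 * r
  br_len' : ∀ i < n, Br i → dist (x i) (x' i) < 3 * r ∨ D (i + 1) = D i + 3
  br_sh : ∀ i < n, Br i → ∀ w ∈ mseg (x i) (x' i), ∃ a, Sh p L r (c i) a ∧ dist w (p a) ≤ 10 * r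
  br_sh' : ∀ i < n, Br i → ∀ w ∈ mseg (x i) (x' i),
    ∃ a, Sh p L r (c (i + 1)) a ∧ dist w (p a) ≤ 10 * r
  hi : ∀ i < n, ¬ Br i → D (i + 1) ≤ D i + 4
  adj : ∀ i < n, ¬ Br i → ∀ w ∈ c i, ∀ w' ∈ c (i + 1), 3 * r ≤ dist w w'
  gap : ∀ i < n, ¬ Br i → (6 - ((D (i + 1) : ℝ) - D i)) * (25 * r) ≤ t i - s i
  t_mem : ∀ i < n, ¬ Br i → t i ∈ Set.Icc 0 L
  s_mem : ∀ i < n, ¬ Br i → s i ∈ Set.Icc 0 L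
  y_mem : ∀ i < n, ¬ Br i → y i ∈ c i
  y'_mem : ∀ i < n, ¬ Br i → y' i ∈ c (i + 1)
  y_near : ∀ i < n, ¬ Br i → dist (y i) (p (t i)) ≤ 5 * r
  y'_near : ∀ i < n, ¬ Br i → dist (y' i) (p (s i)) ≤ 5 * r
  s_last : s n = L

namespace Layout

variable {X : Type*} [MetricSpace X] {p : ℝ → X} {L r : ℝ} {A Z : Set X} (S : Layout p L r A Z)

open Classical in
/-- The index of the run containing `c i`, a run being a maximal block of cores joined by bridges. -/
noncomputable def strand : ℕ → ℕ
  | 0 => 0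
  | i + 1 => if S.Br i then strand i else strand i + 1

open Classical in
/-- The position on `p` reached by the path that does not use `c i`: the last `t k` with `k < i` and
`¬ Br k`, or `0` if there is none. -/
noncomputable def base : ℕ → ℝ
  | 0 => 0
  | i + 1 => if S.Br i then base i else S.t i

/-- `S.Piece e w` says that `w` lies on a piece of the layout belonging to run `e`; only the parity
of `e` matters, the pieces with `e` even making up one path and those with `e` odd the other. -/
inductive Piece : ℕ → X → Prop
  | core (i : ℕ) (w : X) : i ≤ S.n → w ∈ S.c i → Piece (S.strand i) w
  | bridge (i : ℕ) (w : X) : i < S.n → S.Br i → w ∈ mseg (S.x i) (S.x' i) → Piece (S.strand i) w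
  | leave (i : ℕ) (w : X) : i < S.n → ¬ S.Br i → w ∈ mseg (S.y i) (p (S.t i)) →
      Piece (S.strand i) w
  | enter (i : ℕ) (w : X) : i < S.n → ¬ S.Br i → w ∈ mseg (S.y' i) (p (S.s i)) →
      Piece (S.strand i + 1) w
  | line (i : ℕ) (a : ℝ) : (i = S.n ∨ i < S.n ∧ ¬ S.Br i) →
      a ∈ Set.uIcc (S.base i) (S.s i) → Piece (S.strand i + 1) (p a)

theorem strand_br {i : ℕ} (h : S.Br i) : S.strand (i + 1) = S.strand i := by
  simp [strand, h]

theorem strand_not {i : ℕ} (h : ¬ S.Br i) : S.strand (i + 1) = S.strand i + 1 := by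
  simp [strand, h]

theorem base_spec (j : ℕ) : (S.base j = 0 ∧ ∀ i < j, S.Br i) ∨
    ∃ k < j, ¬ S.Br k ∧ S.base j = S.t k ∧ (∀ i, k < i → i < j → S.Br i) ∧
      S.strand j = S.strand k + 1 := by
  induction j with
  | zero => left; simp [base]
  | succ j ih =>
    by_cases h : S.Br j
    · have hb : S.base (j + 1) = S.base j := by simp [base, h]
      rw [hb, S.strand_br h]
      rcases ih with ⟨h0, h1⟩ | ⟨k, hk, h1, h2, h3, h4⟩
      · left
        refine ⟨h0, fun i hi => ?_⟩
        rcases Nat.lt_succ_iff_lt_or_eq.mp hi with h' | rfl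
        · exact h1 i h'
        · exact h
      · right
        refine ⟨k, by omega, h1, h2, fun i hi hi' => ?_, h4⟩
        rcases Nat.lt_succ_iff_lt_or_eq.mp hi' with h' | rfl
        · exact h3 i hi h'
        · exact h
    · right
      refine ⟨j, by omega, h, by simp [base, h], fun i hi hi' => by omega, S.strand_not h⟩

theorem D_le {i j : ℕ} (hij : i ≤ j) (hj : j ≤ S.n) : S.D i + 2 * j ≤ S.D j + 2 * i := by
  induction j, hij using Nat.le_induction with
  | base => omega
  | succ j hij ih =>
    have := ih (by omega)
    have := S.lo j (by omega)
    omega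

theorem sh_t {i : ℕ} (hi : i < S.n) (h : ¬ S.Br i) : Sh p L r (S.c i) (S.t i) :=
  ⟨S.t_mem i hi h, S.y i, S.y_mem i hi h, S.y_near i hi h⟩

theorem sh_s {i : ℕ} (hi : i < S.n) (h : ¬ S.Br i) : Sh p L r (S.c (i + 1)) (S.s i) :=
  ⟨S.s_mem i hi h, S.y' i, S.y'_mem i hi h, S.y'_near i hi h⟩

theorem gap_two {i : ℕ} (hi : i < S.n) (h : ¬ S.Br i) : S.s i + 50 * r ≤ S.t i := by
  have h1 := S.gap i hi h
  have h2 : (S.D (i + 1) : ℝ) ≤ S.D i + 4 := by exact_mod_cast S.hi i hi h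
  have h3 := S.hr
  nlinarith

/-- If the costs of `c i` and `c j` differ by at least `2` more than those of `c k` and `c (k + 1)`,
then `c i` and `c j` overlap by at least `25 * r` less than step `k` does. Otherwise the overlap would
suffice for a step from `c i` to `c j` at a cost one more than that of step `k`. -/
theorem no_skip {i j k : ℕ} (hk : k < S.n) (h : ¬ S.Br k) (hij : i < j) (hj : j ≤ S.n)
    (hD : S.D i + S.D (k + 1) + 2 ≤ S.D j + S.D k) {a b : ℝ} (ha : Sh p L r (S.c i) a)
    (hb : Sh p L r (S.c j) b) : a - b < S.t k - S.s k - 25 * r := by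
  by_contra! hc
  have h1 := S.gap k hk h
  have h2 := S.hi k hk h
  have h3 := S.lo k hk
  obtain ⟨δ, hδ⟩ := Nat.exists_eq_add_of_le (show S.D k ≤ S.D (k + 1) by omega)
  have := S.overlap i j (δ + 1) hij hj (by omega) (by omega) a b ha hb (by
    rw [hδ] at h1
    push_cast at h1 ⊢
    nlinarith)
  omega

theorem t_lt {i j : ℕ} (hij : i < j) (hj : j < S.n) (hi : ¬ S.Br i) (hj' : ¬ S.Br j) :
    S.t i + 25 * r ≤ S.t j := by
  have h1 := S.D_le hij.le hj.le
  have := S.no_skip hj hj' (i := i) (j := j + 1) (by omega) hj (by omega)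
    (S.sh_t (by omega) hi) (S.sh_s hj hj')
  linarith

theorem s_lt {i j : ℕ} (hij : i < j) (hj : j < S.n) (hi : ¬ S.Br i) (hj' : ¬ S.Br j) :
    S.s i + 25 * r ≤ S.s j := by
  have h1 := S.D_le (show i + 1 ≤ j + 1 by omega) hj
  have := S.no_skip (k := i) (by omega) hi (i := i) (j := j + 1) (by omega) hj (by omega)
    (S.sh_t (by omega) hi) (S.sh_s hj hj')
  linarith

theorem t_lt_s {i j : ℕ} (hij : i + 2 ≤ j) (hj : j < S.n) (hi : ¬ S.Br i) (hj' : ¬ S.Br j) :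
    S.t i + 25 * r ≤ S.s j := by
  by_contra! hc
  have h1 := S.D_le (show i ≤ j + 1 by omega) hj
  have := S.detour i (j + 1) (by omega) hj _ _ (S.sh_t (by omega) hi) (S.sh_s hj hj') hc.le
  omega

/-! ### Separation away from the geodesic -/

/-- Cores in runs of different parity are `3 * r` apart. -/
theorem core_core {i j : ℕ} (hi : i ≤ S.n) (hj : j ≤ S.n)
    (h : S.strand i % 2 ≠ S.strand j % 2) {w w' : X} (hw : w ∈ S.c i) (hw' : w' ∈ S.c j) :
    3 * r ≤ dist w w' := by
  have hr := S.hr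
  wlog hij : i < j generalizing i j w w'
  · rw [dist_comm]
    refine this hj hi h.symm hw' hw ?_
    rcases lt_trichotomy i j with h' | h' | h'
    · exact absurd h' hij
    · subst h'; exact absurd rfl h
    · exact h'
  by_cases h2 : i + 2 ≤ j
  · linarith [S.near i j h2 hj w hw w' hw']
  · obtain rfl : j = i + 1 := by omega
    have hb : ¬ S.Br i := fun hb => h (by rw [S.strand_br hb])
    exact S.adj i (by omega) hb w hw w' hw'

/-- Cores and bridges in runs of different parity are `r` apart: the core is `3 * r` away from both
ends of the bridge, and `6 * r` away from one of them. -/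
theorem core_bridge {i k : ℕ} (hi : i ≤ S.n) (hk : k < S.n) (hb : S.Br k)
    (h : S.strand i % 2 ≠ S.strand k % 2) {w w' : X} (hw : w ∈ S.c i)
    (hw' : w' ∈ mseg (S.x k) (S.x' k)) : r ≤ dist w w' := by
  have hr := S.hr
  have hlen := S.br_len k hk hb
  have hm : dist (S.x k) w' + dist w' (S.x' k) = dist (S.x k) (S.x' k) := hw'
  have hx := S.x_mem k hk hb
  have hx' := S.x'_mem k hk hb
  have h' : S.strand i % 2 ≠ S.strand (k + 1) % 2 := by rwa [S.strand_br hb]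
  have h1 := S.core_core hi hk.le h hw hx
  have h2 := S.core_core hi hk h' hw hx'
  have t1 := dist_triangle w w' (S.x k)
  have t2 := dist_triangle w w' (S.x' k)
  rw [dist_comm w' (S.x k)] at t1
  rcases lt_trichotomy i k with hl | rfl | hl
  · have := S.near i (k + 1) (by omega) hk w hw _ hx'
    linarith
  · exact absurd rfl h
  · have : k + 1 ≠ i := by rintro rfl; exact h' rfl
    have := S.near k i (by omega) hi _ hx w hw
    rw [dist_comm] at this
    linarith

/-- A geodesic of length at most `5 * r` from `x` to `p a` stays `r` away from every point `w` that is
at least `3 * r` from `x` and more than `4 * r` from `p a`. -/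
theorem core_attach {w x y : X} {a : ℝ} (h1 : 3 * r ≤ dist w x) (h2 : 4 * r < dist w (p a))
    (h3 : dist x (p a) ≤ 5 * r) (hy : y ∈ mseg x (p a)) : r ≤ dist w y := by
  have hm : dist x y + dist y (p a) = dist x (p a) := hy
  have t1 := dist_triangle w y x
  have t2 := dist_triangle w y (p a)
  rw [dist_comm y x] at t1
  linarith

theorem mseg_le {x y w : X} (h : w ∈ mseg x y) : dist w y ≤ dist x y := by
  have hm : dist x w + dist w y = dist x y := h
  have := dist_nonneg (x := x) (y := w)
  linarith

/-- Points near positions of `p` that differ by `25 * r` are `r` apart. -/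
theorem pos_sep (S : Layout p L r A Z) {w w' : X} {a b u v : ℝ} (ha : a ∈ Set.Icc 0 L) (hb : b ∈ Set.Icc 0 L)
    (hw : dist w (p a) ≤ u) (hw' : dist w' (p b) ≤ v) (huv : u + v ≤ 24 * r)
    (h : a + 25 * r ≤ b ∨ b + 25 * r ≤ a) : r ≤ dist w w' := by
  have h1 := S.hp a ha b hb
  have h2 := dist_triangle4 (p a) w w' (p b)
  rw [dist_comm (p a) w] at h2
  have : 25 * r ≤ |a - b| := by
    rcases h with h | h
    · rw [abs_sub_comm]; exact le_trans (by linarith) (le_abs_self _)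
    · exact le_trans (by linarith) (le_abs_self _)
  linarith

/-- Bridges in runs of different parity are `r` apart: at least three steps lie between their outer
ends, so their shadows are `25 * r` apart. -/
theorem bridge_bridge {i k : ℕ} (hi : i < S.n) (hk : k < S.n) (hb : S.Br i) (hb' : S.Br k)
    (h : S.strand i % 2 ≠ S.strand k % 2) {w w' : X} (hw : w ∈ mseg (S.x i) (S.x' i))
    (hw' : w' ∈ mseg (S.x k) (S.x' k)) : r ≤ dist w w' := by
  wlog hik : i < k generalizing i k w w'
  · rw [dist_comm]
    refine this hk hi hb' hb h.symm hw' hw ?_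
    rcases lt_trichotomy i k with h' | h' | h'
    · exact absurd h' hik
    · subst h'; exact absurd rfl h
    · exact h'
  have h1 : i + 1 ≠ k := by rintro rfl; exact h (by rw [S.strand_br hb])
  obtain ⟨a, ha, hwa⟩ := S.br_sh i hi hb w hw
  obtain ⟨b, hb1, hwb⟩ := S.br_sh' k hk hb' w' hw'
  have hr := S.hr
  refine S.pos_sep ha.1 hb1.1 hwa hwb (by linarith) ?_
  left
  by_contra! hc
  have := S.detour i (k + 1) (by omega) hk a b ha hb1 hc.le
  have := S.D_le (show i ≤ k + 1 by omega) hk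
  omega

/-- If a bridge of length less than `3 * r` and a geodesic from `z` to `p a` come within `r` of each
other, then `z` is within `6 * r` of both ends of the bridge. -/
theorem short_bridge {k : ℕ} (hk : k < S.n) (hb : S.Br k) (hlen : dist (S.x k) (S.x' k) < 3 * r)
    {w z y : X} {a : ℝ} (hw : w ∈ mseg (S.x k) (S.x' k)) (ha : a ∈ Set.Icc 0 L)
    (hz : dist z (p a) ≤ 5 * r) (hy : y ∈ mseg z (p a)) (hwy : dist w y < r) :
    dist z (S.x k) < 6 * r ∧ dist z (S.x' k) < 6 * r := by
  have hm : dist (S.x k) w + dist w (S.x' k) = dist (S.x k) (S.x' k) := hw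
  have hm' : dist z y + dist y (p a) = dist z (p a) := hy
  have f1 := S.far k hk.le _ (S.x_mem k hk hb) a ha
  have f2 := S.far (k + 1) hk _ (S.x'_mem k hk hb) a ha
  have t1 := dist_triangle4 (S.x k) w y (p a)
  have t2 := dist_triangle4 (S.x' k) w y (p a)
  have t3 := dist_triangle4 z y w (S.x k)
  have t4 := dist_triangle4 z y w (S.x' k)
  rw [dist_comm (S.x' k) w] at t2
  rw [dist_comm y w, dist_comm w (S.x k)] at t3
  rw [dist_comm y w] at t4
  constructor <;> linarith

/-- A bridge is `r` away from the geodesic from `c j` to `p (t j)`, if their runs have different parity.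
Either their shadows are `25 * r` apart, or the bridge is the one right after step `j`; it is then
shorter than `3 * r`, and its far end is `6 * r` away from `c j`. -/
theorem bridge_leave {k j : ℕ} (hk : k < S.n) (hj : j < S.n) (hb : S.Br k) (hb' : ¬ S.Br j)
    (h : S.strand k % 2 ≠ S.strand j % 2) {w y : X} (hw : w ∈ mseg (S.x k) (S.x' k))
    (hy : y ∈ mseg (S.y j) (p (S.t j))) : r ≤ dist w y := by
  have hr := S.hr
  have hz := S.y_near j hj hb'
  have hyt := (mseg_le hy).trans hz
  have htm := S.t_mem j hj hb'
  rcases lt_or_ge k j with hkj | hjk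
  · have : k + 1 ≠ j := by rintro rfl; exact h (by rw [S.strand_br hb])
    obtain ⟨a, ha, hwa⟩ := S.br_sh k hk hb w hw
    refine S.pos_sep ha.1 htm hwa hyt (by linarith) (Or.inl ?_)
    have h1 := S.D_le (show k ≤ j by omega) hj.le
    have h2 := S.no_skip hj hb' (i := k) (j := j + 1) (by omega) hj (by omega) ha (S.sh_s hj hb')
    linarith
  · have hjk' : j ≠ k := by rintro rfl; exact h rfl
    obtain ⟨a, ha, hwa⟩ := S.br_sh' k hk hb w hw
    by_cases hc : S.t j + 25 * r ≤ a
    · exact S.pos_sep ha.1 htm hwa hyt (by linarith) (Or.inr hc)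
    push Not at hc
    -- The detour through a core jumping over `p (t j)` forces the bridge to be right after step `j`.
    have h1 := S.detour j (k + 1) (by omega) hk _ a (S.sh_t hj hb') ha hc.le
    have h2 := S.D_le (show j + 1 ≤ k by omega) hk.le
    have h3 := S.lo k hk
    have h4 := S.lo j hj
    obtain rfl : k = j + 1 := by omega
    by_contra! hwy
    rcases S.br_len' _ hk hb with hl | hl
    · have := (S.short_bridge hk hb hl hw htm hz hy hwy).2
      have := S.near j (j + 1 + 1) le_rfl hk _ (S.y_mem j hj hb') _ (S.x'_mem _ hk hb)
      linarith
    · omega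

/-- The mirror image of `bridge_leave`: here the exceptional bridge is the one right before step `j`. -/
theorem bridge_enter {k j : ℕ} (hk : k < S.n) (hj : j < S.n) (hb : S.Br k) (hb' : ¬ S.Br j)
    (h : S.strand k % 2 ≠ (S.strand j + 1) % 2) {w y : X} (hw : w ∈ mseg (S.x k) (S.x' k))
    (hy : y ∈ mseg (S.y' j) (p (S.s j))) : r ≤ dist w y := by
  have hr := S.hr
  have hz := S.y'_near j hj hb'
  have hyt := (mseg_le hy).trans hz
  have htm := S.s_mem j hj hb'
  have hne : k ≠ j := by rintro rfl; exact hb' hb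
  rw [← S.strand_not hb'] at h
  rcases lt_or_ge k j with hkj | hjk
  · obtain ⟨a, ha, hwa⟩ := S.br_sh k hk hb w hw
    by_cases hc : a + 25 * r ≤ S.s j
    · exact S.pos_sep ha.1 htm hwa hyt (by linarith) (Or.inl hc)
    push Not at hc
    have h1 := S.detour k (j + 1) (by omega) hj a _ ha (S.sh_s hj hb') hc.le
    have h2 := S.D_le (show k + 1 ≤ j by omega) hj.le
    have h3 := S.lo k hk
    have h4 := S.lo j hj
    obtain rfl : j = k + 1 := by omega
    by_contra! hwy
    rcases S.br_len' _ hk hb with hl | hl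
    · have := (S.short_bridge hk hb hl hw htm hz hy hwy).1
      have := S.near k (k + 1 + 1) le_rfl hj _ (S.x_mem k hk hb) _ (S.y'_mem _ hj hb')
      rw [dist_comm] at this
      linarith
    · omega
  · have : k ≠ j + 1 := by rintro rfl; exact h rfl
    obtain ⟨a, ha, hwa⟩ := S.br_sh' k hk hb w hw
    refine S.pos_sep ha.1 htm hwa hyt (by linarith) (Or.inr ?_)
    have h1 := S.D_le (show j + 1 ≤ k + 1 by omega) hk
    have h2 := S.no_skip hj hb' (i := j) (j := k + 1) (by omega) hk (by omega) (S.sh_t hj hb') ha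
    linarith

/-- A bridge stays away from `p`, since its ends are more than `4 * r` from `p` and its length is less
than `6 * r`. -/
theorem bridge_far {k : ℕ} (hk : k < S.n) (hb : S.Br k) {w : X} (hw : w ∈ mseg (S.x k) (S.x' k))
    {a : ℝ} (ha : a ∈ Set.Icc 0 L) : r ≤ dist w (p a) := by
  have hm : dist (S.x k) w + dist w (S.x' k) = dist (S.x k) (S.x' k) := hw
  have hl := S.br_len k hk hb
  have f1 := S.far k hk.le _ (S.x_mem k hk hb) a ha
  have f2 := S.far (k + 1) hk _ (S.x'_mem k hk hb) a ha
  have t1 := dist_triangle (S.x k) w (p a)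
  have t2 := dist_triangle (S.x' k) w (p a)
  rw [dist_comm (S.x' k) w] at t2
  linarith

/-! ### The order of the positions on the geodesic -/

theorem base_mem {i : ℕ} (hi : i ≤ S.n) : S.base i ∈ Set.Icc 0 L := by
  rcases S.base_spec i with ⟨h, -⟩ | ⟨k, hk, hb, h, -⟩
  · rw [h]; exact ⟨le_rfl, S.hL⟩
  · rw [h]; exact S.t_mem k (by omega) hb

theorem s_mem' {i : ℕ} (hi : i = S.n ∨ i < S.n ∧ ¬ S.Br i) : S.s i ∈ Set.Icc 0 L := by
  rcases hi with rfl | ⟨h, hb⟩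
  · rw [S.s_last]; exact ⟨S.hL, le_rfl⟩
  · exact S.s_mem i h hb

theorem line_mem {i : ℕ} (hi : i = S.n ∨ i < S.n ∧ ¬ S.Br i) {a : ℝ}
    (ha : a ∈ Set.uIcc (S.base i) (S.s i)) : a ∈ Set.Icc 0 L :=
  Set.OrdConnected.uIcc_subset Set.ordConnected_Icc (S.base_mem (by omega)) (S.s_mem' hi) ha

/-- The position `s i` lies left of every later segment of `p`. -/
theorem before_line {i j : ℕ} (hij : i < j) (hi : ¬ S.Br i) (hj : j = S.n ∨ j < S.n ∧ ¬ S.Br j)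
    {a : ℝ} (ha : a ∈ Set.uIcc (S.base j) (S.s j)) : S.s i + 25 * r ≤ a := by
  have hr := S.hr
  have hin : i < S.n := by omega
  have hg := S.gap_two hin hi
  have h1 : S.s i + 25 * r ≤ S.base j := by
    rcases S.base_spec j with ⟨-, h⟩ | ⟨k, hk, hb, h, h', -⟩
    · exact absurd (h i hij) hi
    · rw [h]
      rcases lt_trichotomy i k with hl | rfl | hl
      · linarith [S.t_lt hl (by omega) hi hb]
      · linarith
      · exact absurd (h' i hl hij) hi
  have h2 : S.s i + 25 * r ≤ S.s j := by
    rcases hj with rfl | ⟨hj, hb⟩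
    · rw [S.s_last]; linarith [(S.t_mem i hin hi).2]
    · exact S.s_lt hij hj hi hb
  exact le_trans (le_inf h1 h2) ha.1

/-- The position `t i` lies left of every later segment of `p` that is separated from step `i` by
another step between runs. -/
theorem t_before_line {i j : ℕ} (hij : i < j) (hi : ¬ S.Br i) (hj : j = S.n ∨ j < S.n ∧ ¬ S.Br j)
    (hk : ∃ k, i < k ∧ k < j ∧ ¬ S.Br k) {a : ℝ} (ha : a ∈ Set.uIcc (S.base j) (S.s j)) :
    S.t i + 25 * r ≤ a := by
  obtain ⟨k', hk1, hk2, hk3⟩ := hk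
  have hr := S.hr
  have hin : i < S.n := by omega
  have h1 : ∃ k, k < j ∧ ¬ S.Br k ∧ S.base j = S.t k ∧ i < k := by
    rcases S.base_spec j with ⟨-, h⟩ | ⟨k, hk, hb, h, h', -⟩
    · exact absurd (h i hij) hi
    · refine ⟨k, hk, hb, h, ?_⟩
      by_contra! hc
      exact hk3 (h' k' (by omega) hk2)
  obtain ⟨k, hkj, hb, h, hik⟩ := h1
  have h1 := S.t_lt hik (by omega) hi hb
  have h2 : S.t i + 25 * r ≤ S.s j := by
    rcases hj with rfl | ⟨hj, hb'⟩
    · rw [S.s_last]; linarith [(S.t_mem k hkj hb).2]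
    · exact S.t_lt_s (by omega) hj hi hb'
  rw [← h] at h1
  exact le_trans (le_inf h1 h2) ha.1

/-- The segment of `p` used at step `i` lies left of `t j`, for the same or a later step `j`. -/
theorem line_before {i j : ℕ} (hij : i ≤ j) (hi : i = S.n ∨ i < S.n ∧ ¬ S.Br i) (hj : j < S.n)
    (hb : ¬ S.Br j) {a : ℝ} (ha : a ∈ Set.uIcc (S.base i) (S.s i)) : a + 25 * r ≤ S.t j := by
  have hr := S.hr
  have hg := S.gap_two hj hb
  have hbi : ¬ S.Br i := by
    rcases hi with h | h
    · omega
    · exact h.2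
  have h1 : S.base i ≤ S.t j - 25 * r := by
    rcases S.base_spec i with ⟨h, -⟩ | ⟨k, hk, hbk, h, -⟩
    · rw [h]; linarith [(S.s_mem j hj hb).1]
    · rw [h]; linarith [S.t_lt (show k < j by omega) hj hbk hb]
  have h2 : S.s i ≤ S.t j - 25 * r := by
    rcases hij.lt_or_eq with hl | rfl
    · linarith [S.s_lt hl hj hbi hb]
    · linarith
  linarith [le_trans ha.2 (sup_le h1 h2)]

/-- The segment of `p` used at step `i` lies left of `s j`, for a later step `j`. -/
theorem line_before_s {i j : ℕ} (hij : i < j) (hi : i < S.n ∧ ¬ S.Br i) (hj : j < S.n)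
    (hb : ¬ S.Br j) {a : ℝ} (ha : a ∈ Set.uIcc (S.base i) (S.s i)) : a + 25 * r ≤ S.s j := by
  have h2 := S.s_lt hij hj hi.2 hb
  have h1 : S.base i ≤ S.s j - 25 * r := by
    rcases S.base_spec i with ⟨h, -⟩ | ⟨k, hk, hbk, h, -⟩
    · rw [h]; linarith [(S.s_mem i hi.1 hi.2).1]
    · rw [h]; linarith [S.t_lt_s (show k + 2 ≤ j by omega) hj hbk hb]
  linarith [le_trans ha.2 (sup_le h1 (show S.s i ≤ S.s j - 25 * r by linarith))]

theorem leave_enter {i j : ℕ} (hi : i < S.n) (hj : j < S.n) (hb : ¬ S.Br i) (hb' : ¬ S.Br j)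
    (h : S.strand i % 2 ≠ (S.strand j + 1) % 2) :
    S.t i + 25 * r ≤ S.s j ∨ S.s j + 25 * r ≤ S.t i := by
  have hr := S.hr
  have hg := S.gap_two hi hb
  rcases lt_trichotomy i j with hl | rfl | hl
  · left
    refine S.t_lt_s ?_ hj hb hb'
    by_contra! hc
    obtain rfl : j = i + 1 := by omega
    rw [S.strand_not hb] at h
    omega
  · right; linarith
  · right; linarith [S.s_lt hl hi hb' hb]

theorem leave_line {i j : ℕ} (hi : i < S.n) (hb : ¬ S.Br i) (hj : j = S.n ∨ j < S.n ∧ ¬ S.Br j)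
    (h : S.strand i % 2 ≠ (S.strand j + 1) % 2) {a : ℝ}
    (ha : a ∈ Set.uIcc (S.base j) (S.s j)) : S.t i + 25 * r ≤ a ∨ a + 25 * r ≤ S.t i := by
  rcases lt_or_ge i j with hl | hl
  · left
    refine S.t_before_line hl hb hj ?_ ha
    rcases S.base_spec j with ⟨-, h'⟩ | ⟨k, hk, hbk, -, h', h''⟩
    · exact absurd (h' i hl) hb
    · refine ⟨k, ?_, hk, hbk⟩
      rcases lt_trichotomy i k with h1 | rfl | h1
      · exact h1
      · omega
      · exact absurd (h' i h1 hl) hb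
  · right
    exact S.line_before hl hj hi hb ha

theorem enter_line {i j : ℕ} (hi : i < S.n) (hb : ¬ S.Br i) (hj : j = S.n ∨ j < S.n ∧ ¬ S.Br j)
    (h : (S.strand i + 1) % 2 ≠ (S.strand j + 1) % 2) {a : ℝ}
    (ha : a ∈ Set.uIcc (S.base j) (S.s j)) : S.s i + 25 * r ≤ a ∨ a + 25 * r ≤ S.s i := by
  rcases lt_trichotomy i j with hl | rfl | hl
  · exact Or.inl (S.before_line hl hb hj ha)
  · exact absurd rfl h
  · refine Or.inr (S.line_before_s hl ?_ hi hb ha)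
    rcases hj with h | h
    · omega
    · exact h

theorem line_line {i j : ℕ} (hij : i < j) (hi : i = S.n ∨ i < S.n ∧ ¬ S.Br i)
    (hj : j = S.n ∨ j < S.n ∧ ¬ S.Br j) {a b : ℝ}
    (ha : a ∈ Set.uIcc (S.base i) (S.s i)) (hb : b ∈ Set.uIcc (S.base j) (S.s j)) :
    a + 25 * r ≤ b := by
  have hi' : i < S.n ∧ ¬ S.Br i := by
    rcases hi with h | h
    · omega
    · exact h
  have h1 : a + 25 * r ≤ S.base j := by
    rcases S.base_spec j with ⟨-, h⟩ | ⟨k, hk, hbk, h, h', -⟩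
    · exact absurd (h i hij) hi'.2
    · rw [h]
      refine S.line_before ?_ hi (by omega) hbk ha
      by_contra! hc
      exact hi'.2 (h' i hc hij)
  have h2 : a + 25 * r ≤ S.s j := by
    rcases hj with rfl | ⟨hj, hbj⟩
    · rw [S.s_last]
      have := S.line_before le_rfl hi hi'.1 hi'.2 ha
      linarith [(S.t_mem i hi'.1 hi'.2).2]
    · exact S.line_before_s hij hi' hj hbj ha
  exact le_trans (le_inf h1 h2) hb.1

/-- Pieces of different parity are `r` apart. -/
theorem piece_sep {e f : ℕ} {v w : X} (hv : S.Piece e v) (hw : S.Piece f w)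
    (hef : e % 2 ≠ f % 2) : r ≤ dist v w := by
  have hr := S.hr
  have hpp : ∀ a, dist (p a) (p a) ≤ 0 := fun a => (dist_self _).le
  cases hv with
  | core i _ hi hv =>
    cases hw with
    | core j _ hj hw => linarith [S.core_core hi hj hef hv hw]
    | bridge j _ hj hb hw => exact S.core_bridge hi hj hb hef hv hw
    | leave j _ hj hb hw =>
      exact core_attach (S.core_core hi hj.le hef hv (S.y_mem j hj hb))
        (S.far i hi v hv _ (S.t_mem j hj hb)) (S.y_near j hj hb) hw
    | enter j _ hj hb hw =>
      rw [← S.strand_not hb] at hef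
      exact core_attach (S.core_core hi hj hef hv (S.y'_mem j hj hb))
        (S.far i hi v hv _ (S.s_mem j hj hb)) (S.y'_near j hj hb) hw
    | line j a hj ha => linarith [S.far i hi v hv a (S.line_mem hj ha)]
  | bridge i _ hi hb hv =>
    cases hw with
    | core j _ hj hw => rw [dist_comm]; exact S.core_bridge hj hi hb hef.symm hw hv
    | bridge j _ hj hb' hw => exact S.bridge_bridge hi hj hb hb' hef hv hw
    | leave j _ hj hb' hw => exact S.bridge_leave hi hj hb hb' hef hv hw
    | enter j _ hj hb' hw => exact S.bridge_enter hi hj hb hb' hef hv hw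
    | line j a hj ha => exact S.bridge_far hi hb hv (S.line_mem hj ha)
  | leave i _ hi hb hv =>
    have hv' := (mseg_le hv).trans (S.y_near i hi hb)
    have hti := S.t_mem i hi hb
    cases hw with
    | core j _ hj hw =>
      rw [dist_comm]
      exact core_attach (S.core_core hj hi.le hef.symm hw (S.y_mem i hi hb))
        (S.far j hj w hw _ hti) (S.y_near i hi hb) hv
    | bridge j _ hj hb' hw => rw [dist_comm]; exact S.bridge_leave hj hi hb' hb hef.symm hw hv
    | leave j _ hj hb' hw =>
      refine S.pos_sep hti (S.t_mem j hj hb') hv' ((mseg_le hw).trans (S.y_near j hj hb'))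
        (by linarith) ?_
      rcases lt_trichotomy i j with h | rfl | h
      · exact Or.inl (S.t_lt h hj hb hb')
      · exact absurd rfl hef
      · exact Or.inr (S.t_lt h hi hb' hb)
    | enter j _ hj hb' hw =>
      exact S.pos_sep hti (S.s_mem j hj hb') hv' ((mseg_le hw).trans (S.y'_near j hj hb'))
        (by linarith) (S.leave_enter hi hj hb hb' hef)
    | line j a hj ha =>
      exact S.pos_sep hti (S.line_mem hj ha) hv' (hpp a) (by linarith)
        (S.leave_line hi hb hj hef ha)
  | enter i _ hi hb hv =>
    have hv' := (mseg_le hv).trans (S.y'_near i hi hb)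
    have hsi := S.s_mem i hi hb
    cases hw with
    | core j _ hj hw =>
      rw [dist_comm]
      rw [← S.strand_not hb] at hef
      exact core_attach (S.core_core hj hi hef.symm hw (S.y'_mem i hi hb))
        (S.far j hj w hw _ hsi) (S.y'_near i hi hb) hv
    | bridge j _ hj hb' hw => rw [dist_comm]; exact S.bridge_enter hj hi hb' hb hef.symm hw hv
    | leave j _ hj hb' hw =>
      exact S.pos_sep hsi (S.t_mem j hj hb') hv' ((mseg_le hw).trans (S.y_near j hj hb'))
        (by linarith) (S.leave_enter hj hi hb' hb hef.symm).symm
    | enter j _ hj hb' hw =>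
      refine S.pos_sep hsi (S.s_mem j hj hb') hv' ((mseg_le hw).trans (S.y'_near j hj hb'))
        (by linarith) ?_
      rcases lt_trichotomy i j with h | rfl | h
      · exact Or.inl (S.s_lt h hj hb hb')
      · exact absurd rfl hef
      · exact Or.inr (S.s_lt h hi hb' hb)
    | line j a hj ha =>
      exact S.pos_sep hsi (S.line_mem hj ha) hv' (hpp a) (by linarith)
        (S.enter_line hi hb hj hef ha)
  | line i a hi ha =>
    have ham := S.line_mem hi ha
    cases hw with
    | core j _ hj hw => rw [dist_comm]; linarith [S.far j hj w hw a ham]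
    | bridge j _ hj hb hw => rw [dist_comm]; exact S.bridge_far hj hb hw ham
    | leave j _ hj hb hw =>
      exact S.pos_sep ham (S.t_mem j hj hb) (hpp a) ((mseg_le hw).trans (S.y_near j hj hb))
        (by linarith) (S.leave_line hj hb hi hef.symm ha).symm
    | enter j _ hj hb hw =>
      exact S.pos_sep ham (S.s_mem j hj hb) (hpp a) ((mseg_le hw).trans (S.y'_near j hj hb))
        (by linarith) (S.enter_line hj hb hi hef.symm ha).symm
    | line j b hj hb =>
      refine S.pos_sep ham (S.line_mem hj hb) (hpp a) (hpp b) (by linarith) ?_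
      rcases lt_trichotomy i j with h | rfl | h
      · exact Or.inl (S.line_line h hi hj ha hb)
      · exact absurd rfl hef
      · exact Or.inr (S.line_line h hj hi hb ha)

end Layout

/-! ### Geodesics and joinability -/

theorem continuousOn_of_geod {X : Type*} [MetricSpace X] {p : ℝ → X} {L : ℝ}
    (hp : ∀ a ∈ Set.Icc 0 L, ∀ b ∈ Set.Icc 0 L, dist (p a) (p b) = |a - b|) :
    ContinuousOn p (Set.Icc 0 L) := by
  rw [Metric.continuousOn_iff]
  intro b hb ε hε
  refine ⟨ε, hε, fun a ha h => ?_⟩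
  rw [hp a ha b hb]
  exact h

theorem joinedIn_of_continuousOn {X : Type*} [TopologicalSpace X] {f : ℝ → X} {a b : ℝ} {W : Set X}
    (hf : ContinuousOn f (Set.uIcc a b)) (hW : ∀ t ∈ Set.uIcc a b, f t ∈ W) :
    JoinedIn W (f a) (f b) := by
  have h1 : IsPathConnected (Set.uIcc a b) :=
    (convex_uIcc a b).isPathConnected ⟨a, Set.left_mem_uIcc⟩
  have h2 := h1.image' hf
  refine (h2.joinedIn _ ⟨a, Set.left_mem_uIcc, rfl⟩ _ ⟨b, Set.right_mem_uIcc, rfl⟩).mono ?_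
  rintro _ ⟨t, ht, rfl⟩
  exact hW t ht

/-- A geodesic from `u` to `v` with the fact that its points lie in `mseg u v`. -/
theorem exists_geod {X : Type*} [MetricSpace X] (hX : IsGeodesicSpace X) (u v : X) :
    ∃ f : ℝ → X, f 0 = u ∧ f (dist u v) = v ∧ ContinuousOn f (Set.Icc 0 (dist u v)) ∧
      ∀ t ∈ Set.Icc 0 (dist u v), f t ∈ mseg u v := by
  obtain ⟨f, h0, h1, hf⟩ := hX u v
  refine ⟨f, h0, h1, continuousOn_of_geod hf, fun t ht => ?_⟩
  have hd : 0 ≤ dist u v := dist_nonneg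
  have e1 := hf 0 ⟨le_rfl, hd⟩ t ht
  have e2 := hf t ht (dist u v) ⟨hd, le_rfl⟩
  rw [h0, abs_of_nonpos (by linarith [ht.1])] at e1
  rw [h1, abs_of_nonpos (by linarith [ht.2])] at e2
  simp only [mseg, Set.mem_ofPred_eq]
  linarith

theorem joinedIn_mseg {X : Type*} [MetricSpace X] (hX : IsGeodesicSpace X) {u v : X} {W : Set X}
    (h : mseg u v ⊆ W) : JoinedIn W u v := by
  obtain ⟨f, h0, h1, hf, hm⟩ := exists_geod hX u v
  have hu : Set.uIcc 0 (dist u v) = Set.Icc 0 (dist u v) := Set.uIcc_of_le dist_nonneg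
  have := joinedIn_of_continuousOn (W := W) (by rwa [hu]) (fun t ht => h (hm t (by rwa [hu] at ht)))
  rwa [h0, h1] at this

/-! ### The two paths of a layout -/

namespace Layout

variable {X : Type*} [MetricSpace X] {p : ℝ → X} {L r : ℝ} {A Z : Set X} (S : Layout p L r A Z)

/-- The union of the pieces of the runs whose index has the parity of `e`. -/
def side (e : ℕ) : Set X := {w | ∃ f, f % 2 = e % 2 ∧ S.Piece f w}

theorem side_congr {e f : ℕ} (h : e % 2 = f % 2) : S.side e = S.side f := by
  simp [side, h]

theorem mem_side {e : ℕ} {w : X} (h : S.Piece e w) : w ∈ S.side e := ⟨e, rfl, h⟩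

theorem base_mem_side {i : ℕ} (hi : i ≤ S.n) : p (S.base i) ∈ S.side (S.strand i + 1) := by
  induction hi using Nat.decreasingInduction with
  | self => exact S.mem_side (Piece.line S.n _ (Or.inl rfl) Set.left_mem_uIcc)
  | of_succ i hi ih =>
    by_cases h : S.Br i
    · have hb : S.base (i + 1) = S.base i := by simp [base, h]
      rwa [hb, S.strand_br h] at ih
    · exact S.mem_side (Piece.line i _ (Or.inr ⟨hi, h⟩) Set.left_mem_uIcc)

theorem line_joined {i : ℕ} (hi : i = S.n ∨ i < S.n ∧ ¬ S.Br i) :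
    JoinedIn (S.side (S.strand i + 1)) (p (S.base i)) (p (S.s i)) := by
  refine joinedIn_of_continuousOn ((continuousOn_of_geod S.hp).mono ?_)
    (fun t ht => S.mem_side (Piece.line i t hi ht))
  exact fun a ha => S.line_mem hi ha

/-- Both paths, built simultaneously along the chain: one of them has reached the core `c i`, the
other one the point `p (base i)`. -/
theorem two_steps (hX : IsGeodesicSpace X) (h0 : p 0 ∈ A) {i : ℕ} (hi : i ≤ S.n) :
    (∃ a ∈ A, ∀ w ∈ S.c i, JoinedIn (S.side (S.strand i)) a w) ∧
      ∃ a ∈ A, JoinedIn (S.side (S.strand i + 1)) a (p (S.base i)) := by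
  have core_sub : ∀ i ≤ S.n, S.c i ⊆ S.side (S.strand i) :=
    fun i hi w hw => S.mem_side (Piece.core i w hi hw)
  have core_joined : ∀ i ≤ S.n, ∀ v ∈ S.c i, ∀ w ∈ S.c i, JoinedIn (S.side (S.strand i)) v w :=
    fun i hi v hv w hw => ((S.conn i hi).joinedIn v hv w hw).mono (core_sub i hi)
  induction i with
  | zero =>
    refine ⟨?_, p 0, h0, ?_⟩
    · obtain ⟨a, ha, haA⟩ := S.startA
      exact ⟨a, haA, fun w hw => core_joined 0 hi a ha w hw⟩
    · exact JoinedIn.refl (S.base_mem_side hi)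
  | succ i ih =>
    have hi' : i < S.n := hi
    obtain ⟨⟨a, haA, ha⟩, a', haA', ha'⟩ := ih hi'.le
    by_cases h : S.Br i
    · have hb : S.base (i + 1) = S.base i := by simp [base, h]
      have hc := core_joined (i + 1) hi (S.x' i) (S.x'_mem i hi' h)
      rw [hb, S.strand_br h]
      rw [S.strand_br h] at hc
      refine ⟨⟨a, haA, fun w hw => ?_⟩, a', haA', ha'⟩
      exact ((ha _ (S.x_mem i hi' h)).trans (joinedIn_mseg hX
        fun v hv => S.mem_side (Piece.bridge i v hi' h hv))).trans (hc w hw)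
    · have hb : S.base (i + 1) = S.t i := by simp [base, h]
      have hc := core_joined (i + 1) hi (S.y' i) (S.y'_mem i hi' h)
      have e2 : S.side (S.strand i + 1 + 1) = S.side (S.strand i) := S.side_congr (by omega)
      rw [hb, S.strand_not h, e2]
      rw [S.strand_not h] at hc
      refine ⟨⟨a', haA', fun w hw => ?_⟩, a, haA, ?_⟩
      · exact ((ha'.trans (S.line_joined (Or.inr ⟨hi', h⟩))).trans (joinedIn_mseg hX
          fun v hv => S.mem_side (Piece.enter i v hi' h hv)).symm).trans (hc w hw)
      · exact (ha _ (S.y_mem i hi' h)).trans (joinedIn_mseg hX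
          fun v hv => S.mem_side (Piece.leave i v hi' h hv))

theorem two_paths (S : Layout p L r A Z) (hX : IsGeodesicSpace X) (h0 : p 0 ∈ A) (hZ : p L ∈ Z) :
    ∃ a₁ ∈ A, ∃ z₁ ∈ Z, ∃ a₂ ∈ A, ∃ z₂ ∈ Z, ∃ (p₁ : Path a₁ z₁) (p₂ : Path a₂ z₂),
      ∀ s t, r ≤ dist (p₁ s) (p₂ t) := by
  obtain ⟨⟨a, haA, ha⟩, a', haA', ha'⟩ := S.two_steps hX h0 le_rfl
  obtain ⟨z, hz, hzZ⟩ := S.endZ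
  have hl := S.line_joined (Or.inl rfl)
  rw [S.s_last] at hl
  obtain ⟨p₁, hp₁⟩ := ha z hz
  obtain ⟨p₂, hp₂⟩ := ha'.trans hl
  refine ⟨a, haA, z, hzZ, a', haA', p L, hZ, p₁, p₂, fun s t => ?_⟩
  obtain ⟨e, he, hv⟩ := hp₁ s
  obtain ⟨f, hf, hw⟩ := hp₂ t
  exact S.piece_sep hv hw (by omega)

end Layout

/-! ### Cores -/

/-- The points at distance more than `4 * r` from the geodesic `p : [0, L] → X`. -/
def farSet {X : Type*} [MetricSpace X] (p : ℝ → X) (L r : ℝ) : Set X :=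
  {x | ∀ t ∈ Set.Icc 0 L, 4 * r < dist x (p t)}

/-- A core is a path component of `farSet p L r`. -/
def IsCore {X : Type*} [MetricSpace X] (p : ℝ → X) (L r : ℝ) (C : Set X) : Prop :=
  ∃ x ∈ farSet p L r, C = pathComponentIn (farSet p L r) x

/-- An almost shortest geodesic `p : [0, L] → X` from `A` to `Z`, in a space where no ball of
radius `136 * r` separates `A` from `Z`. -/
structure Setting {X : Type*} [MetricSpace X] (p : ℝ → X) (L r : ℝ) (A Z : Set X) : Prop where
  geod : IsGeodesicSpace X
  hr : 0 < r
  hL : 0 ≤ L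
  hp : ∀ a ∈ Set.Icc 0 L, ∀ b ∈ Set.Icc 0 L, dist (p a) (p b) = |a - b|
  start : p 0 ∈ A
  finish : p L ∈ Z
  min : ∀ a ∈ A, ∀ z ∈ Z, L ≤ dist a z + r
  avoid : ∀ x, ∃ a ∈ A, ∃ z ∈ Z, ∃ q : Path a z, ∀ s, 136 * r < dist (q s) x

section Cores

variable {X : Type*} [MetricSpace X] {p : ℝ → X} {L r : ℝ} {A Z C C' : Set X}

theorem IsCore.subset (h : IsCore p L r C) : C ⊆ farSet p L r := by
  obtain ⟨x, hx, rfl⟩ := h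
  exact pathComponentIn_subset

theorem IsCore.isPathConnected (h : IsCore p L r C) : IsPathConnected C := by
  obtain ⟨x, hx, rfl⟩ := h
  exact isPathConnected_pathComponentIn hx

theorem IsCore.of_joinedIn (h : IsCore p L r C) {u v : X} (hu : u ∈ C)
    (huv : JoinedIn (farSet p L r) u v) : v ∈ C := by
  obtain ⟨x, hx, rfl⟩ := h
  exact JoinedIn.trans hu huv

theorem IsCore.eq (h : IsCore p L r C) (h' : IsCore p L r C') {u : X} (hu : u ∈ C) (hu' : u ∈ C') :
    C = C' := by
  refine Set.Subset.antisymm (fun v hv => ?_) (fun v hv => ?_)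
  · exact h'.of_joinedIn hu' ((h.isPathConnected.joinedIn u hu v hv).mono h.subset)
  · exact h.of_joinedIn hu ((h'.isPathConnected.joinedIn u hu' v hv).mono h'.subset)

theorem exists_core {x : X} (hx : x ∈ farSet p L r) : ∃ C, IsCore p L r C ∧ x ∈ C :=
  ⟨_, ⟨x, hx, rfl⟩, mem_pathComponentIn_self hx⟩

theorem uIcc_sub {u v s e : ℝ} (hs : s ∈ Set.Ioo u v) (he : e ∈ Set.Icc u v) {a : ℝ}
    (ha : a ∈ Set.uIcc s e) : a = e ∨ a ∈ Set.Ioo u v := by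
  rcases eq_or_ne a e with h | h
  · exact Or.inl h
  · right
    rw [Set.mem_uIcc] at ha
    rcases ha with ha | ha
    · exact ⟨by linarith [hs.1, ha.1], lt_of_le_of_ne ha.2 h |>.trans_le he.2⟩
    · exact ⟨he.1.trans_lt (lt_of_le_of_ne ha.1 (Ne.symm h)), by linarith [hs.2, ha.2]⟩

theorem IsCore.endpoint_mem (h : IsCore p L r C) {g : ℝ → X} {u v s e : ℝ}
    (hg : ContinuousOn g (Set.Icc u v)) (hU : ∀ a ∈ Set.Ioo u v, g a ∈ farSet p L r)
    (hs : s ∈ Set.Ioo u v) (hC : g s ∈ C) (he : e ∈ Set.Icc u v) (heU : g e ∈ farSet p L r) :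
    g e ∈ C := by
  refine h.of_joinedIn hC (joinedIn_of_continuousOn (hg.mono ?_) fun a ha => ?_)
  · exact Set.uIcc_subset_Icc ⟨hs.1.le, hs.2.le⟩ he
  · rcases uIcc_sub hs he ha with rfl | h'
    · exact heU
    · exact hU a h'

/-- If a curve runs through a core until it comes within `4 * r` of `p a`, then `a` lies in the
shadow of the core. -/
theorem IsCore.endpoint_sh (h : IsCore p L r C) (hr : 0 < r) {g : ℝ → X} {u v s e : ℝ}
    (hg : ContinuousOn g (Set.Icc u v)) (hU : ∀ a ∈ Set.Ioo u v, g a ∈ farSet p L r)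
    (hs : s ∈ Set.Ioo u v) (hC : g s ∈ C) (he : e ∈ Set.Icc u v) {a : ℝ} (ha : a ∈ Set.Icc 0 L)
    (hd : dist (g e) (p a) ≤ 4 * r) : Sh p L r C a := by
  obtain ⟨δ, hδ, h1⟩ := Metric.continuousOn_iff.mp hg e he r hr
  have hcl : e ∈ closure (Set.Ioo u v) := by
    rw [closure_Ioo (hs.1.trans hs.2).ne]
    exact he
  obtain ⟨b, hb, hb'⟩ := Metric.mem_closure_iff.mp hcl δ hδ
  have hb2 := Set.Ioo_subset_Icc_self hb
  refine ⟨ha, g b, h.endpoint_mem hg hU hs hC hb2 (hU b hb), ?_⟩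
  have h2 := h1 b hb2 (by rwa [dist_comm])
  linarith [dist_triangle (g b) (g e) (p a)]

theorem Setting.mem_cthickening (S : Setting p L r A Z) {a b : ℝ} (h : Set.Icc a b ⊆ Set.Icc 0 L)
    {x : X} : x ∈ Metric.cthickening (4 * r) (p '' Set.Icc a b) ↔
      ∃ t ∈ Set.Icc a b, dist x (p t) ≤ 4 * r := by
  have hK : IsCompact (p '' Set.Icc a b) :=
    isCompact_Icc.image_of_continuousOn ((continuousOn_of_geod S.hp).mono h)
  rw [hK.cthickening_eq_biUnion_closedBall (by linarith [S.hr])]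
  simp [Metric.mem_closedBall]

theorem Setting.notMem_farSet (S : Setting p L r A Z) {x : X} :
    x ∉ farSet p L r ↔ x ∈ Metric.cthickening (4 * r) (p '' Set.Icc 0 L) := by
  rw [S.mem_cthickening subset_rfl]
  simp [farSet, and_assoc]

/-- A geodesic of length less than `6 * r` between distinct cores comes near `p`, at a position in
the shadow of the first core. -/
theorem Setting.bridge_sh (S : Setting p L r A Z) (h : IsCore p L r C) (h' : IsCore p L r C')
    (hne : C ≠ C') {x x' : X} (hx : x ∈ C) (hx' : x' ∈ C') (hd : dist x x' < 6 * r)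
    {w : X} (hw : w ∈ mseg x x') : ∃ a, Sh p L r C a ∧ dist w (p a) ≤ 10 * r := by
  obtain ⟨f, f0, f1, hf, hm⟩ := exists_geod S.geod x x'
  set d := dist x x' with hd_def
  have hd0 : 0 ≤ d := dist_nonneg
  set F := Set.Icc 0 d ∩ f ⁻¹' Metric.cthickening (4 * r) (p '' Set.Icc 0 L) with hF
  have hFc : IsClosed F := hf.preimage_isClosed_of_isClosed isClosed_Icc Metric.isClosed_cthickening
  have hFn : F.Nonempty := by
    by_contra hcon
    rw [Set.not_nonempty_iff_eq_empty] at hcon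
    refine hne (h.eq h' (u := x') (h.of_joinedIn hx ?_) hx')
    rw [← f0, ← f1]
    refine joinedIn_of_continuousOn (by rwa [Set.uIcc_of_le hd0]) fun a ha => ?_
    rw [Set.uIcc_of_le hd0] at ha
    by_contra hn
    have : a ∈ F := ⟨ha, S.notMem_farSet.mp hn⟩
    simp [hcon] at this
  have hFb : BddBelow F := ⟨0, fun a ha => ha.1.1⟩
  have he := hFc.csInf_mem hFn hFb
  set e := sInf F with he_def
  obtain ⟨he1, he2⟩ := he
  obtain ⟨a, ha, hda⟩ := (S.mem_cthickening subset_rfl).mp he2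
  have hxU : f 0 ∈ farSet p L r := by
    rw [f0]
    exact h.subset hx
  have hpos : 0 < e := by
    refine lt_of_le_of_ne he1.1 fun h0 => ?_
    rw [← h0] at he2
    exact S.notMem_farSet.mpr he2 hxU
  have hU : ∀ b ∈ Set.Ioo 0 e, f b ∈ farSet p L r := by
    intro b hb
    by_contra hn
    have : b ∈ F := ⟨⟨hb.1.le, hb.2.le.trans he1.2⟩, S.notMem_farSet.mp hn⟩
    exact absurd (csInf_le hFb this) (not_le.mpr hb.2)
  have hs : e / 2 ∈ Set.Ioo 0 e := ⟨by linarith, by linarith⟩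
  have hf' : ContinuousOn f (Set.Icc 0 e) := hf.mono (Set.Icc_subset_Icc le_rfl he1.2)
  have hC : f (e / 2) ∈ C := by
    obtain ⟨C₀, hC₀, hm₀⟩ := exists_core (hU _ hs)
    have h1 := hC₀.endpoint_mem hf' hU hs hm₀ ⟨le_rfl, hpos.le⟩ hxU
    rw [f0] at h1
    rwa [h.eq hC₀ hx h1]
  refine ⟨a, h.endpoint_sh S.hr hf' hU hs hC ⟨hpos.le, le_rfl⟩ ha hda, ?_⟩
  have h1 := hm e he1
  simp only [mseg, Set.mem_ofPred_eq] at h1 hw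
  have h2 := dist_triangle w x (f e)
  have h3 := dist_triangle w x' (f e)
  have h4 := dist_triangle w (f e) (p a)
  rw [dist_comm w x] at h2
  rw [dist_comm x' (f e)] at h3
  linarith

/-- Since the ball of radius `136 * r` about `p t` does not separate `A` from `Z`, there is a core
which passes position `t`: it touches `A` or has a shadow far before `t`, and it touches `Z` or has
a shadow far beyond `t`. -/
theorem Setting.passing (S : Setting p L r A Z) {t : ℝ} (ht : t ∈ Set.Icc 0 L) :
    ∃ C, IsCore p L r C ∧
      ((C ∩ A).Nonempty ∨ ∃ a, Sh p L r C a ∧ a ≤ t - 125 * r) ∧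
      ((C ∩ Z).Nonempty ∨ ∃ b, Sh p L r C b ∧ t + 125 * r ≤ b) := by
  have hr := S.hr
  have hL := S.hL
  obtain ⟨a, haA, z, hzZ, q, hq⟩ := S.avoid (p t)
  set g : ℝ → X := ⇑q.extend with hg_def
  have hg : Continuous g := q.continuous_extend
  have g0 : g 0 = a := q.extend_zero
  have g1 : g 1 = z := q.extend_one
  have hgt : ∀ s, 136 * r < dist (g s) (p t) := by
    intro s
    have : g s ∈ Set.range q := by
      rw [← q.extend_range]
      exact ⟨s, rfl⟩
    obtain ⟨s', hs'⟩ := this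
    rw [← hs']
    exact hq s'
  have subL : Set.Icc 0 (t - 132 * r) ⊆ Set.Icc 0 L := Set.Icc_subset_Icc le_rfl (by linarith [ht.2])
  have subR : Set.Icc (t + 132 * r) L ⊆ Set.Icc 0 L := Set.Icc_subset_Icc (by linarith [ht.1]) le_rfl
  set FL := g ⁻¹' Metric.cthickening (4 * r) (p '' Set.Icc 0 (t - 132 * r)) with hFL
  set FR := g ⁻¹' Metric.cthickening (4 * r) (p '' Set.Icc (t + 132 * r) L) with hFR
  have memL : ∀ s, s ∈ FL ↔ ∃ b ∈ Set.Icc 0 (t - 132 * r), dist (g s) (p b) ≤ 4 * r :=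
    fun s => S.mem_cthickening subL
  have memR : ∀ s, s ∈ FR ↔ ∃ b ∈ Set.Icc (t + 132 * r) L, dist (g s) (p b) ≤ 4 * r :=
    fun s => S.mem_cthickening subR
  have clL : IsClosed FL := Metric.isClosed_cthickening.preimage hg
  have clR : IsClosed FR := Metric.isClosed_cthickening.preimage hg
  have cover : ∀ s, g s ∉ farSet p L r → s ∈ FL ∨ s ∈ FR := by
    intro s hs
    obtain ⟨b, hb, hd⟩ := (S.mem_cthickening subset_rfl).mp (S.notMem_farSet.mp hs)
    have h1 := hgt s
    have h2 := dist_triangle (g s) (p b) (p t)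
    rw [S.hp b hb t ht] at h2
    rcases le_total b t with h | h
    · rw [abs_of_nonpos (by linarith)] at h2
      exact Or.inl ((memL s).mpr ⟨b, ⟨hb.1, by linarith⟩, hd⟩)
    · rw [abs_of_nonneg (by linarith)] at h2
      exact Or.inr ((memR s).mpr ⟨b, ⟨by linarith, hb.2⟩, hd⟩)
  have disj : ∀ s, s ∈ FL → s ∈ FR → False := by
    intro s h1 h2
    obtain ⟨b, hb, hd⟩ := (memL s).mp h1
    obtain ⟨b', hb', hd'⟩ := (memR s).mp h2
    have h3 := dist_triangle_left (p b') (p b) (g s)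
    rw [S.hp b' (subR hb') b (subL hb), abs_of_nonneg (by linarith [hb.2, hb'.1])] at h3
    linarith [hb.2, hb'.1]
  have zeroR : (0 : ℝ) ∉ FR := by
    intro h
    obtain ⟨b, hb, hd⟩ := (memR 0).mp h
    have h1 := dist_triangle (g 0) (p b) (p L)
    rw [S.hp b (subR hb) L ⟨hL, le_rfl⟩, abs_of_nonpos (by linarith [hb.2]), g0] at h1
    rw [g0] at hd
    linarith [S.min a haA (p L) S.finish, hb.1, ht.1]
  have oneL : (1 : ℝ) ∉ FL := by
    intro h
    obtain ⟨b, hb, hd⟩ := (memL 1).mp h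
    have h1 := dist_triangle_right (p 0) (g 1) (p b)
    rw [S.hp 0 ⟨le_rfl, hL⟩ b (subL hb), abs_of_nonpos (by linarith [hb.1]), g1] at h1
    rw [g1] at hd
    linarith [S.min (p 0) S.start z hzZ, hb.2, ht.2]
  -- `v` is the first time at `FR` or at the end, `u` the last time before `v` at `FL` or at `0`
  set HR := Set.Icc 0 1 ∩ (FR ∪ {1}) with hHR
  have hHRc : IsClosed HR := isClosed_Icc.inter (clR.union isClosed_singleton)
  have hHRb : BddBelow HR := ⟨0, fun s hs => hs.1.1⟩
  have hv := hHRc.csInf_mem ⟨1, ⟨zero_le_one, le_rfl⟩, Or.inr rfl⟩ hHRb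
  set v := sInf HR with hv_def
  obtain ⟨hv1, hv2⟩ := hv
  have before : ∀ s, 0 ≤ s → s < v → s ∉ FR := fun s hs hs' h =>
    absurd (csInf_le hHRb ⟨⟨hs, hs'.le.trans hv1.2⟩, Or.inl h⟩) (not_le.mpr hs')
  set HL := Set.Icc 0 v ∩ (FL ∪ {0}) with hHL
  have hHLc : IsClosed HL := isClosed_Icc.inter (clL.union isClosed_singleton)
  have hHLb : BddAbove HL := ⟨v, fun s hs => hs.1.2⟩
  have hu := hHLc.csSup_mem ⟨0, ⟨le_rfl, hv1.1⟩, Or.inr rfl⟩ hHLb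
  set u := sSup HL with hu_def
  obtain ⟨hu1, hu2⟩ := hu
  have after : ∀ s, u < s → s ≤ v → s ∉ FL := fun s hs hs' h =>
    absurd (le_csSup hHLb ⟨⟨hu1.1.trans hs.le, hs'⟩, Or.inl h⟩) (not_le.mpr hs)
  have huv : u < v := by
    refine lt_of_le_of_ne hu1.2 fun h => ?_
    rw [h] at hu2
    rcases hu2 with h1 | h1 <;> rcases hv2 with h2 | h2
    · exact disj v h1 h2
    · rw [Set.mem_singleton_iff.mp h2] at h1
      exact oneL h1
    · rw [Set.mem_singleton_iff.mp h1] at h2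
      exact zeroR h2
    · rw [Set.mem_singleton_iff] at h1 h2
      linarith
  have hU : ∀ s ∈ Set.Ioo u v, g s ∈ farSet p L r := by
    intro s hs
    by_contra hn
    rcases cover s hn with h | h
    · exact after s hs.1 hs.2.le h
    · exact before s (hu1.1.trans hs.1.le) hs.2 h
  have hs : (u + v) / 2 ∈ Set.Ioo u v := ⟨by linarith, by linarith⟩
  obtain ⟨C, hC, hm⟩ := exists_core (hU _ hs)
  refine ⟨C, hC, ?_, ?_⟩
  · have hue : u ∈ Set.Icc u v := ⟨le_rfl, huv.le⟩
    by_cases hn : g u ∈ farSet p L r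
    · rcases hu2 with h | h
      · obtain ⟨b, hb, hd⟩ := (memL u).mp h
        exact absurd hd (not_le.mpr (hn b (subL hb)))
      · left
        refine ⟨g u, hC.endpoint_mem hg.continuousOn hU hs hm hue hn, ?_⟩
        rw [Set.mem_singleton_iff.mp h, g0]
        exact haA
    · right
      obtain ⟨b, hb, hd⟩ := (memL u).mp ((cover u hn).resolve_right (before u hu1.1 huv))
      exact ⟨b, hC.endpoint_sh hr hg.continuousOn hU hs hm hue (subL hb) hd, by linarith [hb.2]⟩
  · have hve : v ∈ Set.Icc u v := ⟨huv.le, le_rfl⟩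
    by_cases hn : g v ∈ farSet p L r
    · rcases hv2 with h | h
      · obtain ⟨b, hb, hd⟩ := (memR v).mp h
        exact absurd hd (not_le.mpr (hn b (subR hb)))
      · left
        refine ⟨g v, hC.endpoint_mem hg.continuousOn hU hs hm hve hn, ?_⟩
        rw [Set.mem_singleton_iff.mp h, g1]
        exact hzZ
    · right
      obtain ⟨b, hb, hd⟩ := (memR v).mp ((cover v hn).resolve_left (after v huv le_rfl))
      exact ⟨b, hC.endpoint_sh hr hg.continuousOn hU hs hm hve (subR hb) hd, by linarith [hb.1]⟩

end Cores

/-! ### Chains of cores -/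

/-- Some point of `C` is at distance less than `l` from some point of `C'`. -/
def Near {X : Type*} [MetricSpace X] (l : ℝ) (C C' : Set X) : Prop :=
  ∃ x ∈ C, ∃ x' ∈ C', dist x x' < l

/-- One may step from `C` to `C'` at cost `k`: they are within `3 * r`, or within `6 * r` (if
`3 ≤ k`), or the shadow of `C` reaches beyond a position of the shadow of `C'` by `150 * r` less
`25 * r` per unit of cost. Expensive steps thus need little overlap. -/
def Edge {X : Type*} [MetricSpace X] (p : ℝ → X) (L r : ℝ) (k : ℕ) (C C' : Set X) : Prop :=
  Near (3 * r) C C' ∨ (3 ≤ k ∧ Near (6 * r) C C') ∨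
    ∃ a b, Sh p L r C a ∧ Sh p L r C' b ∧ (6 - (k : ℝ)) * (25 * r) ≤ a - b

/-- `Reach p L r A N C`: the core `C` can be reached from a core touching `A` by steps of cost
between `2` and `5`, of total cost `N`. -/
inductive Reach {X : Type*} [MetricSpace X] (p : ℝ → X) (L r : ℝ) (A : Set X) : ℕ → Set X → Prop
  | base (C : Set X) : IsCore p L r C → (C ∩ A).Nonempty → Reach p L r A 0 C
  | step (N k : ℕ) (C C' : Set X) : Reach p L r A N C → IsCore p L r C' → 2 ≤ k → k ≤ 5 →
      Edge p L r k C C' → Reach p L r A (N + k) C'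

section Chain

variable {X : Type*} [MetricSpace X] {p : ℝ → X} {L r : ℝ} {A Z : Set X}

theorem Reach.isCore {N : ℕ} {C : Set X} (h : Reach p L r A N C) : IsCore p L r C := by
  cases h <;> assumption

theorem edge_two {C C' : Set X} {a b : ℝ} (ha : Sh p L r C a) (hb : Sh p L r C' b)
    (hab : 100 * r ≤ a - b) : Edge p L r 2 C C' := by
  refine Or.inr (Or.inr ⟨a, b, ha, hb, ?_⟩)
  push_cast
  linarith

/-- A core with shadow at `t` can be left, at cost at most `2`, for a core that touches `Z` or whose
shadow reaches beyond `t + 125 * r`. -/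
theorem Setting.advance (S : Setting p L r A Z) {N : ℕ} {C : Set X} (h : Reach p L r A N C) {t : ℝ}
    (ht : Sh p L r C t) : ∃ C', ∃ M ≤ N + 2, Reach p L r A M C' ∧
      ((C' ∩ Z).Nonempty ∨ ∃ b, Sh p L r C' b ∧ t + 125 * r ≤ b) := by
  obtain ⟨C', hC', h1, h2⟩ := S.passing ht.1
  rcases h1 with h1 | ⟨a, ha, hat⟩
  · exact ⟨C', 0, by omega, Reach.base C' hC' h1, h2⟩
  · exact ⟨C', N + 2, le_rfl, Reach.step N 2 C C' h hC' le_rfl (by omega)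
      (edge_two ht ha (by linarith [S.hr])), h2⟩

theorem Setting.exists_reach (S : Setting p L r A Z) :
    ∃ N, ∃ C, Reach p L r A N C ∧ (C ∩ Z).Nonempty := by
  by_contra! hcon
  have hZ : ∀ N C, Reach p L r A N C → ¬ (C ∩ Z).Nonempty := fun N C h => by
    rw [hcon N C h]
    exact Set.not_nonempty_empty
  set T := {t | ∃ N C, Reach p L r A N C ∧ Sh p L r C t} with hT
  have hTb : BddAbove T := ⟨L, by rintro t ⟨N, C, -, h⟩; exact h.1.2⟩
  have hTn : T.Nonempty := by
    obtain ⟨C, hC, h1, h2⟩ := S.passing (t := 0) ⟨le_rfl, S.hL⟩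
    rcases h1 with h1 | ⟨a, ha, hat⟩
    · have hR := Reach.base C hC h1
      obtain ⟨b, hb, -⟩ := h2.resolve_left (hZ _ _ hR)
      exact ⟨b, 0, C, hR, hb⟩
    · linarith [ha.1.1, S.hr]
  obtain ⟨t, ⟨N, C, hR, ht⟩, hlt⟩ := exists_lt_of_lt_csSup hTn (sub_lt_self (sSup T) S.hr)
  obtain ⟨C', M, -, hR', h2⟩ := S.advance hR ht
  obtain ⟨b, hb, hbt⟩ := h2.resolve_left (hZ _ _ hR')
  have := le_csSup hTb (show b ∈ T from ⟨M, C', hR', hb⟩)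
  linarith [S.hr]

/-- A core of minimal cost is the end of a chain all of whose cores have minimal cost. -/
theorem Reach.exists_chain {N : ℕ} {C : Set X} (h : Reach p L r A N C)
    (hmin : ∀ m, Reach p L r A m C → N ≤ m) :
    ∃ (n : ℕ) (c : ℕ → Set X) (D : ℕ → ℕ), (c 0 ∩ A).Nonempty ∧ c n = C ∧ D n = N ∧
      (∀ i ≤ n, Reach p L r A (D i) (c i) ∧ ∀ m, Reach p L r A m (c i) → D i ≤ m) ∧
      ∀ i < n, ∃ k, 2 ≤ k ∧ k ≤ 5 ∧ D (i + 1) = D i + k ∧ Edge p L r k (c i) (c (i + 1)) := by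
  induction h with
  | base C hC hA =>
    exact ⟨0, fun _ => C, fun _ => 0, hA, rfl, rfl, fun i _ => ⟨Reach.base C hC hA, hmin⟩,
      fun i hi => absurd hi (Nat.not_lt_zero i)⟩
  | step N k C C' hR hC' hk hk' hE ih =>
    obtain ⟨n, c, D, h0, hn, hD, h1, h2⟩ := ih fun m hm => by
      have := hmin _ (Reach.step m k C C' hm hC' hk hk' hE)
      omega
    refine ⟨n + 1, fun i => if i ≤ n then c i else C', fun i => if i ≤ n then D i else N + k,
      by simpa using h0, by simp, by simp, fun i hi => ?_, fun i hi => ?_⟩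
    · by_cases hin : i ≤ n
      · simpa [hin] using h1 i hin
      · simpa [hin] using ⟨Reach.step N k C C' hR hC' hk hk' hE, hmin⟩
    · rcases Nat.lt_succ_iff_lt_or_eq.mp hi with hin | rfl
      · simpa [hin.le, Nat.succ_le_of_lt hin] using h2 i hin
      · exact ⟨k, hk, hk', by simp [hD], by simpa [hn] using hE⟩

theorem mseg_comm (x y : X) : mseg x y = mseg y x := by
  ext w
  simp only [mseg, Set.mem_ofPred_eq]
  rw [dist_comm x w, dist_comm w y, dist_comm x y, add_comm]

theorem Setting.exists_layout (S : Setting p L r A Z) : Nonempty (Layout p L r A Z) := by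
  classical
  have hr := S.hr
  have hex := S.exists_reach
  obtain ⟨C, hR, hCZ⟩ := Nat.find_spec hex
  have hminZ : ∀ m C, Reach p L r A m C → (C ∩ Z).Nonempty → Nat.find hex ≤ m :=
    fun m C h h' => Nat.find_min' hex ⟨C, h, h'⟩
  obtain ⟨n, c, D, h0, rfl, hDn, hc, hstep⟩ := hR.exists_chain fun m hm => hminZ m C hm hCZ
  rw [← hDn] at hminZ
  have hcore : ∀ i ≤ n, IsCore p L r (c i) := fun i hi => (hc i hi).1.isCore
  have lo : ∀ i < n, D i + 2 ≤ D (i + 1) := by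
    intro i hi
    obtain ⟨k, hk, -, hD, -⟩ := hstep i hi
    omega
  have mono : ∀ i j, i ≤ j → j ≤ n → D i + 2 * j ≤ D j + 2 * i := by
    intro i j hij
    induction j, hij using Nat.le_induction with
    | base => omega
    | succ j hij ih =>
      intro hj
      have := ih (by omega)
      have := lo j (by omega)
      omega
  -- the costs `D` are minimal, so no step between two cores of the chain can be a shortcut
  have short : ∀ i j k, i ≤ n → j ≤ n → 2 ≤ k → k ≤ 5 → Edge p L r k (c i) (c j) →
      D j ≤ D i + k := fun i j k hi hj hk hk' hE =>
    (hc j hj).2 _ (Reach.step _ k _ _ (hc i hi).1 (hcore j hj) hk hk' hE)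
  have detour : ∀ i j, i < j → j ≤ n → ∀ a b, Sh p L r (c i) a → Sh p L r (c j) b →
      b ≤ a + 25 * r → D j ≤ D i + 4 := by
    intro i j hij hj a b ha hb hab
    obtain ⟨C', M, hM, hR', h2⟩ := S.advance (hc i (by omega)).1 ha
    rcases h2 with h2 | ⟨b', hb', hle⟩
    · have := hminZ M C' hR' h2
      have := mono j n hj le_rfl
      omega
    · have := (hc j hj).2 _ (Reach.step M 2 C' (c j) hR' (hcore j hj) le_rfl (by omega)
        (edge_two hb' hb (by linarith)))
      omega
  have hne : ∀ i < n, c i ≠ c (i + 1) := by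
    intro i hi h
    have h1 := (hc i hi.le).1
    rw [h] at h1
    have := (hc (i + 1) hi).2 _ h1
    have := lo i hi
    omega
  set Br : ℕ → Prop := fun i => Near (3 * r) (c i) (c (i + 1)) ∨
    (D (i + 1) = D i + 3 ∧ Near (6 * r) (c i) (c (i + 1))) with hBr
  have hbr : ∀ i, ∃ x x' : X, Br i → x ∈ c i ∧ x' ∈ c (i + 1) ∧ dist x x' < 6 * r ∧
      (dist x x' < 3 * r ∨ D (i + 1) = D i + 3) := by
    intro i
    by_cases h : Br i
    · rcases h with ⟨x, hx, x', hx', hd⟩ | ⟨hD, x, hx, x', hx', hd⟩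
      · exact ⟨x, x', fun _ => ⟨hx, hx', by linarith, Or.inl hd⟩⟩
      · exact ⟨x, x', fun _ => ⟨hx, hx', hd, Or.inr hD⟩⟩
    · exact ⟨p 0, p 0, fun h' => absurd h' h⟩
  have hov : ∀ i, ∃ (t s : ℝ) (y y' : X), i < n → ¬ Br i → D (i + 1) ≤ D i + 4 ∧
      (6 - ((D (i + 1) : ℝ) - D i)) * (25 * r) ≤ t - s ∧ t ∈ Set.Icc 0 L ∧ s ∈ Set.Icc 0 L ∧
      y ∈ c i ∧ y' ∈ c (i + 1) ∧ dist y (p t) ≤ 5 * r ∧ dist y' (p s) ≤ 5 * r := by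
    intro i
    by_cases h : i < n ∧ ¬ Br i
    · obtain ⟨hi, hb⟩ := h
      obtain ⟨k, hk, hk', hD, hE⟩ := hstep i hi
      rcases hE with h1 | ⟨h3, h1⟩ | ⟨t, s, ht, hs, hts⟩
      · exact absurd (Or.inl h1) hb
      · -- cores within `6 * r` of each other are joined at cost `3`, which would make a bridge
        have := short i (i + 1) 3 hi.le hi (by omega) (by omega) (Or.inr (Or.inl ⟨le_rfl, h1⟩))
        exact absurd (Or.inr ⟨by omega, h1⟩) hb
      · -- a step of cost `5` with an overlap can be replaced by a detour of cost `4`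
        have hk4 : D (i + 1) ≤ D i + 4 := by
          refine detour i (i + 1) (by omega) hi t s ht hs ?_
          have : (k : ℝ) ≤ 5 := by exact_mod_cast hk'
          nlinarith
        obtain ⟨ht1, y, hy, hyt⟩ := ht
        obtain ⟨hs1, y', hy', hys⟩ := hs
        refine ⟨t, s, y, y', fun _ _ => ⟨hk4, ?_, ht1, hs1, hy, hy', hyt, hys⟩⟩
        rw [hD]
        push_cast
        linarith
    · exact ⟨0, 0, p 0, p 0, fun h1 h2 => absurd ⟨h1, h2⟩ h⟩
  choose x x' hx using hbr
  choose t s y y' hy using hov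
  have hs : ∀ i < n, (if i < n then s i else L) = s i := fun i hi => if_pos hi
  exact ⟨{
    n := n
    c := c
    D := D
    Br := Br
    t := t
    s := fun i => if i < n then s i else L
    x := x
    x' := x'
    y := y
    y' := y'
    hr := hr
    hL := S.hL
    hp := S.hp
    startA := h0
    endZ := hCZ
    conn := fun i hi => (hcore i hi).isPathConnected
    far := fun i hi w hw => (hcore i hi).subset hw
    lo := lo
    near := by
      intro i j hij hj w hw w' hw'
      by_contra! hlt
      have := short i j 3 (by omega) hj (by omega) (by omega)
        (Or.inr (Or.inl ⟨le_rfl, w, hw, w', hw', hlt⟩))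
      have := mono i j (by omega) hj
      omega
    overlap := fun i j k hij hj hk hk' a b ha hb hab =>
      short i j k (by omega) hj hk hk' (Or.inr (Or.inr ⟨a, b, ha, hb, hab⟩))
    detour := detour
    x_mem := fun i _ h => (hx i h).1
    x'_mem := fun i _ h => (hx i h).2.1
    br_len := fun i _ h => (hx i h).2.2.1
    br_len' := fun i _ h => (hx i h).2.2.2
    br_sh := fun i hi h w hw => S.bridge_sh (hcore i hi.le) (hcore (i + 1) hi) (hne i hi)
      (hx i h).1 (hx i h).2.1 (hx i h).2.2.1 hw
    br_sh' := fun i hi h w hw => S.bridge_sh (hcore (i + 1) hi) (hcore i hi.le) (hne i hi).symm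
      (hx i h).2.1 (hx i h).1 (by rw [dist_comm]; exact (hx i h).2.2.1) (by rwa [mseg_comm])
    hi := fun i hi h => (hy i hi h).1
    adj := by
      intro i hi h w hw w' hw'
      by_contra! hlt
      exact h (Or.inl ⟨w, hw, w', hw', hlt⟩)
    gap := fun i hi h => by rw [hs i hi]; exact (hy i hi h).2.1
    t_mem := fun i hi h => (hy i hi h).2.2.1
    s_mem := fun i hi h => by rw [hs i hi]; exact (hy i hi h).2.2.2.1
    y_mem := fun i hi h => (hy i hi h).2.2.2.2.1
    y'_mem := fun i hi h => (hy i hi h).2.2.2.2.2.1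
    y_near := fun i hi h => (hy i hi h).2.2.2.2.2.2.1
    y'_near := fun i hi h => by rw [hs i hi]; exact (hy i hi h).2.2.2.2.2.2.2
    s_last := if_neg (lt_irrefl n) }⟩

end Chain

/-! ### The theorem -/

/-- Coarse Menger theorem for two paths: for subsets `A, Z` of a geodesic metric space `X`
and `K > 0`, either some set of diameter at most `K` separates `A` from `Z`, or there are
two paths joining `A` to `Z` at distance at least `K/272` from each other. -/
theorem coarse_Menger_two_paths
    {X : Type} [MetricSpace X] (hX : IsGeodesicSpace X)
    (A Z : Set X) (K : ℝ) (hK : 0 < K) :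
    (∃ S : Set X, EMetric.diam S ≤ ENNReal.ofReal K ∧
      ¬ ∃ a ∈ A, ∃ z ∈ Z, ∃ p : Path a z, ∀ t, p t ∉ S) ∨
    (∃ a₁ ∈ A, ∃ z₁ ∈ Z, ∃ a₂ ∈ A, ∃ z₂ ∈ Z,
      ∃ (p₁ : Path a₁ z₁) (p₂ : Path a₂ z₂),
        ∀ s t, K / 272 ≤ dist (p₁ s) (p₂ t)) := by
  by_cases hsep : ∃ S : Set X, EMetric.diam S ≤ ENNReal.ofReal K ∧
      ¬ ∃ a ∈ A, ∃ z ∈ Z, ∃ p : Path a z, ∀ t, p t ∉ S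
  · exact Or.inl hsep
  right
  push Not at hsep
  have hr : 0 < K / 272 := by positivity
  have avoid : ∀ x, ∃ a ∈ A, ∃ z ∈ Z, ∃ q : Path a z, ∀ s, 136 * (K / 272) < dist (q s) x := by
    intro x
    obtain ⟨a, ha, z, hz, q, hq⟩ := hsep (Metric.closedBall x (136 * (K / 272))) (by
      refine Metric.ediam_le fun u hu v hv => ?_
      rw [edist_dist]
      refine ENNReal.ofReal_le_ofReal ?_
      rw [Metric.mem_closedBall] at hu hv
      linarith [dist_triangle_right u v x])
    exact ⟨a, ha, z, hz, q, fun s => not_le.mp (hq s)⟩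
  obtain ⟨a₀, ha₀, z₀, hz₀, -⟩ := hsep ∅ (Metric.ediam_empty.trans_le bot_le)
  set T := {d | ∃ a ∈ A, ∃ z ∈ Z, dist a z = d} with hT
  have hTb : BddBelow T := ⟨0, by rintro d ⟨a, -, z, -, rfl⟩; exact dist_nonneg⟩
  obtain ⟨_, ⟨a, ha, z, hz, rfl⟩, hlt⟩ := exists_lt_of_csInf_lt (s := T) ⟨_, a₀, ha₀, z₀, hz₀, rfl⟩
    (lt_add_of_pos_right (sInf T) hr)
  obtain ⟨p, p0, p1, hp⟩ := hX a z
  have S : Setting p (dist a z) (K / 272) A Z :=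
    { geod := hX
      hr := hr
      hL := dist_nonneg
      hp := hp
      start := by rwa [p0]
      finish := by rwa [p1]
      min := fun a' ha' z' hz' => by
        have := csInf_le hTb (show dist a' z' ∈ T from ⟨a', ha', z', hz', rfl⟩)
        linarith
      avoid := avoid }
  obtain ⟨l⟩ := S.exists_layout
  exact l.two_paths hX S.start S.finish
end

section
/- Let X be a graph or a geodesic metric space, let A, Z ⊆ X, and let K > 0. Suppose that no set S ⊂ X with diam(S) ≤ K separates A from Z (i.e., for every such S, X ∖ S contains a path joining A to Z). Then for every x ∈ A and z ∈ Z there are two paths joining A to Z at distance at least K/272 from each other such that both x and z are among the four endpoints of these two paths. -/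
/-- A finite sequence `p 0, …, p N` of points, evenly spaced at distance `r` along a geodesic
that joins `p 0 ∈ A` to `p N ∈ Z`, in a geodesic space where no ball of radius `136 * r` around
one of them separates `A` from `Z`. Only the values of `p` on `[0, N]` matter; the last step of
the sequence may be shorter than `r`, whence the `- 1` in `lower`. -/
structure Grid (X : Type*) [MetricSpace X] where
  p : ℤ → X
  N : ℤ
  r : ℝ
  A : Set X
  Z : Set X
  geo : IsGeodesicSpace X
  r_pos : 0 < r
  N_nonneg : 0 ≤ N
  lower : ∀ i j, 0 ≤ i → i ≤ j → j ≤ N → r * ((j : ℝ) - i - 1) ≤ dist (p i) (p j)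
  upper : ∀ i j, 0 ≤ i → i ≤ j → j ≤ N → dist (p i) (p j) ≤ r * ((j : ℝ) - i)
  nonsep : ∀ i, 0 ≤ i → i ≤ N →
    ∃ a ∈ A, ∃ z ∈ Z, ∃ q : Path a z, ∀ t, 136 * r < dist (q t) (p i)
  memA : p 0 ∈ A
  memZ : p N ∈ Z

/-! ### Geodesics and the grid -/

section Geodesics

variable {X : Type*} [MetricSpace X]

theorem exists_point_on_geodesic (hX : IsGeodesicSpace X) (u v : X) (t : ℝ) (h0 : 0 ≤ t)
    (h1 : t ≤ dist u v) : ∃ c, dist u c = t ∧ dist c v = dist u v - t := by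
  obtain ⟨f, f0, f1, hf⟩ := hX u v
  have m0 : (0 : ℝ) ∈ Set.Icc 0 (dist u v) := ⟨le_rfl, dist_nonneg⟩
  have m1 : dist u v ∈ Set.Icc 0 (dist u v) := ⟨dist_nonneg, le_rfl⟩
  refine ⟨f t, ?_, ?_⟩
  · have := hf 0 m0 t ⟨h0, h1⟩
    rw [f0] at this
    simpa [abs_of_nonneg h0] using this
  · have := hf t ⟨h0, h1⟩ _ m1
    rw [f1] at this
    rw [this, abs_sub_comm, abs_of_nonneg (by linarith)]

/-- The image of a geodesic, as a path-connected set. -/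
theorem exists_geodesic_set (hX : IsGeodesicSpace X) (u v : X) :
    ∃ J : Set X, IsPathConnected J ∧ u ∈ J ∧ v ∈ J ∧
      ∀ y ∈ J, dist u y + dist y v = dist u v := by
  obtain ⟨f, f0, f1, hf⟩ := hX u v
  have m0 : (0 : ℝ) ∈ Set.Icc 0 (dist u v) := ⟨le_rfl, dist_nonneg⟩
  have m1 : dist u v ∈ Set.Icc 0 (dist u v) := ⟨dist_nonneg, le_rfl⟩
  refine ⟨f '' Set.Icc 0 (dist u v), ?_, ⟨0, m0, f0⟩, ⟨_, m1, f1⟩, ?_⟩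
  · apply ((convex_Icc (0 : ℝ) (dist u v)).isPathConnected ⟨0, m0⟩).image'
    have : LipschitzOnWith 1 f (Set.Icc 0 (dist u v)) := by
      apply LipschitzOnWith.of_dist_le_mul
      intro s hs t ht
      rw [hf s hs t ht, Real.dist_eq]
      simp
    exact this.continuousOn
  · rintro _ ⟨t, ht, rfl⟩
    have h1 := hf 0 m0 t ht
    have h2 := hf t ht _ m1
    rw [f0] at h1
    rw [f1] at h2
    rw [h1, h2, abs_sub_comm, abs_of_nonneg (by linarith [ht.1]), abs_sub_comm,
      abs_of_nonneg (by linarith [ht.2])]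
    ring

end Geodesics

namespace Grid

variable {X : Type*} [MetricSpace X] (G : Grid X)

/-- The set `D` keeps distance at least `h` from every point of the grid. -/
def Hi (D : Set X) (h : ℝ) : Prop :=
  ∀ y ∈ D, ∀ i, 0 ≤ i → i ≤ G.N → h ≤ dist y (G.p i)

/-- The set `D` comes within `10 * r` of the grid point `p i`. -/
def Att (D : Set X) (i : ℤ) : Prop :=
  0 ≤ i ∧ i ≤ G.N ∧ ∃ u ∈ D, dist u (G.p i) ≤ 10 * G.r

/-- A detour around the piece of the geodesic from index `a` to index `b`. The value `a = -1000`
stands for `-∞` and means that `D` meets `A`; the value `b = N + 1000` stands for `+∞` and means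
that `D` meets `Z`. Usually `D` stays `10 * r` away from the grid, but a single point of `A` or
of `Z` close to the grid also counts. -/
def Arc (D : Set X) (a b : ℤ) : Prop :=
  IsPathConnected D ∧ ((a = -1000 ∧ ∃ x ∈ D, x ∈ G.A) ∨ G.Att D a) ∧
    ((b = G.N + 1000 ∧ ∃ z ∈ D, z ∈ G.Z) ∨ G.Att D b) ∧
    (G.Hi D (10 * G.r) ∨
      (∃ x, D = {x}) ∧ ((a = -1000 ∧ G.Att D b) ∨ (G.Att D a ∧ b = G.N + 1000)))

variable {G}

theorem Hi.mono {D : Set X} {h h' : ℝ} (H : G.Hi D h) (hh : h' ≤ h) : G.Hi D h' :=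
  fun y hy i h0 h1 => hh.trans (H y hy i h0 h1)

theorem Hi.union {D E : Set X} {h : ℝ} (H : G.Hi D h) (H' : G.Hi E h) : G.Hi (D ∪ E) h := by
  rintro y (hy | hy)
  exacts [H y hy, H' y hy]

theorem Att.mono {D E : Set X} {i : ℤ} (h : G.Att D i) (hDE : D ⊆ E) : G.Att E i :=
  ⟨h.1, h.2.1, h.2.2.imp fun _ hu => ⟨hDE hu.1, hu.2⟩⟩

theorem Arc.le_top {D : Set X} {a b : ℤ} (h : G.Arc D a b) : b ≤ G.N + 1000 := by
  rcases h.2.2.1 with h | h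
  · exact h.1.le
  · linarith [h.2.1]

/-- Grid points that are close to each other have close indices. -/
theorem index_sub_le {i j : ℤ} (hi : 0 ≤ i) (hjN : j ≤ G.N) (c : ℝ)
    (h : dist (G.p i) (G.p j) ≤ c * G.r) : (j : ℝ) - i ≤ c + 1 := by
  rcases le_total i j with hij | hij
  · have := G.lower i j hi hij hjN
    have h2 : G.r * ((j : ℝ) - i - 1) ≤ G.r * c := by linarith
    have := le_of_mul_le_mul_left h2 G.r_pos
    linarith
  · have h0 : 0 ≤ c * G.r := dist_nonneg.trans h
    have : 0 ≤ c := nonneg_of_mul_nonneg_left h0 G.r_pos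
    have : (j : ℝ) ≤ i := by exact_mod_cast hij
    linarith

/-! ### Detours around a given index -/

/-- Around every index there is a detour of half-length `120`. A path from `A` to `Z` that avoids
the ball of radius `136 * r` around `p i` cannot pass from indices below `i` to indices above `i`
while close to the grid; the detour is its stretch between the last time it is close to a
lower index and the first subsequent time it is close to a higher one. -/
theorem exists_deep_arc (i : ℤ) (hi : 0 ≤ i) (hiN : i ≤ G.N) :
    ∃ D a b, G.Arc D a b ∧ a ≤ i - 120 ∧ i + 120 ≤ b := by
  obtain ⟨x, hx, z, hz, q, hq⟩ := G.nonsep i hi hiN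
  have hr := G.r_pos
  let g : ℝ → X := q.extend
  have hg : Continuous g := q.continuous_extend
  have g0 : g 0 = x := q.extend_zero
  have g1 : g 1 = z := q.extend_one
  have hfar : ∀ t ∈ Set.Icc (0 : ℝ) 1, 136 * G.r < dist (g t) (G.p i) := by
    intro t ht
    have : g t = q ⟨t, ht⟩ := q.extend_apply ht
    rw [this]
    exact hq _
  let near : Set ℤ → Set ℝ := fun I => ⋃ j ∈ I, {t | dist (g t) (G.p j) ≤ 10 * G.r}
  have hclosed : ∀ I : Set ℤ, I.Finite → IsClosed (near I) := fun I hI =>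
    hI.isClosed_biUnion fun j _ => isClosed_le (hg.dist continuous_const) continuous_const
  let L : Set ℝ := Set.Icc 0 1 ∩ near (Set.Icc 0 i)
  let R : Set ℝ := Set.Icc 0 1 ∩ near (Set.Icc i G.N)
  have hLc : IsCompact L := isCompact_Icc.inter_right (hclosed _ (Set.finite_Icc _ _))
  have hLidx : ∀ t ∈ L, ∃ j, 0 ≤ j ∧ j ≤ i - 120 ∧ dist (g t) (G.p j) ≤ 10 * G.r := by
    rintro t ⟨ht, hn⟩
    simp only [near, Set.mem_iUnion, Set.mem_ofPred_eq] at hn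
    obtain ⟨j, ⟨hj0, hji⟩, hd⟩ := hn
    refine ⟨j, hj0, ?_, hd⟩
    have h1 := hfar t ht
    have h2 := G.upper j i hj0 hji hiN
    have h3 := dist_triangle (g t) (G.p j) (G.p i)
    have h4 : G.r * 120 < G.r * ((i : ℝ) - j) := by linarith
    have h5 := lt_of_mul_lt_mul_left h4 hr.le
    have h6 : ((j + 120 : ℤ) : ℝ) < (i : ℤ) := by push_cast; linarith
    have := Int.cast_lt.1 h6
    omega
  have hRidx : ∀ t ∈ R, ∃ j, i + 120 ≤ j ∧ j ≤ G.N ∧ dist (g t) (G.p j) ≤ 10 * G.r := by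
    rintro t ⟨ht, hn⟩
    simp only [near, Set.mem_iUnion, Set.mem_ofPred_eq] at hn
    obtain ⟨j, ⟨hj0, hji⟩, hd⟩ := hn
    refine ⟨j, ?_, hji, hd⟩
    have h1 := hfar t ht
    have h2 := G.upper i j hi hj0 hji
    have h3 := dist_triangle (g t) (G.p j) (G.p i)
    rw [dist_comm (G.p j)] at h3
    have h4 : G.r * 120 < G.r * ((j : ℝ) - i) := by linarith
    have h5 := lt_of_mul_lt_mul_left h4 hr.le
    have h6 : ((i + 120 : ℤ) : ℝ) < (j : ℤ) := by push_cast; linarith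
    have := Int.cast_lt.1 h6
    omega
  have hdisj : ∀ t ∈ L, t ∉ R := by
    intro t hL hR
    obtain ⟨j, hj0, hji, hd⟩ := hLidx t hL
    obtain ⟨j', hj', hjN, hd'⟩ := hRidx t hR
    have h1 : dist (G.p j) (G.p j') ≤ 20 * G.r := by
      have := dist_triangle_left (G.p j) (G.p j') (g t)
      linarith
    have h2 := index_sub_le hj0 hjN _ h1
    have h3 : ((j' - j : ℤ) : ℝ) ≤ (21 : ℤ) := by push_cast; linarith
    have := Int.cast_le.1 h3
    omega
  obtain ⟨s, hs, hsL, hsmax⟩ : ∃ s ∈ Set.Icc (0 : ℝ) 1, ((s = 0 ∧ L = ∅) ∨ s ∈ L) ∧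
      ∀ t ∈ L, t ≤ s := by
    rcases L.eq_empty_or_nonempty with h | h
    · exact ⟨0, by simp, Or.inl ⟨rfl, h⟩, by simp [h]⟩
    · have := hLc.sSup_mem h
      exact ⟨sSup L, this.1, Or.inr this, fun t ht => le_csSup hLc.bddAbove ht⟩
  have hRc : IsCompact (Set.Ici s ∩ R) :=
    (isCompact_Icc.inter_right (hclosed _ (Set.finite_Icc _ _))).inter_left isClosed_Ici
  obtain ⟨e, he, hse, heR, hemin⟩ : ∃ e ∈ Set.Icc (0 : ℝ) 1, s ≤ e ∧ (e = 1 ∨ e ∈ R) ∧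
      ∀ t ∈ R, s ≤ t → e ≤ t := by
    rcases (Set.Ici s ∩ R).eq_empty_or_nonempty with h | h
    · refine ⟨1, by simp, hs.2, Or.inl rfl, fun t ht hst => ?_⟩
      have : t ∈ Set.Ici s ∩ R := ⟨hst, ht⟩
      simp [h] at this
    · have := hRc.sInf_mem h
      exact ⟨sInf (Set.Ici s ∩ R), this.2.1, this.1, Or.inr this.2,
        fun t ht hst => csInf_le hRc.bddBelow ⟨hst, ht⟩⟩
  have hconn : IsPathConnected (g '' Set.Icc s e) :=
    ((convex_Icc s e).isPathConnected ⟨s, le_rfl, hse⟩).image hg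
  have hsD : g s ∈ g '' Set.Icc s e := ⟨s, ⟨le_rfl, hse⟩, rfl⟩
  have heD : g e ∈ g '' Set.Icc s e := ⟨e, ⟨hse, le_rfl⟩, rfl⟩
  obtain ⟨a, hai, ha⟩ : ∃ a, a ≤ i - 120 ∧
      ((a = -1000 ∧ s = 0 ∧ L = ∅) ∨ (s ∈ L ∧ G.Att (g '' Set.Icc s e) a)) := by
    rcases hsL with h | h
    · exact ⟨-1000, by omega, Or.inl ⟨rfl, h⟩⟩
    · obtain ⟨j, h0, h1, h2⟩ := hLidx s h
      exact ⟨j, h1, Or.inr ⟨h, h0, by omega, _, hsD, h2⟩⟩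
  obtain ⟨b, hbi, hb⟩ : ∃ b, i + 120 ≤ b ∧
      ((b = G.N + 1000 ∧ e = 1) ∨ (e ∈ R ∧ G.Att (g '' Set.Icc s e) b)) := by
    rcases heR with h | h
    · exact ⟨G.N + 1000, by omega, Or.inl ⟨rfl, h⟩⟩
    · obtain ⟨j, h0, h1, h2⟩ := hRidx e h
      exact ⟨j, h0, Or.inr ⟨h, by omega, h1, _, heD, h2⟩⟩
  refine ⟨g '' Set.Icc s e, a, b, ⟨hconn, ?_, ?_, ?_⟩, hai, hbi⟩
  · rcases ha with ⟨h, h', -⟩ | h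
    · exact Or.inl ⟨h, x, by rw [← g0, ← h']; exact hsD, hx⟩
    · exact Or.inr h.2
  · rcases hb with ⟨h, h'⟩ | h
    · exact Or.inl ⟨h, z, by rw [← g1, ← h']; exact heD, hz⟩
    · exact Or.inr h.2
  · rcases hse.eq_or_lt with h | h
    · right
      refine ⟨⟨g s, by rw [← h]; simp⟩, ?_⟩
      rcases ha with ⟨h1, h2, -⟩ | ⟨h1, h2⟩ <;> rcases hb with ⟨h3, h4⟩ | ⟨h3, h4⟩
      · rw [h2, h4] at h
        norm_num at h
      · exact Or.inl ⟨h1, h4⟩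
      · exact Or.inr ⟨h2, h3⟩
      · rw [← h] at h3
        exact absurd h3 (hdisj _ h1)
    · left
      rintro _ ⟨t, ht, rfl⟩ j hj0 hjN
      have hcl : IsClosed {t | 10 * G.r ≤ dist (g t) (G.p j)} :=
        isClosed_le continuous_const (hg.dist continuous_const)
      have hsub : Set.Ioo s e ⊆ {t | 10 * G.r ≤ dist (g t) (G.p j)} := by
        intro t ht
        by_contra hlt
        simp only [Set.mem_ofPred_eq, not_le] at hlt
        have ht01 : t ∈ Set.Icc (0 : ℝ) 1 := ⟨hs.1.trans ht.1.le, ht.2.le.trans he.2⟩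
        rcases le_total j i with hji | hji
        · have : t ∈ L := ⟨ht01, Set.mem_biUnion (show j ∈ Set.Icc 0 i from ⟨hj0, hji⟩) hlt.le⟩
          exact absurd (hsmax t this) (not_le.2 ht.1)
        · have : t ∈ R :=
            ⟨ht01, Set.mem_biUnion (show j ∈ Set.Icc i G.N from ⟨hji, hjN⟩) hlt.le⟩
          exact absurd (hemin t this ht.1.le) (not_le.2 ht.2)
      have := closure_minimal hsub hcl
      rw [closure_Ioo h.ne] at this
      exact this ht

/-! ### Detours that come close to each other -/

/-- A set that avoids the grid can be extended from any of its points `u` down to distance exactly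
`10 * r` from the grid: go from `u` straight towards its nearest grid point. -/
theorem Hi.descend {D : Set X} (hD : G.Hi D (10 * G.r)) (hc : IsPathConnected D) {u : X}
    (hu : u ∈ D) {k : ℤ} (h0 : 0 ≤ k) (hk : k ≤ G.N) :
    ∃ E s, D ⊆ E ∧ IsPathConnected E ∧ G.Hi E (10 * G.r) ∧ G.Att E s ∧
      dist u (G.p s) ≤ dist u (G.p k) := by
  obtain ⟨s, hs, hmin⟩ := (Finset.Icc 0 G.N).exists_min_image (fun i => dist u (G.p i))
    ⟨k, by simp [h0, hk]⟩
  rw [Finset.mem_Icc] at hs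
  have h10 := hD u hu s hs.1 hs.2
  have hr := G.r_pos
  obtain ⟨c, hc1, hc2⟩ := exists_point_on_geodesic G.geo u (G.p s) (dist u (G.p s) - 10 * G.r)
    (by linarith) (by linarith)
  obtain ⟨J, hJ, huJ, hcJ, hd⟩ := exists_geodesic_set G.geo u c
  refine ⟨D ∪ J, s, Set.subset_union_left, hc.union hJ ⟨u, hu, huJ⟩, hD.union ?_,
    ⟨hs.1, hs.2, c, Or.inr hcJ, by linarith⟩, hmin k (by simp [h0, hk])⟩
  intro y hy i hi0 hiN
  have h1 := hd y hy
  have h2 := hmin i (by simp [hi0, hiN])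
  have h3 := dist_triangle u y (G.p i)
  have h4 : 0 ≤ dist y c := dist_nonneg
  linarith

/-- A detour passing near `p k` can be cut short: after it comes near `p k`, it may descend to the
grid at an index `s` near which it passes as well. -/
theorem Arc.extend_right {D : Set X} {a b : ℤ} (h : G.Arc D a b) (hb : b ≠ G.N + 1000) {u : X}
    (hu : u ∈ D) {k : ℤ} (h0 : 0 ≤ k) (hk : k ≤ G.N) {ρ : ℝ} (hρ : 10 * G.r ≤ ρ)
    (hd : dist u (G.p k) ≤ ρ) :
    ∃ E s, G.Arc E a s ∧ 0 ≤ s ∧ s ≤ G.N ∧ dist u (G.p s) ≤ ρ := by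
  obtain ⟨hc, hl, hr, hH | ⟨⟨x, rfl⟩, ⟨ha, hab⟩ | ⟨-, h⟩⟩⟩ := h
  · obtain ⟨E, s, hDE, hE, hEH, hs, hds⟩ := hH.descend hc hu h0 hk
    refine ⟨E, s, ⟨hE, ?_, Or.inr hs, Or.inl hEH⟩, hs.1, hs.2.1, hds.trans hd⟩
    rcases hl with ⟨h1, y, hy, hyA⟩ | h1
    · exact Or.inl ⟨h1, y, hDE hy, hyA⟩
    · exact Or.inr (h1.mono hDE)
  · refine ⟨{x}, b, ⟨hc, hl, hr, Or.inr ⟨⟨x, rfl⟩, Or.inl ⟨ha, hab⟩⟩⟩, hab.1, hab.2.1, ?_⟩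
    obtain ⟨-, -, y, hy, hyd⟩ := hab
    rw [Set.mem_singleton_iff] at hu hy
    subst hu hy
    exact hyd.trans hρ
  · exact absurd h hb

/-- The mirror image of `Arc.extend_right`. -/
theorem Arc.extend_left {D : Set X} {a b : ℤ} (h : G.Arc D a b) (ha : a ≠ -1000) {u : X}
    (hu : u ∈ D) {k : ℤ} (h0 : 0 ≤ k) (hk : k ≤ G.N) {ρ : ℝ} (hρ : 10 * G.r ≤ ρ)
    (hd : dist u (G.p k) ≤ ρ) :
    ∃ E s, G.Arc E s b ∧ 0 ≤ s ∧ s ≤ G.N ∧ dist u (G.p s) ≤ ρ := by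
  obtain ⟨hc, hl, hr, hH | ⟨⟨x, rfl⟩, ⟨h, -⟩ | ⟨haa, hb⟩⟩⟩ := h
  · obtain ⟨E, s, hDE, hE, hEH, hs, hds⟩ := hH.descend hc hu h0 hk
    refine ⟨E, s, ⟨hE, Or.inr hs, ?_, Or.inl hEH⟩, hs.1, hs.2.1, hds.trans hd⟩
    rcases hr with ⟨h1, y, hy, hyA⟩ | h1
    · exact Or.inl ⟨h1, y, hDE hy, hyA⟩
    · exact Or.inr (h1.mono hDE)
  · exact absurd h ha
  · refine ⟨{x}, a, ⟨hc, hl, hr, Or.inr ⟨⟨x, rfl⟩, Or.inr ⟨haa, hb⟩⟩⟩, haa.1, haa.2.1, ?_⟩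
    obtain ⟨-, -, y, hy, hyd⟩ := haa
    rw [Set.mem_singleton_iff] at hu hy
    subst hu hy
    exact hyd.trans hρ

/-- Two detours at distance less than `16 * r` can either be joined into one, or they approach
the grid at indices that are not far from each other. -/
theorem Arc.conflict {D D' : Set X} {a b a' b' : ℤ} (h : G.Arc D a b) (h' : G.Arc D' a' b')
    (hb : b ≠ G.N + 1000) (ha' : a' ≠ -1000) {u v : X} (hu : u ∈ D) (hv : v ∈ D')
    (huv : dist u v < 16 * G.r) :
    (∃ E, G.Arc E a b') ∨
      ∃ E s E' s', G.Arc E a s ∧ G.Arc E' s' b' ∧ s' ≤ s + 53 := by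
  have hr := G.r_pos
  have key : (∃ E, G.Arc E a b') ∨ ∃ k ρ ρ', 0 ≤ k ∧ k ≤ G.N ∧ dist u (G.p k) ≤ ρ ∧
      dist v (G.p k) ≤ ρ' ∧ 10 * G.r ≤ ρ ∧ 10 * G.r ≤ ρ' ∧ ρ + ρ' ≤ 36 * G.r := by
    rcases h.2.2.2 with hH | ⟨⟨x, rfl⟩, ⟨ha, h0, h1, y, hy, hyd⟩ | ⟨-, h2⟩⟩
    · rcases h'.2.2.2 with hH' | ⟨⟨x, rfl⟩, ⟨h2, -⟩ | ⟨⟨h0, h1, y, hy, hyd⟩, -⟩⟩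
      · obtain ⟨J, hJ, huJ, hvJ, hd⟩ := exists_geodesic_set G.geo u v
        by_cases hJH : G.Hi J (10 * G.r)
        · left
          refine ⟨D ∪ J ∪ D', (h.1.union hJ ⟨u, hu, huJ⟩).union h'.1 ⟨v, Or.inr hvJ, hv⟩, ?_, ?_,
            Or.inl ((hH.union hJH).union hH')⟩
          · rcases h.2.1 with ⟨h1, y, hy, hyA⟩ | h1
            · exact Or.inl ⟨h1, y, Or.inl (Or.inl hy), hyA⟩
            · exact Or.inr (h1.mono (Set.subset_union_left.trans Set.subset_union_left))
          · rcases h'.2.2.1 with ⟨h1, y, hy, hyA⟩ | h1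
            · exact Or.inl ⟨h1, y, Or.inr hy, hyA⟩
            · exact Or.inr (h1.mono Set.subset_union_right)
        · right
          simp only [Hi, not_forall, not_le] at hJH
          obtain ⟨y, hy, k, h0, h1, hlt⟩ := hJH
          have h2 := hd y hy
          have h3 := dist_triangle u y (G.p k)
          have h4 := dist_triangle_left v (G.p k) y
          have h5 : 0 ≤ dist u y := dist_nonneg
          have h6 : 0 ≤ dist y v := dist_nonneg
          refine ⟨k, 10 * G.r + dist u y, 10 * G.r + dist y v, h0, h1, ?_, ?_, ?_, ?_, ?_⟩ <;>
            linarith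
      · exact absurd h2 ha'
      · right
        rw [Set.mem_singleton_iff] at hv hy
        subst hv hy
        have := dist_triangle u y (G.p a')
        exact ⟨a', 26 * G.r, 10 * G.r, h0, h1, by linarith, hyd, by linarith, le_rfl,
          by linarith⟩
    · right
      rw [Set.mem_singleton_iff] at hu hy
      subst hu hy
      have := dist_triangle_left v (G.p b) y
      exact ⟨b, 10 * G.r, 26 * G.r, h0, h1, hyd, by linarith, le_rfl, by linarith, by linarith⟩
    · exact absurd h2 hb
  rcases key with hk | ⟨k, ρ, ρ', h0, h1, hd, hd', hρ, hρ', hs⟩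
  · exact Or.inl hk
  · right
    obtain ⟨E, s, hE, hs0, hsN, hds⟩ := h.extend_right hb hu h0 h1 hρ hd
    obtain ⟨E', s', hE', hs0', hsN', hds'⟩ := h'.extend_left ha' hv h0 h1 hρ' hd'
    refine ⟨E, s, E', s', hE, hE', ?_⟩
    -- `ρ + dist u v + ρ'` is at most `(16 + 36) * r`
    have h2 : dist (G.p s) (G.p s') ≤ 52 * G.r := by
      have h3 := dist_triangle_left (G.p s) (G.p s') u
      have h4 := dist_triangle u v (G.p s')
      linarith
    have h3 := index_sub_le hs0 hsN' _ h2
    have h4 : ((s' - s : ℤ) : ℝ) ≤ (53 : ℤ) := by push_cast; linarith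
    have := Int.cast_le.1 h4
    omega

/-! ### A greedy chain of detours -/

variable (G) in
/-- A sequence of detours `D 0, …, D n` that together bridge the whole grid, consecutive ones
overlapping by at least `60` indices, where `D (j + 1)` reaches as far to the right as possible
among the detours that overlap with `D j` in this way; `first`, `max` and `min` record what follows
from this choice for detours that start or end like one of the sequence. -/
structure Chain where
  n : ℕ
  D : ℕ → Set X
  a : ℕ → ℤ
  b : ℕ → ℤ
  arc : ∀ j ≤ n, G.Arc (D j) (a j) (b j)
  a_zero : a 0 = -1000
  b_last : b n = G.N + 1000
  b_mem : ∀ j < n, 0 ≤ b j ∧ b j ≤ G.N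
  b_zero : 120 ≤ b 0
  step : ∀ j < n, a (j + 1) ≤ b j - 60
  grow : ∀ j < n, b j + 120 ≤ b (j + 1)
  first : ∀ E t, G.Arc E (-1000) t → t ≤ b 0
  max : ∀ j ≤ n, ∀ E t, G.Arc E (a j) t → t ≤ b j
  min : ∀ j, j + 2 ≤ n → ∀ E s, G.Arc E s (b (j + 2)) → b j - 60 < s

/-- The greedy step: among the detours that start at index `b - 60` or before, one reaches
furthest. The value `b = -940` serves to choose the first detour. -/
theorem exists_step (b : ℤ) (hb : b = -940 ∨ (0 ≤ b ∧ b ≤ G.N)) :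
    ∃ D a t, G.Arc D a t ∧ a ≤ b - 60 ∧ b + 120 ≤ t ∧
      ∀ E s t', G.Arc E s t' → s ≤ b - 60 → t' ≤ t := by
  obtain ⟨D, a, t, hD, ha, ht⟩ : ∃ D a t, G.Arc D a t ∧ a ≤ b - 60 ∧ b + 120 ≤ t := by
    rcases hb with rfl | ⟨h0, h1⟩
    · obtain ⟨D, a, t, hD, ha, ht⟩ := exists_deep_arc (G := G) 0 le_rfl G.N_nonneg
      refine ⟨D, a, t, hD, ?_, by omega⟩
      rcases hD.2.1 with h | h
      · omega
      · have := h.1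
        omega
    · obtain ⟨D, a, t, hD, ha, ht⟩ := exists_deep_arc (G := G) b h0 h1
      exact ⟨D, a, t, hD, by omega, ht⟩
  obtain ⟨t', ⟨E, s, hE, hs⟩, hmax⟩ := Int.exists_greatest_of_bdd
    (P := fun t => ∃ D a, G.Arc D a t ∧ a ≤ b - 60)
    ⟨G.N + 1000, fun t ⟨D, a, h, _⟩ => h.le_top⟩ ⟨t, D, a, hD, ha⟩
  refine ⟨E, s, t', hE, hs, ht.trans (hmax t ⟨D, a, hD, ha⟩), ?_⟩
  intro E' s' t'' h1 h2
  exact hmax t'' ⟨E', s', h1, h2⟩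

theorem Arc.top_cases {D : Set X} {a b : ℤ} (h : G.Arc D a b) :
    b = G.N + 1000 ∨ (0 ≤ b ∧ b ≤ G.N) := by
  rcases h.2.2.1 with h | h
  · exact Or.inl h.1
  · exact Or.inr ⟨h.1, h.2.1⟩

variable (G) in
theorem exists_chain : Nonempty G.Chain := by
  classical
  have hN := G.N_nonneg
  have hstep : ∀ b : ℤ, ∃ q : Set X × ℤ × ℤ, (b = -940 ∨ (0 ≤ b ∧ b ≤ G.N)) →
      G.Arc q.1 q.2.1 q.2.2 ∧ q.2.1 ≤ b - 60 ∧ b + 120 ≤ q.2.2 ∧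
        ∀ E s t', G.Arc E s t' → s ≤ b - 60 → t' ≤ q.2.2 := by
    intro b
    by_cases hb : b = -940 ∨ (0 ≤ b ∧ b ≤ G.N)
    · obtain ⟨D, a, t, h⟩ := exists_step b hb
      exact ⟨(D, a, t), fun _ => h⟩
    · exact ⟨(∅, 0, 0), fun h => absurd h hb⟩
  choose f hf using hstep
  let c : ℕ → ℤ := fun j => Nat.rec (-940) (fun _ b => (f b).2.2) j
  have c0 : c 0 = -940 := rfl
  have cs : ∀ j, c (j + 1) = (f (c j)).2.2 := fun _ => rfl
  have hex : ∃ n, c (n + 1) = G.N + 1000 := by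
    by_contra! hne
    have hgood : ∀ j, (c j = -940 ∨ (0 ≤ c j ∧ c j ≤ G.N)) ∧ (j : ℤ) ≤ c j + 940 := by
      intro j
      induction j with
      | zero => exact ⟨Or.inl c0, by rw [c0]; norm_num⟩
      | succ j ih =>
        obtain ⟨h1, -, h3, -⟩ := hf _ ih.1
        rw [← cs] at h1 h3
        exact ⟨Or.inr (h1.top_cases.resolve_left (hne j)), by push_cast; omega⟩
    have h1 := hgood (G.N + 1000).toNat
    omega
  let n := Nat.find hex
  have hn : c (n + 1) = G.N + 1000 := Nat.find_spec hex
  have hlt : ∀ j < n, c (j + 1) ≠ G.N + 1000 := fun j hj => Nat.find_min hex hj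
  have hgood : ∀ j ≤ n, (j = 0 ∧ c j = -940) ∨ (0 ≤ c j ∧ c j ≤ G.N) := by
    intro j
    induction j with
    | zero => exact fun _ => Or.inl ⟨rfl, c0⟩
    | succ j ih =>
      intro hj
      obtain ⟨h1, -⟩ := hf (c j) (by have := ih (by omega); omega)
      rw [← cs] at h1
      exact Or.inr (h1.top_cases.resolve_left (hlt j (by omega)))
  have key : ∀ j ≤ n, G.Arc (f (c j)).1 (f (c j)).2.1 (c (j + 1)) ∧ (f (c j)).2.1 ≤ c j - 60 ∧
      c j + 120 ≤ c (j + 1) ∧ ∀ E s t', G.Arc E s t' → s ≤ c j - 60 → t' ≤ c (j + 1) := by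
    intro j hj
    have := hgood j hj
    exact hf (c j) (by omega)
  refine ⟨⟨n, fun j => (f (c j)).1, fun j => (f (c j)).2.1, fun j => c (j + 1),
    fun j hj => (key j hj).1, ?_, hn, ?_, ?_, ?_, ?_, ?_, ?_, ?_⟩⟩
  · have h := key 0 (Nat.zero_le _)
    rcases h.1.2.1 with h1 | h1
    · exact h1.1
    · have := h1.1
      have := h.2.1
      omega
  · intro j hj
    have := hgood (j + 1) hj
    omega
  · obtain ⟨D, a, t, hD, ha, ht⟩ := exists_deep_arc (G := G) 0 le_rfl hN
    have h := (key 0 (Nat.zero_le _)).2.2.2 D a t hD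
    rcases hD.2.1 with h1 | h1
    · have := h1.1
      have := h (by omega)
      omega
    · have := h1.1
      omega
  · exact fun j hj => (key (j + 1) hj).2.1
  · exact fun j hj => (key (j + 1) hj).2.2.1
  · exact fun E t hE => (key 0 (Nat.zero_le _)).2.2.2 E _ t hE (by omega)
  · exact fun j hj E t hE => (key j hj).2.2.2 E _ t hE (key j hj).2.1
  · intro j hj E s hE
    by_contra! hle
    have h1 := (key (j + 1) (by omega)).2.2.2 E s _ hE hle
    have h2 := (key (j + 2) hj).2.2.1
    have h3 : c (j + 2 + 1) ≤ c (j + 1 + 1) := h1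
    have h4 : c (j + 1 + 1) = c (j + 2) := rfl
    omega

namespace Chain

variable (C : G.Chain)

theorem b_lt {i j : ℕ} (hij : i < j) (hj : j ≤ C.n) : C.b i + 120 ≤ C.b j := by
  induction j with
  | zero => omega
  | succ j ih =>
    have h1 := C.grow j (by omega)
    rcases Nat.lt_succ_iff_lt_or_eq.1 hij with h | rfl
    · have := ih h (by omega)
      omega
    · exact h1

theorem a_ne {j : ℕ} (h0 : 1 ≤ j) (hj : j ≤ C.n) : C.a j ≠ -1000 := by
  intro h
  have h1 := C.arc j hj
  rw [h] at h1
  have h2 := C.first _ _ h1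
  have h3 := C.b_lt (i := 0) h0 hj
  omega

theorem a_att {j : ℕ} (h0 : 1 ≤ j) (hj : j ≤ C.n) : G.Att (C.D j) (C.a j) :=
  (C.arc j hj).2.1.resolve_left fun h => C.a_ne h0 hj h.1

theorem b_att {j : ℕ} (hj : j < C.n) : G.Att (C.D j) (C.b j) :=
  (C.arc j hj.le).2.2.1.resolve_left fun h => by
    have := C.b_mem j hj
    omega

/-- By the choice of `D (j - 1)`, no detour that reaches as far as `D j` overlaps with `D (j - 2)`
by `60` indices. -/
theorem far {i j : ℕ} (hij : i + 3 ≤ j) (hj : j ≤ C.n) : C.b i + 60 ≤ C.a j := by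
  obtain ⟨j, rfl⟩ : ∃ q, j = q + 2 := ⟨j - 2, by omega⟩
  have h1 := C.min j hj _ _ (C.arc (j + 2) hj)
  have h2 := C.b_lt (i := i) (j := j) (by omega) (by omega)
  omega

/-- Detours that are at least three steps apart are far from each other: otherwise a
shortcut would contradict the greedy choice. -/
theorem dist_far {i j : ℕ} (hij : i + 3 ≤ j) (hj : j ≤ C.n) {u v : X} (hu : u ∈ C.D i)
    (hv : v ∈ C.D j) : 16 * G.r ≤ dist u v := by
  by_contra! hlt
  have hbi := C.b_mem i (by omega)
  rcases (C.arc i (by omega)).conflict (C.arc j hj) (by omega) (C.a_ne (by omega) hj) hu hv hlt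
    with ⟨E, hE⟩ | ⟨E, s, E', s', hE, hE', hs⟩
  · have h1 := C.max i (by omega) _ _ hE
    have h2 := C.b_lt (i := i) (j := j) (by omega) hj
    omega
  · have h1 := C.max i (by omega) _ _ hE
    obtain ⟨j, rfl⟩ : ∃ q, j = q + 2 := ⟨j - 2, by omega⟩
    have h2 := C.min j hj _ _ hE'
    have h3 := C.b_lt (i := i) (j := j) (by omega) (by omega)
    omega

end Chain

/-! ### Thinning the chain and joining close neighbours -/

/-- Some point of `D` and some point of `E` are at distance less than `ρ`, and one of these two
points has distance at least `h` from the grid. -/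
def Conf (G : Grid X) (D E : Set X) (ρ h : ℝ) : Prop :=
  ∃ u ∈ D, ∃ v ∈ E, dist u v < ρ ∧ (G.Hi {u} h ∨ G.Hi {v} h)

theorem Conf.le_dist {D E : Set X} {ρ h : ℝ} (H : ¬ G.Conf D E ρ h) {u v : X} (hu : u ∈ D)
    (hv : v ∈ E) (huv : G.Hi {u} h ∨ G.Hi {v} h) : ρ ≤ dist u v := by
  by_contra! hlt
  exact H ⟨u, hu, v, hv, hlt, huv⟩

theorem Hi.point {D : Set X} {h : ℝ} (H : G.Hi D h) {u : X} (hu : u ∈ D) : G.Hi {u} h := by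
  rintro y rfl
  exact H y hu

/-- A short geodesic between two sets in conflict inherits its height from one of its ends. -/
theorem Conf.exists_jump {D E : Set X} {ρ h : ℝ} (H : G.Conf D E ρ h) :
    ∃ J, ∃ u ∈ D, ∃ v ∈ E, IsPathConnected J ∧ u ∈ J ∧ v ∈ J ∧ G.Hi J (h - ρ) ∧
      ∀ y ∈ J, dist u y < ρ ∧ dist y v < ρ := by
  obtain ⟨u, hu, v, hv, hd, hh⟩ := H
  obtain ⟨J, hJ, huJ, hvJ, hJd⟩ := exists_geodesic_set G.geo u v
  have hlt : ∀ y ∈ J, dist u y < ρ ∧ dist y v < ρ := fun y hy => by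
    have h1 := hJd y hy
    have h2 : 0 ≤ dist u y := dist_nonneg
    have h3 : 0 ≤ dist y v := dist_nonneg
    constructor <;> linarith
  refine ⟨J, u, hu, v, hv, hJ, huJ, hvJ, fun y hy i h0 h1 => ?_, hlt⟩
  have h2 := hlt y hy
  rcases hh with hh | hh
  · have h3 := hh u rfl i h0 h1
    have h4 := dist_triangle u y (G.p i)
    linarith
  · have h3 := hh v rfl i h0 h1
    have h4 := dist_triangle_left v (G.p i) y
    linarith

/-- A subsequence of `0, …, n` that advances by two exactly when `S` asks for it and there is
room. -/
theorem exists_greedy (S : ℕ → Prop) (n : ℕ) : ∃ (e : ℕ → ℕ) (k : ℕ), e 0 = 0 ∧ e k = n ∧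
    ∀ j < k, (e (j + 1) = e j + 1 ∧ (e j + 2 ≤ n → ¬ S (e j))) ∨
      (e (j + 1) = e j + 2 ∧ e j + 2 ≤ n ∧ S (e j)) := by
  classical
  let f : ℕ → ℕ := fun x => if S x ∧ x + 2 ≤ n then x + 2 else x + 1
  let e : ℕ → ℕ := fun j => f^[j] 0
  have es : ∀ j, e (j + 1) = f (e j) := fun j => Function.iterate_succ_apply' f j 0
  have hf : ∀ x, (f x = x + 1 ∧ (x + 2 ≤ n → ¬ S x)) ∨ (f x = x + 2 ∧ x + 2 ≤ n ∧ S x) := by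
    intro x
    by_cases h : S x ∧ x + 2 ≤ n
    · exact Or.inr ⟨if_pos h, h.2, h.1⟩
    · exact Or.inl ⟨if_neg h, fun h1 h2 => h ⟨h2, h1⟩⟩
  have hle : ∀ j, j ≤ e j := by
    intro j
    induction j with
    | zero => simp
    | succ j ih =>
      rw [es]
      rcases hf (e j) with h | h <;> omega
  have hex : ∃ k, n ≤ e k := ⟨n, hle n⟩
  refine ⟨e, Nat.find hex, rfl, ?_, fun j _ => by rw [es]; exact hf _⟩
  have h1 := Nat.find_spec hex
  rcases hk : Nat.find hex with _ | k
  · rw [hk] at h1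
    have : e 0 = 0 := rfl
    omega
  · have h2 := Nat.find_min hex (m := k) (by omega)
    rw [hk] at h1
    rw [es] at h1 ⊢
    rcases hf (e k) with h | h <;> omega

variable (G) in
/-- A sequence of sets `D 0, …, D k` bridging the grid, where `D j` comes close to the grid at the
indices `α j` and `β (j + 1)` (by convention `β 0 = 0` and `α (k + 1) = N`, although `D 0` meets
`A` and `D k` meets `Z`). Some consecutive sets `D j` and `D (j + 1)` are merged, which is written
`m j`: these are joined by a set `J j`, called a jump. Apart from that, everything in sight keeps
its distance. -/
structure Weave where
  k : ℕ
  D : ℕ → Set X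
  J : ℕ → Set X
  m : ℕ → Prop
  α : ℕ → ℤ
  β : ℕ → ℤ
  conn : ∀ j ≤ k, IsPathConnected (D j)
  shape : ∀ j ≤ k, G.Hi (D j) (10 * G.r) ∨ ((∃ x, D j = {x}) ∧ 0 < k)
  down : ∀ j < k, ∃ u ∈ D j, dist u (G.p (β (j + 1))) ≤ 10 * G.r
  up : ∀ j < k, ∃ u ∈ D (j + 1), dist u (G.p (α (j + 1))) ≤ 10 * G.r
  startA : ∃ x ∈ D 0, x ∈ G.A
  endZ : ∃ z ∈ D k, z ∈ G.Z
  β_zero : β 0 = 0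
  α_last : α (k + 1) = G.N
  β_mem : ∀ j ≤ k, 0 ≤ β j ∧ β j ≤ G.N
  α_mem : ∀ j ≤ k, 0 ≤ α (j + 1) ∧ α (j + 1) ≤ G.N
  grow : ∀ j < k, β j + 120 ≤ β (j + 1)
  overlap : ∀ j < k, ¬ m j → α (j + 1) + 30 ≤ β (j + 1)
  far : ∀ i j, i + 2 ≤ j → j ≤ k + 1 → β i + 60 ≤ α j
  asep : ∀ j < k, ¬ m j → α (j + 1) + 30 ≤ α (j + 2)
  J_conn : ∀ j < k, m j → IsPathConnected (J j)
  J_left : ∀ j < k, m j → ∃ u ∈ D j, u ∈ J j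
  J_right : ∀ j < k, m j → ∃ v ∈ D (j + 1), v ∈ J j
  J_sep : ∀ j < k, m j → ∃ h q, 12 * G.r ≤ h + q ∧ 2 * G.r ≤ h ∧ G.r ≤ q ∧ G.Hi (J j) h ∧
    ∀ i ≤ k, i ≠ j → i ≠ j + 1 → ∀ w ∈ D i, ∀ y ∈ J j, q ≤ dist w y
  JJ_sep : ∀ i j, i + 2 ≤ j → j < k → m i → m j → ∀ w ∈ J i, ∀ y ∈ J j, G.r ≤ dist w y
  adj : ∀ j < k, ¬ m j → (G.Hi (D j) (10 * G.r) ∨ G.Hi (D (j + 1)) (10 * G.r)) →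
    ∀ w ∈ D j, ∀ y ∈ D (j + 1), 2 * G.r ≤ dist w y
  nonadj : ∀ i j, i + 2 ≤ j → j ≤ k → (G.Hi (D i) (10 * G.r) ∨ G.Hi (D j) (10 * G.r)) →
    ∀ w ∈ D i, ∀ y ∈ D j, 2 * G.r ≤ dist w y

variable (G) in
/-- The weave is the subsequence of the chain that skips `D (q + 1)` when `D q` and `D (q + 2)`
either overlap by `30` indices or come within `6 * r` of each other. Neighbours are merged if they
are in conflict. A jump over a skipped detour has height at least `2 * r` and distance at least
`10 * r` from the other sets; any other jump has height at least `8 * r` and distance at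
least `4 * r`. -/
theorem exists_weave : Nonempty G.Weave := by
  classical
  obtain ⟨C⟩ := G.exists_chain
  have hr := G.r_pos
  have hN := G.N_nonneg
  let C1 : ℕ → Prop := fun q => G.Conf (C.D q) (C.D (q + 1)) (2 * G.r) (10 * G.r)
  let C2 : ℕ → Prop := fun q => G.Conf (C.D q) (C.D (q + 2)) (6 * G.r) (8 * G.r)
  obtain ⟨e, k, e0, ek, he⟩ := exists_greedy (fun q => C.a (q + 2) ≤ C.b q - 30 ∨ C2 q) C.n
  have hstep : ∀ j < k, e j + 1 ≤ e (j + 1) := fun j hj => by rcases he j hj with h | h <;> omega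
  have hlt : ∀ i j, i ≤ j → j ≤ k → e i + (j - i) ≤ e j := by
    intro i j hij
    induction j, hij using Nat.le_induction with
    | base => intro; omega
    | succ j hij ih =>
      intro hj
      have := ih (by omega)
      have := hstep j (by omega)
      omega
  have hn : ∀ j ≤ k, e j ≤ C.n := fun j hj => by have := hlt j k hj le_rfl; omega
  have hn' : ∀ j < k, e j < C.n := fun j hj => by
    have := hstep j hj
    have := hn (j + 1) hj
    omega
  have h1 : ∀ j ≤ k, 1 ≤ j → 1 ≤ e j := fun j hj h => by have := hlt 0 j (by omega) hj; omega
  -- a gap of exactly two in the original chain was left only because there was no reason to skip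
  have htwo : ∀ i j, i + 2 ≤ j → j ≤ k → e i + 3 ≤ e j ∨
      (j = i + 2 ∧ e j = e i + 2 ∧ e (i + 1) = e i + 1 ∧ C.b (e i) - 30 < C.a (e i + 2) ∧
        ¬ C2 (e i)) := by
    intro i j hij hj
    have h2 := hlt i j (by omega) hj
    by_cases hji : j = i + 2
    · subst hji
      by_cases h : e i + 3 ≤ e (i + 2)
      · exact Or.inl h
      · right
        have h3 := hstep i (by omega)
        have h4 := hstep (i + 1) (by omega)
        have h5 := hn (i + 2) hj
        rcases he i (by omega) with h6 | h6
        · have h7 := h6.2 (by omega)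
          push Not at h7
          exact ⟨rfl, by omega, h6.1, h7.1, h7.2⟩
        · have : e (i + 1 + 1) = e (i + 2) := rfl
          omega
    · left
      omega
  let m : ℕ → Prop := fun j => (e (j + 1) = e j + 1 ∧ C1 (e j)) ∨ (e (j + 1) = e j + 2 ∧ C2 (e j))
  have hbnn : ∀ j < C.n, 120 ≤ C.b j := fun j hj => by
    have h0 := C.b_zero
    rcases Nat.eq_zero_or_pos j with rfl | h
    · exact h0
    · have := C.b_lt h hj.le
      omega
  have hN120 : 1 ≤ C.n → 120 ≤ G.N := fun h => (hbnn 0 h).trans (C.b_mem 0 h).2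
  have hover : ∀ j < k, ¬ m j → C.a (e (j + 1)) + 30 ≤ C.b (e j) := by
    intro j hj hm
    rcases he j hj with h | ⟨h, -, h2⟩
    · have := C.step (e j) (hn' j hj)
      rw [h.1]
      omega
    · have h3 : ¬ C2 (e j) := fun h3 => hm (Or.inr ⟨h, h3⟩)
      have h4 := h2.resolve_right h3
      rw [h]
      omega
  have hjump : ∀ j, ∃ J : Set X, j < k → m j → IsPathConnected J ∧ (∃ u ∈ C.D (e j), u ∈ J) ∧
      (∃ v ∈ C.D (e (j + 1)), v ∈ J) ∧
      (∃ h q, 12 * G.r ≤ h + q ∧ 2 * G.r ≤ h ∧ G.r ≤ q ∧ G.Hi J h ∧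
        ∀ i ≤ k, i ≠ j → i ≠ j + 1 → ∀ w ∈ C.D (e i), ∀ y ∈ J, q ≤ dist w y) ∧
      ∀ y ∈ J, (∃ u ∈ C.D (e j), dist u y ≤ 6 * G.r) ∧
        ∃ v ∈ C.D (e (j + 1)), dist y v ≤ 6 * G.r := by
    intro j
    by_cases hj : j < k ∧ m j
    · obtain ⟨hj, ⟨hs, hc⟩ | ⟨hs, hc⟩⟩ := hj
      · obtain ⟨J, u, hu, v, hv, hJ, huJ, hvJ, hH, hd⟩ := hc.exists_jump
        refine ⟨J, fun _ _ => ⟨hJ, ⟨u, hu, huJ⟩, ⟨v, by rw [hs]; exact hv, hvJ⟩,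
          ⟨8 * G.r, 4 * G.r, by linarith, by linarith, by linarith, hH.mono (by linarith), ?_⟩, ?_⟩⟩
        · intro i hi h2 h3 w hw y hy
          have hdy := hd y hy
          have hH8 : G.Hi J (8 * G.r) := hH.mono (by linarith)
          rcases Nat.lt_or_ge i j with hij | hij
          · have h4 := dist_triangle w y v
            rcases htwo i (j + 1) (by omega) (by omega) with h5 | ⟨h5, h6, h7, -, h8⟩
            · have := C.dist_far h5 (hn _ hj) hw (by rw [hs]; exact hv)
              linarith
            · have := Conf.le_dist h8 (v := v) hw (by rw [← h6, hs]; exact hv)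
                (Or.inr (hH8.point hvJ))
              linarith
          · have h4 := dist_triangle u y w
            rw [dist_comm y w] at h4
            rcases htwo j i (by omega) hi with h5 | ⟨h5, h6, h7, -, h8⟩
            · have := C.dist_far h5 (hn _ hi) hu hw
              linarith
            · have := Conf.le_dist h8 (v := w) hu (by rw [← h6]; exact hw)
                (Or.inl (hH8.point huJ))
              linarith
        · intro y hy
          have := hd y hy
          exact ⟨⟨u, hu, by linarith⟩, v, by rw [hs]; exact hv, by linarith⟩
      · obtain ⟨J, u, hu, v, hv, hJ, huJ, hvJ, hH, hd⟩ := hc.exists_jump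
        refine ⟨J, fun _ _ => ⟨hJ, ⟨u, hu, huJ⟩, ⟨v, by rw [hs]; exact hv, hvJ⟩,
          ⟨2 * G.r, 10 * G.r, by linarith, by linarith, by linarith, hH.mono (by linarith), ?_⟩,
          ?_⟩⟩
        · intro i hi h2 h3 w hw y hy
          have hdy := hd y hy
          rcases Nat.lt_or_ge i j with hij | hij
          · have h4 := dist_triangle w y v
            have h5 := hlt i j hij.le (by omega)
            have h6 := hn _ (show j + 1 ≤ k from hj)
            have := C.dist_far (i := e i) (j := e j + 2) (by omega) (by omega) hw hv
            linarith
          · have h4 := dist_triangle u y w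
            rw [dist_comm y w] at h4
            have h5 := hlt (j + 1) i (by omega) hi
            have := C.dist_far (i := e j) (j := e i) (by omega) (hn _ hi) hu hw
            linarith
        · intro y hy
          have := hd y hy
          exact ⟨⟨u, hu, by linarith⟩, v, by rw [hs]; exact hv, by linarith⟩
    · exact ⟨∅, fun h h' => absurd ⟨h, h'⟩ hj⟩
  choose J hJ using hjump
  have harc : ∀ j ≤ k, G.Arc (C.D (e j)) (C.a (e j)) (C.b (e j)) := fun j hj => C.arc _ (hn j hj)
  let β : ℕ → ℤ := fun j => Nat.casesOn j 0 fun i => C.b (e i)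
  let α : ℕ → ℤ := fun j => if j ≤ k then C.a (e j) else G.N
  have β0 : β 0 = 0 := rfl
  have βs : ∀ j, β (j + 1) = C.b (e j) := fun _ => rfl
  have αs : ∀ j ≤ k, α j = C.a (e j) := fun j hj => if_pos hj
  have αl : α (k + 1) = G.N := if_neg (by omega)
  have hβ : ∀ j ≤ k, 0 ≤ β j ∧ β j ≤ G.N := by
    rintro (_ | j) hj
    · exact ⟨le_rfl, hN⟩
    · exact C.b_mem _ (hn' j hj)
  refine ⟨⟨k, fun j => C.D (e j), J, m, α, β, fun j hj => (harc j hj).1, ?_,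
    ?_, ?_, ?_, ?_, β0, αl, hβ, ?_, ?_, ?_, ?_, ?_, fun j hj hm => (hJ j hj hm).1,
    fun j hj hm => (hJ j hj hm).2.1, fun j hj hm => (hJ j hj hm).2.2.1,
    fun j hj hm => (hJ j hj hm).2.2.2.1, ?_, ?_, ?_⟩⟩
  · intro j hj
    rcases (harc j hj).2.2.2 with h | ⟨h, h2⟩
    · exact Or.inl h
    · refine Or.inr ⟨h, Nat.pos_of_ne_zero fun hk => ?_⟩
      have hj0 : j = 0 := by omega
      subst hj0
      have ha : C.a (e 0) = -1000 := by rw [e0]; exact C.a_zero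
      have hb : C.b (e 0) = G.N + 1000 := by rw [← C.b_last, ← ek, hk]
      rcases h2 with ⟨-, h3⟩ | ⟨h3, -⟩
      · have := h3.2.1
        omega
      · have := h3.1
        omega
  · exact fun j hj => (C.b_att (hn' j hj)).2.2
  · intro j hj
    rw [αs _ hj]
    exact (C.a_att (h1 _ hj (by omega)) (hn _ hj)).2.2
  · have h := (C.arc 0 (Nat.zero_le _)).2.1
    rw [e0]
    rcases h with h | h
    · exact h.2
    · have := h.1
      have := C.a_zero
      omega
  · have h := (C.arc _ le_rfl).2.2.1
    rw [ek]
    rcases h with h | h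
    · exact h.2
    · have := h.2.1
      have := C.b_last
      omega
  · intro j hj
    rcases hj.eq_or_lt with rfl | hj
    · rw [αl]
      exact ⟨hN, le_rfl⟩
    · rw [αs _ hj]
      have := C.a_att (h1 _ hj (by omega)) (hn _ hj)
      exact ⟨this.1, this.2.1⟩
  · rintro (_ | j) hj
    · rw [β0, βs]
      have := hbnn (e 0) (hn' 0 hj)
      omega
    · rw [βs, βs]
      exact C.b_lt (hstep j (by omega)) (hn _ hj.le)
  · intro j hj hm
    rw [αs _ hj, βs]
    exact hover j hj hm
  · intro i j hij hj
    rcases hj.eq_or_lt with rfl | hj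
    · rw [αl]
      rcases i with _ | i
      · have := hN120 (by have := hlt 0 k (by omega) le_rfl; omega)
        rw [β0]
        omega
      · rw [βs]
        have h2 := hlt i k (by omega) le_rfl
        have h3 := C.b_lt (i := e i) (j := e i + 1) (by omega) (by omega)
        have h4 := C.b_mem (e i + 1) (by omega)
        omega
    · rw [αs _ (by omega)]
      rcases i with _ | i
      · rw [β0]
        have h2 := hlt 0 j (by omega) (by omega)
        have h3 := hn j (by omega)
        obtain ⟨q, hq⟩ : ∃ q, e j = q + 2 := ⟨e j - 2, by omega⟩
        rw [hq] at h3 ⊢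
        have h4 := C.min q h3 _ _ (C.arc _ h3)
        have h5 := hbnn q (by omega)
        omega
      · rw [βs]
        have h2 := hlt i j (by omega) (by omega)
        exact C.far (by omega) (hn _ (by omega))
  · intro j hj hm
    have h2 := hover j hj hm
    rw [αs (j + 1) hj]
    rcases Nat.lt_or_ge (j + 1) k with h | h
    · rw [αs (j + 2) h]
      rcases htwo j (j + 2) le_rfl h with h3 | ⟨-, h3, h4, h5, -⟩
      · have := C.far h3 (hn _ h)
        omega
      · have := C.step (e j) (hn' j hj)
        rw [h3, h4]
        omega
    · have : j + 2 = k + 1 := by omega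
      rw [this, αl]
      have := C.b_mem _ (hn' j hj)
      omega
  · intro i j hij hj hmi hmj w hw y hy
    obtain ⟨⟨u, hu, hud⟩, -⟩ := (hJ i (by omega) hmi).2.2.2.2 w hw
    obtain ⟨-, v, hv, hvd⟩ := (hJ j hj hmj).2.2.2.2 y hy
    have h2 := hlt i (j + 1) (by omega) hj
    have h3 := C.dist_far (by omega) (hn (j + 1) hj) hu hv
    have h4 := dist_triangle4 u w y v
    linarith
  · intro j hj hm hH w hw y hy
    have hH' : ∀ {h}, h ≤ 10 * G.r → G.Hi {w} h ∨ G.Hi {y} h := fun {h} hh =>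
      hH.imp (fun H => (H.point hw).mono hh) fun H => (H.point hy).mono hh
    rcases he j hj with h | h
    · exact Conf.le_dist (D := C.D (e j)) (E := C.D (e j + 1)) (fun h3 => hm (Or.inl ⟨h.1, h3⟩))
        hw (by rw [← h.1]; exact hy) (hH' le_rfl)
    · have := Conf.le_dist (D := C.D (e j)) (E := C.D (e j + 2)) (ρ := 6 * G.r) (h := 8 * G.r)
        (fun h3 => hm (Or.inr ⟨h.1, h3⟩)) hw (by rw [← h.1]; exact hy) (hH' (by linarith))
      linarith
  · intro i j hij hj hH w hw y hy
    have hH' : G.Hi {w} (8 * G.r) ∨ G.Hi {y} (8 * G.r) :=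
      hH.imp (fun H => (H.point hw).mono (by linarith)) fun H => (H.point hy).mono (by linarith)
    rcases htwo i j hij hj with h | ⟨-, h3, h4, h5, h6⟩
    · have := C.dist_far h (hn _ hj) hw hy
      linarith
    · have := Conf.le_dist h6 hw (by rw [← h3]; exact hy) hH'
      linarith

/-! ### Two colours and the separation of the two classes -/

namespace Weave

open Classical in
/-- The colour of the sets `D j`: it changes from `D j` to `D (j + 1)` unless they are merged. -/
noncomputable def color (W : G.Weave) : ℕ → Bool
  | 0 => true
  | j + 1 => if W.m j then W.color j else !W.color j

/-- The indices `f, …, l` form a maximal block of merged sets. -/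
def Grp (W : G.Weave) (f l : ℕ) : Prop :=
  f ≤ l ∧ l ≤ W.k ∧ (∀ i, f ≤ i → i < l → W.m i) ∧ (∀ i, i + 1 = f → ¬ W.m i) ∧
    (l < W.k → ¬ W.m l)

/-- The grid points that may be used by the class of colour `χ`: those lying between the two
landing indices of a block of the opposite colour, underneath which this class has to pass. -/
def Tok (W : G.Weave) (χ : Bool) (t : ℤ) : Prop :=
  ∃ f l, W.Grp f l ∧ W.color f = !χ ∧ t ∈ Set.uIcc (W.β f) (W.α (l + 1))

/-- Points of sets `D j` of colour `χ` that stay away from the grid. -/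
def High (W : G.Weave) (χ : Bool) : Set X :=
  {y | ∃ j ≤ W.k, W.color j = χ ∧ G.Hi (W.D j) (10 * G.r) ∧ y ∈ W.D j}

/-- Points of jumps inside blocks of colour `χ`. -/
def Jump (W : G.Weave) (χ : Bool) : Set X :=
  {y | ∃ j < W.k, W.m j ∧ W.color j = χ ∧ y ∈ W.J j}

/-- Points close to the part of the grid that colour `χ` may use. -/
def Low (W : G.Weave) (χ : Bool) : Set X :=
  {y | ∃ t, W.Tok χ t ∧ dist y (G.p t) ≤ G.r}

/-- Points on geodesics of length at most `10 * r` from a set `D j` of colour `χ` to a grid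
point that this colour may use. -/
def Link (W : G.Weave) (χ : Bool) : Set X :=
  {y | ∃ j ≤ W.k, W.color j = χ ∧ ∃ u ∈ W.D j, ∃ t, W.Tok χ t ∧
    dist u y + dist y (G.p t) ≤ 10 * G.r}

/-- The class of colour `χ`. It will contain one of the two paths. -/
def Cls (W : G.Weave) (χ : Bool) : Set X :=
  W.High χ ∪ W.Jump χ ∪ W.Low χ ∪ W.Link χ

variable (W : G.Weave)

theorem color_of_m {j : ℕ} (h : W.m j) : W.color (j + 1) = W.color j := by
  simp [color, h]

theorem color_of_not {j : ℕ} (h : ¬ W.m j) : W.color (j + 1) = !W.color j := by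
  simp [color, h]

variable {W}

theorem color_block {f x : ℕ} (hfx : f ≤ x) (hm : ∀ i, f ≤ i → i < x → W.m i) :
    W.color x = W.color f := by
  induction x, hfx using Nat.le_induction with
  | base => rfl
  | succ x hfx ih =>
    rw [W.color_of_m (hm x hfx (by omega)), ih fun i h1 h2 => hm i h1 (by omega)]

theorem Grp.color_eq {f l x : ℕ} (h : W.Grp f l) (h1 : f ≤ x) (h2 : x ≤ l) :
    W.color x = W.color f :=
  color_block h1 fun i h3 h4 => h.2.2.1 i h3 (by omega)

theorem exists_last {f : ℕ} (hf : f ≤ W.k) (hs : ∀ i, i + 1 = f → ¬ W.m i) :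
    ∃ l, W.Grp f l := by
  classical
  have hex : ∃ l, f ≤ l ∧ l ≤ W.k ∧ (l < W.k → ¬ W.m l) := ⟨W.k, hf, le_rfl, by omega⟩
  obtain ⟨h1, h2, h3⟩ := Nat.find_spec hex
  refine ⟨Nat.find hex, h1, h2, fun i hi hil => ?_, hs, h3⟩
  by_contra hm
  exact Nat.find_min hex hil ⟨hi, by omega, fun _ => hm⟩

theorem exists_first {l : ℕ} (hl : l ≤ W.k) (hs : l < W.k → ¬ W.m l) : ∃ f, W.Grp f l := by
  classical
  have hex : ∃ f, f ≤ l ∧ ∀ i, f ≤ i → i < l → W.m i := ⟨l, le_rfl, by omega⟩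
  obtain ⟨h1, h2⟩ := Nat.find_spec hex
  refine ⟨Nat.find hex, h1, hl, h2, fun i hi hm => ?_, hs⟩
  refine Nat.find_min hex (m := i) (by omega) ⟨by omega, fun i' h3 h4 => ?_⟩
  rcases h3.eq_or_lt with rfl | h3
  · exact hm
  · exact h2 i' (by omega) h4

theorem tok_first {f : ℕ} {χ : Bool} (hf : f ≤ W.k) (hs : ∀ i, i + 1 = f → ¬ W.m i)
    (hc : W.color f = !χ) : W.Tok χ (W.β f) := by
  obtain ⟨l, hl⟩ := exists_last hf hs
  exact ⟨f, l, hl, hc, Set.left_mem_uIcc⟩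

theorem tok_last {l : ℕ} {χ : Bool} (hl : l ≤ W.k) (hs : l < W.k → ¬ W.m l)
    (hc : W.color l = !χ) : W.Tok χ (W.α (l + 1)) := by
  obtain ⟨f, hf⟩ := exists_first hl hs
  exact ⟨f, l, hf, by rw [← hf.color_eq hf.1 le_rfl, hc], Set.right_mem_uIcc⟩

theorem Tok.mem {χ : Bool} {t : ℤ} (h : W.Tok χ t) : 0 ≤ t ∧ t ≤ G.N := by
  obtain ⟨f, l, h1, -, h2⟩ := h
  have h3 := W.β_mem f (h1.1.trans h1.2.1)
  have h4 := W.α_mem l h1.2.1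
  rw [Set.mem_uIcc] at h2
  omega

theorem β_lt {i j : ℕ} (hij : i < j) (hj : j ≤ W.k) : W.β i + 120 ≤ W.β j := by
  induction j with
  | zero => omega
  | succ j ih =>
    have h1 := W.grow j (by omega)
    rcases Nat.lt_succ_iff_lt_or_eq.1 hij with h | rfl
    · have := ih h (by omega)
      omega
    · exact h1

/-- Landing indices of different blocks differ by at least `30`, also after filling in. -/
theorem Grp.sep {f l f' l' : ℕ} (h : W.Grp f l) (h' : W.Grp f' l') (hlf : l < f') {t t' : ℤ}
    (ht : t ∈ Set.uIcc (W.β f) (W.α (l + 1))) (ht' : t' ∈ Set.uIcc (W.β f') (W.α (l' + 1))) :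
    t + 30 ≤ t' := by
  have hfl := h.1
  have hfl' := h'.1
  have hk := h'.2.1
  have hm : ¬ W.m l := h.2.2.2.2 (by omega)
  have h1 : W.β f + 120 ≤ W.β f' := β_lt (by omega) (by omega)
  have h2 : W.β f + 60 ≤ W.α (l' + 1) := W.far _ _ (by omega) (by omega)
  have h3 := W.overlap l (by omega) hm
  have h4 : W.β (l + 1) ≤ W.β f' := by
    rcases (show l + 1 ≤ f' from hlf).eq_or_lt with h | h
    · rw [h]
    · have := β_lt (W := W) h (by omega)
      omega
  have h5 : W.α (l + 1) + 30 ≤ W.α (l' + 1) := by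
    rcases (show l + 1 ≤ l' by omega).eq_or_lt with h | h
    · rw [← h]
      exact W.asep l (by omega) hm
    · have := W.far (l + 1) (l' + 1) (by omega) (by omega)
      omega
  rw [Set.mem_uIcc] at ht ht'
  omega

theorem Tok.sep {χ χ' : Bool} (hχ : χ ≠ χ') {t t' : ℤ} (h : W.Tok χ t) (h' : W.Tok χ' t') :
    t + 30 ≤ t' ∨ t' + 30 ≤ t := by
  obtain ⟨f, l, h1, h2, h3⟩ := h
  obtain ⟨f', l', h1', h2', h3'⟩ := h'
  have hne : W.color f ≠ W.color f' := by
    rw [h2, h2']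
    simpa using hχ
  rcases Nat.lt_or_ge l f' with h4 | h4
  · exact Or.inl (h1.sep h1' h4 h3 h3')
  · rcases Nat.lt_or_ge l' f with h5 | h5
    · exact Or.inr (h1'.sep h1 h5 h3' h3)
    · rcases le_total f f' with h6 | h6
      · exact absurd (h1.color_eq h6 h4).symm hne
      · exact absurd (h1'.color_eq h6 h5) hne

theorem arc_sep {i j : ℕ} (hi : i ≤ W.k) (hj : j ≤ W.k) (hc : W.color i ≠ W.color j)
    (hH : G.Hi (W.D i) (10 * G.r)) {w y : X} (hw : w ∈ W.D i) (hy : y ∈ W.D j) :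
    2 * G.r ≤ dist w y := by
  rcases lt_trichotomy i j with h | rfl | h
  · rcases (show i + 1 ≤ j from h).eq_or_lt with rfl | h
    · exact W.adj i (by omega) (fun hm => hc (W.color_of_m hm).symm) (Or.inl hH) w hw y hy
    · exact W.nonadj i j h hj (Or.inl hH) w hw y hy
  · exact absurd rfl hc
  · rw [dist_comm]
    rcases (show j + 1 ≤ i from h).eq_or_lt with rfl | h
    · exact W.adj j (by omega) (fun hm => hc (W.color_of_m hm)) (Or.inr hH) y hy w hw
    · exact W.nonadj j i h hi (Or.inr hH) y hy w hw

section Separation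

variable {χ χ' : Bool} {w y : X}

theorem high_high (hχ : χ ≠ χ') (hw : w ∈ W.High χ) (hy : y ∈ W.High χ') : G.r ≤ dist w y := by
  obtain ⟨i, hi, hci, hH, hw⟩ := hw
  obtain ⟨j, hj, hcj, -, hy⟩ := hy
  have := arc_sep hi hj (by rw [hci, hcj]; exact hχ) hH hw hy
  have := G.r_pos
  linarith

theorem high_jump (hχ : χ ≠ χ') (hw : w ∈ W.High χ) (hy : y ∈ W.Jump χ') : G.r ≤ dist w y := by
  obtain ⟨i, hi, hci, -, hw⟩ := hw
  obtain ⟨j, hj, hm, hcj, hy⟩ := hy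
  obtain ⟨h, q, -, -, hq, -, hs⟩ := W.J_sep j hj hm
  have hcj' := W.color_of_m hm
  refine hq.trans (hs i hi ?_ ?_ w hw y hy) <;> rintro rfl
  · exact hχ (hci.symm.trans hcj)
  · exact hχ (hci.symm.trans (hcj'.trans hcj))

theorem jump_jump (hχ : χ ≠ χ') (hw : w ∈ W.Jump χ) (hy : y ∈ W.Jump χ') : G.r ≤ dist w y := by
  obtain ⟨i, hi, hmi, hci, hw⟩ := hw
  obtain ⟨j, hj, hmj, hcj, hy⟩ := hy
  have hc : W.color i ≠ W.color j := by rw [hci, hcj]; exact hχ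
  have hci' := W.color_of_m hmi
  have hcj' := W.color_of_m hmj
  have h1 : i ≠ j := by rintro rfl; exact hc rfl
  have h2 : i + 1 ≠ j := by rintro rfl; exact hc hci'.symm
  have h3 : j + 1 ≠ i := by rintro rfl; exact hc hcj'
  rcases Nat.lt_or_ge i j with h | h
  · exact W.JJ_sep i j (by omega) hj hmi hmj w hw y hy
  · rw [dist_comm]
    exact W.JJ_sep j i (by omega) hi hmj hmi y hy w hw

theorem near_near (hχ : χ ≠ χ') {t t' : ℤ} (ht : W.Tok χ t) (ht' : W.Tok χ' t')
    (hw : dist w (G.p t) ≤ 10 * G.r) (hy : dist y (G.p t') ≤ 10 * G.r) : G.r ≤ dist w y := by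
  have hr := G.r_pos
  have h1 : 29 * G.r ≤ dist (G.p t) (G.p t') := by
    rcases ht.sep hχ ht' with h | h
    · refine le_trans ?_ (G.lower t t' ht.mem.1 (by omega) ht'.mem.2)
      have : ((t + 30 : ℤ) : ℝ) ≤ t' := Int.cast_le.2 h
      push_cast at this
      rw [mul_comm]
      gcongr
      linarith
    · rw [dist_comm]
      refine le_trans ?_ (G.lower t' t ht'.mem.1 (by omega) ht.mem.2)
      have : ((t' + 30 : ℤ) : ℝ) ≤ t := Int.cast_le.2 h
      push_cast at this
      rw [mul_comm]
      gcongr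
      linarith
  have h2 := dist_triangle4 (G.p t) w y (G.p t')
  rw [dist_comm (G.p t) w] at h2
  linarith

theorem high_link (hχ : χ ≠ χ') (hw : w ∈ W.High χ) (hy : y ∈ W.Link χ') : G.r ≤ dist w y := by
  obtain ⟨i, hi, hci, hH, hw⟩ := hw
  obtain ⟨j, hj, hcj, u, hu, t, ht, hd⟩ := hy
  have h1 := arc_sep hi hj (by rw [hci, hcj]; exact hχ) hH hw hu
  have h2 := hH w hw t ht.mem.1 ht.mem.2
  have h3 := dist_triangle w y u
  have h4 := dist_triangle w y (G.p t)
  rw [dist_comm y u] at h3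
  linarith

theorem jump_link (hχ : χ ≠ χ') (hw : w ∈ W.Jump χ) (hy : y ∈ W.Link χ') : G.r ≤ dist w y := by
  obtain ⟨i, hi, hm, hci, hw⟩ := hw
  obtain ⟨j, hj, hcj, u, hu, t, ht, hd⟩ := hy
  obtain ⟨h, q, hhq, -, -, hH, hs⟩ := W.J_sep i hi hm
  have hci' := W.color_of_m hm
  have h1 : q ≤ dist u w := by
    refine hs j hj ?_ ?_ u hu w hw <;> rintro rfl
    · exact hχ (hci.symm.trans hcj)
    · exact hχ (hci.symm.trans (hci'.symm.trans hcj))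
  have h2 := hH w hw t ht.mem.1 ht.mem.2
  have h3 := dist_triangle_right u w y
  have h4 := dist_triangle w y (G.p t)
  linarith

theorem high_low (hw : w ∈ W.High χ) (hy : y ∈ W.Low χ') : G.r ≤ dist w y := by
  obtain ⟨i, hi, hci, hH, hw⟩ := hw
  obtain ⟨t, ht, hd⟩ := hy
  have h2 := hH w hw t ht.mem.1 ht.mem.2
  have h4 := dist_triangle w y (G.p t)
  have := G.r_pos
  linarith

theorem jump_low (hw : w ∈ W.Jump χ) (hy : y ∈ W.Low χ') : G.r ≤ dist w y := by
  obtain ⟨i, hi, hm, hci, hw⟩ := hw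
  obtain ⟨t, ht, hd⟩ := hy
  obtain ⟨h, q, -, hh, -, hH, -⟩ := W.J_sep i hi hm
  have h2 := hH w hw t ht.mem.1 ht.mem.2
  have h4 := dist_triangle w y (G.p t)
  linarith

theorem exists_tok_near (hy : y ∈ W.Low χ ∨ y ∈ W.Link χ) :
    ∃ t, W.Tok χ t ∧ dist y (G.p t) ≤ 10 * G.r := by
  have hr := G.r_pos
  rcases hy with ⟨t, ht, hd⟩ | ⟨-, -, -, u, -, t, ht, hd⟩
  · exact ⟨t, ht, by linarith⟩
  · have : 0 ≤ dist u y := dist_nonneg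
    exact ⟨t, ht, by linarith⟩

/-- The two classes have distance at least `r`. The delicate case is that of a point on a link,
which may be close either to the grid or to some `D j`, but not to both. -/
theorem cls_sep (hχ : χ ≠ χ') (hw : w ∈ W.Cls χ) (hy : y ∈ W.Cls χ') : G.r ≤ dist w y := by
  have low_low : (w ∈ W.Low χ ∨ w ∈ W.Link χ) → (y ∈ W.Low χ' ∨ y ∈ W.Link χ') →
      G.r ≤ dist w y := fun h h' => by
    obtain ⟨t, ht, hd⟩ := exists_tok_near h
    obtain ⟨t', ht', hd'⟩ := exists_tok_near h'
    exact near_near hχ ht ht' hd hd'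
  rcases hw with ((hw | hw) | hw) | hw <;> rcases hy with ((hy | hy) | hy) | hy
  · exact high_high hχ hw hy
  · exact high_jump hχ hw hy
  · exact high_low hw hy
  · exact high_link hχ hw hy
  · rw [dist_comm]; exact high_jump hχ.symm hy hw
  · exact jump_jump hχ hw hy
  · exact jump_low hw hy
  · exact jump_link hχ hw hy
  · rw [dist_comm]; exact high_low hy hw
  · rw [dist_comm]; exact jump_low hy hw
  · exact low_low (Or.inl hw) (Or.inl hy)
  · exact low_low (Or.inl hw) (Or.inr hy)
  · rw [dist_comm]; exact high_link hχ.symm hy hw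
  · rw [dist_comm]; exact jump_link hχ.symm hy hw
  · exact low_low (Or.inr hw) (Or.inl hy)
  · exact low_low (Or.inr hw) (Or.inr hy)

end Separation

/-! ### Connecting the two classes -/

/-- A set of the weave lies in the class of its colour. If it is a single point close to the grid,
then it is the end of a jump or of a link of length `0`. -/
theorem arc_subset {j : ℕ} (hj : j ≤ W.k) : W.D j ⊆ W.Cls (W.color j) := by
  have hr := G.r_pos
  rcases W.shape j hj with hH | ⟨⟨x, hx⟩, hk⟩
  · exact fun y hy => Or.inl (Or.inl (Or.inl ⟨j, hj, rfl, hH, hy⟩))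
  · have hxD : x ∈ W.D j := by rw [hx]; rfl
    have huniq : ∀ u ∈ W.D j, u = x := fun u hu => by rwa [hx] at hu
    rw [hx, Set.singleton_subset_iff]
    have hlink : ∀ t, W.Tok (W.color j) t → dist x (G.p t) ≤ 10 * G.r →
        x ∈ W.Cls (W.color j) := fun t ht hd =>
      Or.inr ⟨j, hj, rfl, x, hxD, t, ht, by rw [dist_self]; linarith⟩
    rcases hj.lt_or_eq with hjk | rfl
    · by_cases hm : W.m j
      · obtain ⟨u, hu, huJ⟩ := W.J_left j hjk hm
        rw [huniq u hu] at huJ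
        exact Or.inl (Or.inl (Or.inr ⟨j, hjk, hm, rfl, huJ⟩))
      · obtain ⟨u, hu, hd⟩ := W.down j hjk
        rw [huniq u hu] at hd
        refine hlink _ (tok_first hjk ?_ (W.color_of_not hm)) hd
        intro i hi
        rwa [Nat.succ_injective hi]
    · obtain ⟨i, hi⟩ : ∃ i, W.k = i + 1 := ⟨W.k - 1, by omega⟩
      rw [hi] at huniq hlink ⊢
      by_cases hm : W.m i
      · obtain ⟨u, hu, huJ⟩ := W.J_right i (by omega) hm
        rw [huniq u hu] at huJ
        exact Or.inl (Or.inl (Or.inr ⟨i, by omega, hm, (W.color_of_m hm).symm, huJ⟩))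
      · obtain ⟨u, hu, hd⟩ := W.up i (by omega)
        rw [huniq u hu] at hd
        exact hlink _ (tok_last (by omega) (fun _ => hm) (by simp [W.color_of_not hm])) hd

/-- The part of the geodesic between two grid points. -/
theorem _root_.Grid.exists_segment {s t : ℤ} (hs : 0 ≤ s) (hsN : s ≤ G.N) (ht : 0 ≤ t)
    (htN : t ≤ G.N) : ∃ V, IsPathConnected V ∧ G.p s ∈ V ∧ G.p t ∈ V ∧
      ∀ y ∈ V, ∃ i ∈ Set.uIcc s t, dist y (G.p i) ≤ G.r := by
  have key : ∀ (n : ℕ) (s : ℤ), 0 ≤ s → s + n ≤ G.N → ∃ V, IsPathConnected V ∧ G.p s ∈ V ∧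
      G.p (s + n) ∈ V ∧ ∀ y ∈ V, ∃ i ∈ Set.Icc s (s + n), dist y (G.p i) ≤ G.r := by
    intro n
    induction n with
    | zero =>
      intro s hs hsN
      refine ⟨{G.p s}, isPathConnected_singleton _, rfl, by simp, ?_⟩
      rintro y rfl
      exact ⟨s, by simp, by rw [dist_self]; exact G.r_pos.le⟩
    | succ n ih =>
      intro s hs hsN
      push_cast at hsN
      obtain ⟨V, hV, hsV, htV, hd⟩ := ih s hs (by omega)
      obtain ⟨J, hJ, huJ, hvJ, hJd⟩ := exists_geodesic_set G.geo (G.p (s + n)) (G.p (s + (n + 1)))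
      refine ⟨V ∪ J, hV.union hJ ⟨_, htV, huJ⟩, Or.inl hsV, Or.inr (by push_cast; exact hvJ), ?_⟩
      rintro y (hy | hy)
      · obtain ⟨i, hi, hid⟩ := hd y hy
        refine ⟨i, ⟨hi.1, ?_⟩, hid⟩
        have := hi.2
        push_cast
        omega
      · refine ⟨s + n, ⟨by omega, by push_cast; omega⟩, ?_⟩
        have h1 := hJd y hy
        have h2 := G.upper (s + n) (s + (n + 1)) (by omega) (by omega) (by omega)
        have h3 : 0 ≤ dist y (G.p (s + (n + 1))) := dist_nonneg
        push_cast at h2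
        rw [dist_comm]
        linarith
  rcases le_total s t with h | h
  · obtain ⟨n, rfl⟩ := Int.le.dest h
    obtain ⟨V, hV, h1, h2, h3⟩ := key n s hs htN
    rw [Set.uIcc_of_le h]
    exact ⟨V, hV, h1, h2, h3⟩
  · obtain ⟨n, rfl⟩ := Int.le.dest h
    obtain ⟨V, hV, h1, h2, h3⟩ := key n t ht hsN
    rw [Set.uIcc_of_ge h]
    exact ⟨V, hV, h2, h1, h3⟩

theorem exists_link {j : ℕ} (hj : j ≤ W.k) {u : X} (hu : u ∈ W.D j) {t : ℤ} {χ : Bool}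
    (hχ : W.color j = χ) (ht : W.Tok χ t) (hd : dist u (G.p t) ≤ 10 * G.r) :
    ∃ J, IsPathConnected J ∧ u ∈ J ∧ G.p t ∈ J ∧ J ⊆ W.Cls χ := by
  obtain ⟨J, hJ, huJ, htJ, hJd⟩ := exists_geodesic_set G.geo u (G.p t)
  exact ⟨J, hJ, huJ, htJ, fun y hy => Or.inr ⟨j, hj, hχ, u, hu, t, ht, (hJd y hy).trans_le hd⟩⟩

/-- The passage underneath a block. -/
theorem Grp.exists_segment {f l : ℕ} (h : W.Grp f l) {χ : Bool} (hχ : W.color f = !χ) :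
    ∃ V, IsPathConnected V ∧ G.p (W.β f) ∈ V ∧ G.p (W.α (l + 1)) ∈ V ∧ V ⊆ W.Cls χ := by
  have h1 := W.β_mem f (h.1.trans h.2.1)
  have h2 := W.α_mem l h.2.1
  obtain ⟨V, hV, hs, ht, hd⟩ := G.exists_segment h1.1 h1.2 h2.1 h2.2
  refine ⟨V, hV, hs, ht, fun y hy => Or.inl (Or.inr ?_)⟩
  obtain ⟨i, hi, hid⟩ := hd y hy
  exact ⟨i, ⟨f, l, h, hχ, hi⟩, hid⟩

/-- Both strands of the weave, constructed up to `D j`: the strand `U` has just run through `D j`,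
while `V` waits on the grid at the index where it has to pass underneath the block of `D j`. -/
theorem exists_strands (j : ℕ) (hj : j ≤ W.k) : ∃ f ≤ j, (∀ i, f ≤ i → i < j → W.m i) ∧
    (∀ i, i + 1 = f → ¬ W.m i) ∧ ∃ U V, IsPathConnected U ∧ IsPathConnected V ∧
      U ⊆ W.Cls (W.color j) ∧ V ⊆ W.Cls (!W.color j) ∧ W.D j ⊆ U ∧ G.p (W.β f) ∈ V ∧
      (∃ x ∈ U, x ∈ G.A) ∧ (∃ x ∈ V, x ∈ G.A) ∧ (G.p 0 ∈ U ∨ G.p 0 ∈ V) := by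
  induction j with
  | zero =>
    refine ⟨0, le_rfl, by omega, by omega, W.D 0, {G.p 0}, W.conn 0 hj,
      isPathConnected_singleton _, arc_subset hj, ?_, subset_rfl, by rw [W.β_zero]; rfl, W.startA,
      ⟨_, rfl, G.memA⟩, Or.inr rfl⟩
    rw [Set.singleton_subset_iff]
    refine Or.inl (Or.inr ⟨W.β 0, tok_first hj (by omega) (by simp), ?_⟩)
    rw [W.β_zero, dist_self]
    exact G.r_pos.le
  | succ j ih =>
    obtain ⟨f, hf, hm, hs, U, V, hU, hV, hUF, hVF, hDU, hβV, ⟨x, hxU, hxA⟩, ⟨x', hxV, hxA'⟩, h0⟩ :=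
      ih (by omega)
    have hDF := arc_subset (W := W) hj
    by_cases hmj : W.m j
    · have hc := W.color_of_m hmj
      rw [hc] at hDF ⊢
      obtain ⟨u, hu, huJ⟩ := W.J_left j hj hmj
      obtain ⟨v, hv, hvJ⟩ := W.J_right j hj hmj
      have hJF : W.J j ⊆ W.Cls (W.color j) := fun y hy =>
        Or.inl (Or.inl (Or.inr ⟨j, hj, hmj, rfl, hy⟩))
      refine ⟨f, by omega, ?_, hs, U ∪ W.J j ∪ W.D (j + 1), V,
        (hU.union (W.J_conn j hj hmj) ⟨u, hDU hu, huJ⟩).union (W.conn _ hj) ⟨v, Or.inr hvJ, hv⟩,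
        hV, Set.union_subset (Set.union_subset hUF hJF) hDF, hVF, Set.subset_union_right, hβV,
        ⟨x, Or.inl (Or.inl hxU), hxA⟩, ⟨x', hxV, hxA'⟩, ?_⟩
      · intro i hi hij
        rcases (show i ≤ j by omega).lt_or_eq with h | rfl
        exacts [hm i hi h, hmj]
      · exact h0.imp (fun h => Or.inl (Or.inl h)) id
    · have hc := W.color_of_not hmj
      rw [hc] at hDF ⊢
      have hgrp : W.Grp f j := ⟨hf, by omega, hm, hs, fun _ => hmj⟩
      have hstart : ∀ i, i + 1 = j + 1 → ¬ W.m i := fun i hi => by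
        rwa [Nat.succ_injective hi]
      -- the strand `U` descends to the grid
      obtain ⟨u, hu, hud⟩ := W.down j hj
      obtain ⟨P, hP, huP, hpP, hPF⟩ := exists_link (by omega) hu rfl (tok_first hj hstart hc) hud
      -- the strand `V` passes underneath the block of `D j` and climbs to `D (j + 1)`
      obtain ⟨v, hv, hvd⟩ := W.up j hj
      obtain ⟨Q, hQ, hvQ, hpQ, hQF⟩ := exists_link hj hv hc
        (tok_last (l := j) (by omega) (fun _ => hmj) (by simp)) hvd
      obtain ⟨S, hS, h1S, h2S, hSF⟩ := hgrp.exists_segment (χ := !W.color j)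
        (by rw [Bool.not_not, hgrp.color_eq hf le_rfl])
      refine ⟨j + 1, le_rfl, by omega, hstart, V ∪ S ∪ Q ∪ W.D (j + 1), U ∪ P,
        ((hV.union hS ⟨_, hβV, h1S⟩).union hQ ⟨_, Or.inr h2S, hpQ⟩).union (W.conn _ hj)
          ⟨v, Or.inr hvQ, hv⟩,
        hU.union hP ⟨u, hDU hu, huP⟩,
        Set.union_subset (Set.union_subset (Set.union_subset hVF hSF) hQF) hDF, ?_,
        Set.subset_union_right, Or.inr hpP, ⟨x', Or.inl (Or.inl (Or.inl hxV)), hxA'⟩,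
        ⟨x, Or.inl hxU, hxA⟩, ?_⟩
      · rw [Bool.not_not]
        exact Set.union_subset hUF hPF
      · exact h0.symm.imp (fun h => Or.inl (Or.inl (Or.inl h))) Or.inl

end Weave

/-- The strands of the weave, completed at the right end: `U` ends in `D k`, which meets `Z`, while
`V` continues along the grid to `p N`. -/
theorem exists_disjoint_sets (G : Grid X) : ∃ U V, IsPathConnected U ∧ IsPathConnected V ∧
    (∀ u ∈ U, ∀ v ∈ V, G.r ≤ dist u v) ∧ (∃ x ∈ U, x ∈ G.A) ∧ (∃ x ∈ V, x ∈ G.A) ∧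
    (∃ x ∈ U, x ∈ G.Z) ∧ G.p G.N ∈ V ∧ (G.p 0 ∈ U ∨ G.p 0 ∈ V) := by
  obtain ⟨W⟩ := G.exists_weave
  obtain ⟨f, hf, hm, hs, U, V, hU, hV, hUF, hVF, hDU, hβV, hUA, ⟨x, hxV, hxA⟩, h0⟩ :=
    Weave.exists_strands (W := W) W.k le_rfl
  have hgrp : W.Grp f W.k := ⟨hf, le_rfl, hm, hs, fun h => absurd h (lt_irrefl _)⟩
  obtain ⟨S, hS, h1S, h2S, hSF⟩ := hgrp.exists_segment (χ := !W.color W.k)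
    (by rw [Bool.not_not, hgrp.color_eq hf le_rfl])
  rw [W.α_last] at h2S
  obtain ⟨z, hz, hzZ⟩ := W.endZ
  have hVS := Set.union_subset hVF hSF
  refine ⟨U, V ∪ S, hU, hV.union hS ⟨_, hβV, h1S⟩,
    fun u hu v hv => Weave.cls_sep (by simp) (hUF hu) (hVS hv), hUA, ⟨x, Or.inl hxV, hxA⟩,
    ⟨z, hDU hz, hzZ⟩, Or.inr h2S, h0.imp id Or.inl⟩

end Grid

/-! ### The grid on a geodesic and the two paths -/

/-- The grid on a geodesic from `x` to `z`, given that no ball of radius `136 * r` separates. -/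
theorem exists_grid {X : Type*} [MetricSpace X] (hX : IsGeodesicSpace X) {A Z : Set X} {r : ℝ}
    (hr : 0 < r) {x z : X} (hx : x ∈ A) (hz : z ∈ Z)
    (hns : ∀ c : X, ∃ a ∈ A, ∃ z ∈ Z, ∃ q : Path a z, ∀ t, 136 * r < dist (q t) c) :
    ∃ G : Grid X, G.r = r ∧ G.A = A ∧ G.Z = Z ∧ G.p 0 = x ∧ G.p G.N = z := by
  obtain ⟨g, g0, g1, hg⟩ := hX x z
  have hL : 0 ≤ dist x z := dist_nonneg
  have hN : 0 ≤ ⌈dist x z / r⌉ := Int.ceil_nonneg (by positivity)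
  let p : ℤ → X := fun i => g (min (i * r) (dist x z))
  have p0 : p 0 = x := by
    simp only [p, Int.cast_zero, zero_mul, min_eq_left hL, g0]
  have pN : p ⌈dist x z / r⌉ = z := by
    have h1 := (div_le_iff₀ hr).1 (Int.le_ceil (dist x z / r))
    simp only [p, min_eq_right h1, g1]
  have hd : ∀ i j : ℤ, 0 ≤ i → i ≤ j →
      dist (p i) (p j) = min (j * r) (dist x z) - min (i * r) (dist x z) := by
    intro i j hi hij
    have hi' : (0 : ℝ) ≤ i := by exact_mod_cast hi
    have hij' : (i : ℝ) ≤ j := by exact_mod_cast hij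
    have h1 : (i : ℝ) * r ≤ j * r := by gcongr
    have h2 : min ((i : ℝ) * r) (dist x z) ≤ min (j * r) (dist x z) := min_le_min_right _ h1
    have h3 : (0 : ℝ) ≤ i * r := by positivity
    rw [show dist (p i) (p j) = _ from hg _ ⟨le_min h3 hL, min_le_right _ _⟩ _
      ⟨le_min (h3.trans h1) hL, min_le_right _ _⟩, abs_sub_comm, abs_of_nonneg (by linarith)]
  refine ⟨⟨p, ⌈dist x z / r⌉, r, A, Z, hX, hr, hN, ?_, ?_, fun i _ _ => hns _, ?_, ?_⟩,
    rfl, rfl, rfl, p0, pN⟩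
  · intro i j hi hij hj
    rw [hd i j hi hij]
    have h1 : ((j : ℝ) - 1) * r < dist x z := by
      rw [← lt_div_iff₀ hr]
      have := Int.lt_ceil.1 (show j - 1 < ⌈dist x z / r⌉ by omega)
      push_cast at this
      exact this
    have h2 : ((j : ℝ) - 1) * r ≤ min (j * r) (dist x z) := le_min (by linarith) h1.le
    have h3 := min_le_left ((i : ℝ) * r) (dist x z)
    linarith
  · intro i j hi hij hj
    rw [hd i j hi hij]
    have hij' : (i : ℝ) ≤ j := by exact_mod_cast hij
    have h1 := min_le_left ((j : ℝ) * r) (dist x z)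
    rcases min_cases ((i : ℝ) * r) (dist x z) with ⟨h, -⟩ | ⟨h, -⟩
    · rw [h]
      linarith
    · rw [h]
      have h2 := min_le_right ((j : ℝ) * r) (dist x z)
      have h3 : 0 ≤ r * ((j : ℝ) - i) := mul_nonneg hr.le (by linarith)
      linarith
  · rw [p0]; exact hx
  · rw [pN]; exact hz

/-- Coarse Menger with prescribed endpoints: if no set of diameter at most `K` separates
`A` from `Z` in the geodesic metric space `X`, then for every `x ∈ A` and `z ∈ Z` there
are two paths joining `A` to `Z` at distance at least `K/272` from each other such that
both `x` and `z` are among the four endpoints of the two paths. -/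
theorem coarse_Menger_choosing_endpoints
    {X : Type} [MetricSpace X] (hX : IsGeodesicSpace X)
    (A Z : Set X) (K : ℝ) (hK : 0 < K)
    (hns : ∀ S : Set X, EMetric.diam S ≤ ENNReal.ofReal K →
      ∃ a ∈ A, ∃ z ∈ Z, ∃ p : Path a z, ∀ t, p t ∉ S) :
    ∀ x ∈ A, ∀ z ∈ Z,
      ∃ a₁ ∈ A, ∃ z₁ ∈ Z, ∃ a₂ ∈ A, ∃ z₂ ∈ Z,
        ∃ (p₁ : Path a₁ z₁) (p₂ : Path a₂ z₂),
          (∀ s t, K / 272 ≤ dist (p₁ s) (p₂ t)) ∧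
          x ∈ ({a₁, z₁, a₂, z₂} : Set X) ∧ z ∈ ({a₁, z₁, a₂, z₂} : Set X) := by
  intro x hx z hz
  have hr : 0 < K / 272 := by positivity
  obtain ⟨G, rfl', rfl, rfl, rfl, rfl⟩ := exists_grid hX hr hx hz (fun c => by
    obtain ⟨a, ha, z, hz, q, hq⟩ := hns (Metric.closedBall c (136 * (K / 272))) (by
      refine Metric.ediam_le fun y hy w hw => ?_
      rw [edist_dist]
      apply ENNReal.ofReal_le_ofReal
      have := dist_triangle_right y w c
      have := Metric.mem_closedBall.1 hy
      have := Metric.mem_closedBall.1 hw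
      linarith)
    exact ⟨a, ha, z, hz, q, fun t => not_le.1 (hq t)⟩)
  obtain ⟨U, V, hU, hV, hsep, ⟨a, haU, ha⟩, ⟨a', haV, ha'⟩, ⟨z', hzU, hz'⟩, hNV, h0⟩ :=
    G.exists_disjoint_sets
  rw [rfl'] at hsep
  -- paths from `s` to `z'` in `U` and from `t` to the prescribed point of `Z` in `V`
  have key : ∀ s ∈ U, s ∈ G.A → ∀ t ∈ V, t ∈ G.A → (G.p 0 = s ∨ G.p 0 = t) →
      ∃ a₁ ∈ G.A, ∃ z₁ ∈ G.Z, ∃ a₂ ∈ G.A, ∃ z₂ ∈ G.Z, ∃ (p₁ : Path a₁ z₁) (p₂ : Path a₂ z₂),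
        (∀ s t, K / 272 ≤ dist (p₁ s) (p₂ t)) ∧
        G.p 0 ∈ ({a₁, z₁, a₂, z₂} : Set X) ∧ G.p G.N ∈ ({a₁, z₁, a₂, z₂} : Set X) := by
    intro s hsU hsA t htV htA hst
    obtain ⟨p₁, hp₁⟩ := hU.joinedIn s hsU z' hzU
    obtain ⟨p₂, hp₂⟩ := hV.joinedIn t htV _ hNV
    refine ⟨s, hsA, z', hz', t, htA, _, G.memZ, p₁, p₂,
      fun i j => hsep _ (hp₁ i) _ (hp₂ j), ?_, by simp⟩
    rcases hst with h | h <;> simp [h]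
  rcases h0 with h0 | h0
  · exact key _ h0 G.memA a' haV ha' (Or.inl rfl)
  · exact key a haU ha _ h0 G.memA (Or.inr rfl)
end

section
/- Let X be a graph or a geodesic metric space, let A, Z ⊆ X, let K > 0, and fix a shortest path γ : [0,ℓ] → X joining A to Z, parametrized by arc length. Assume no set S ⊂ X with diam(S) ≤ K separates A from Z. Then for every point x ∈ γ there is a bridge B (with respect to γ, A, Z, K) that (3K/8)-surrounds x. -/
/-- A metric space is a length space if any two points are joined by paths of length
arbitrarily close to their distance. -/
def IsLengthSpace (X : Type*) [MetricSpace X] : Prop :=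
  ∀ x y : X, ∀ ε : ℝ, 0 < ε → ∃ p : Path x y,
    eVariationOn (fun t => p t) Set.univ ≤ ENNReal.ofReal (dist x y + ε)
/-- A bridge with respect to a shortest `A`–`Z` path `γ : [0,ℓ] → X` and a constant `K`:
a union of three successive paths `leg1 ∪ spine ∪ leg2`, where every point of the spine is
at distance at least `K/8` from `γ`; if the spine meets `A` then `leg1` is degenerate (a
single endpoint of the spine) and the interval of the bridge starts at `γ 0` (parameter
`t0 = 0`), and otherwise `leg1` is a geodesic path of length `K/8` joining the endpoint
`γ t0` on `γ` to the spine; symmetrically for `leg2` and `Z`.  The parameters `t0 ≤ t1`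
record the endpoints `B⁰, B¹` of the bridge on `γ`, and `[t0, t1]` is its interval. -/
structure Bridge {X : Type*} [MetricSpace X] (A Z : Set X) (K ℓ : ℝ) (γ : ℝ → X) where
  p : X
  q : X
  spine : Path p q
  a1 : X
  a2 : X
  leg1 : Path a1 p
  leg2 : Path q a2
  t0 : ℝ
  t1 : ℝ
  ht0 : t0 ∈ Set.Icc 0 ℓ
  ht1 : t1 ∈ Set.Icc 0 ℓ
  hle : t0 ≤ t1
  spine_far : ∀ s : unitInterval, ∀ t ∈ Set.Icc 0 ℓ, K / 8 ≤ dist (spine s) (γ t)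
  leg1_spec :
    ((∃ s : unitInterval, spine s ∈ A) ∧ a1 = p ∧ (∀ s, leg1 s = p) ∧ t0 = 0) ∨
    ((∀ s : unitInterval, spine s ∉ A) ∧ a1 = γ t0 ∧
      ∀ s t : unitInterval, dist (leg1 s) (leg1 t) = K / 8 * |(s : ℝ) - (t : ℝ)|)
  leg2_spec :
    ((∃ s : unitInterval, spine s ∈ Z) ∧ a2 = q ∧ (∀ s, leg2 s = q) ∧ t1 = ℓ) ∨
    ((∀ s : unitInterval, spine s ∉ Z) ∧ a2 = γ t1 ∧
      ∀ s t : unitInterval, dist (leg2 s) (leg2 t) = K / 8 * |(s : ℝ) - (t : ℝ)|)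

/-- A bridge `B` `d`-surrounds the point `γ t` if its interval `[B⁰, B¹]` contains the
points `t - d` and `t + d` (truncated at `0` and `ℓ` respectively). -/
def Bridge.Surrounds {X : Type*} [MetricSpace X] {A Z : Set X} {K ℓ : ℝ} {γ : ℝ → X}
    (B : Bridge A Z K ℓ γ) (d t : ℝ) : Prop :=
  B.t0 ≤ max (t - d) 0 ∧ min (t + d) ℓ ≤ B.t1

/-- A bridge is maximal if its interval is not properly contained in the interval of
another bridge. -/
def Bridge.Maximal {X : Type*} [MetricSpace X] {A Z : Set X} {K ℓ : ℝ} {γ : ℝ → X}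
    (B : Bridge A Z K ℓ γ) : Prop :=
  ∀ C : Bridge A Z K ℓ γ, C.t0 ≤ B.t0 → B.t1 ≤ C.t1 → (C.t0 = B.t0 ∧ C.t1 = B.t1)

/-- The set of points of a bridge: the union of its spine and its two legs. -/
def Bridge.carrier {X : Type*} [MetricSpace X] {A Z : Set X} {K ℓ : ℝ} {γ : ℝ → X}
    (B : Bridge A Z K ℓ γ) : Set X :=
  Set.range (fun s => B.spine s) ∪ Set.range (fun s => B.leg1 s) ∪
    Set.range (fun s => B.leg2 s)

/-- In a geodesic space any two points are joined by a geodesic parametrized over `[0,1]`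
proportionally to arc length. -/
lemma IsGeodesicSpace.exists_path {X : Type*} [MetricSpace X] (hX : IsGeodesicSpace X) (x y : X) :
    ∃ c : Path x y, ∀ s t : unitInterval,
      dist (c s) (c t) = dist x y * |(s : ℝ) - (t : ℝ)| := by
  obtain ⟨f, hf0, hf1, hf⟩ := hX x y
  have hmem (s : unitInterval) : (s : ℝ) * dist x y ∈ Set.Icc 0 (dist x y) :=
    ⟨mul_nonneg s.2.1 dist_nonneg, mul_le_of_le_one_left dist_nonneg s.2.2⟩
  have key (s t : unitInterval) :
      dist (f (s * dist x y)) (f (t * dist x y)) = dist x y * |(s : ℝ) - (t : ℝ)| := by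
    rw [hf _ (hmem s) _ (hmem t), ← sub_mul, abs_mul, abs_of_nonneg dist_nonneg, mul_comm]
  have hcont : Continuous fun s : unitInterval => f (s * dist x y) := by
    refine LipschitzWith.continuous (K := (dist x y).toNNReal) (LipschitzWith.of_dist_le_mul ?_)
    intro s t
    rw [key, Real.coe_toNNReal _ dist_nonneg, Subtype.dist_eq, Real.dist_eq]
  exact ⟨⟨⟨_, hcont⟩, by simp [hf0], by simp [hf1]⟩, key⟩

lemma eVariationOn_le_of_dist_eq {X : Type*} [MetricSpace X] {x y : X} (c : Path x y) {r : ℝ}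
    (hr : 0 ≤ r)
    (hc : ∀ s t : unitInterval, dist (c s) (c t) = r * |(s : ℝ) - (t : ℝ)|) :
    eVariationOn (fun t => c t) Set.univ ≤ ENNReal.ofReal r := by
  have hlip : LipschitzOnWith r.toNNReal c.extend (Set.Icc 0 1) := by
    refine LipschitzOnWith.of_dist_le_mul fun s hs t ht => ?_
    rw [Path.extend_apply _ hs, Path.extend_apply _ ht, hc, Real.coe_toNNReal _ hr, Real.dist_eq]
  have h1 := hlip.comp_eVariationOn_le (g := ((↑) : unitInterval → ℝ)) (s := Set.univ)
    (fun s _ => s.2)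
  have h2 : eVariationOn ((↑) : unitInterval → ℝ) Set.univ ≤ 1 := by
    have hm : MonotoneOn ((↑) : unitInterval → ℝ) Set.univ := fun _ _ _ _ h => h
    have := (hm.eVariationOn_eq (a := 0) (b := 1) trivial trivial).le
    have hI : Set.Icc (0 : unitInterval) 1 = Set.univ :=
      Set.eq_univ_of_forall fun s => ⟨unitInterval.nonneg', unitInterval.le_one'⟩
    simpa [hI] using this
  have h3 : (c.extend ∘ ((↑) : unitInterval → ℝ)) = fun t => c t := by
    funext t
    simp
  rw [h3] at h1
  exact h1.trans (mul_le_of_le_one_right' h2)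

lemma mem_cthickening_image_iff {X : Type*} [MetricSpace X] {γ : ℝ → X} {T : Set ℝ}
    (hT : IsCompact T) (hγ : ContinuousOn γ T) {δ : ℝ} (hδ : 0 ≤ δ) (y : X) :
    y ∈ Metric.cthickening δ (γ '' T) ↔ ∃ r ∈ T, dist y (γ r) ≤ δ := by
  rw [(hT.image_of_continuousOn hγ).cthickening_eq_biUnion_closedBall hδ]
  simp

/-- Let `P` be a path avoiding the closed ball of radius `K/2` around `γ t`. On some parameter
interval `[u₀, u₁]` it keeps distance at least `K/8` from `γ`, where `u₀` is `0` or a parameter at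
which `P` is within `K/8` of the part of `γ` up to `t - 3K/8`, and `u₁` is `1` or a parameter at
which `P` is within `K/8` of the part from `t + 3K/8` on. The hypotheses `ha` and `hz` prevent `P`
from starting close to the latter part or ending close to the former. -/
lemma exists_far_subinterval {X : Type*} [MetricSpace X] {K ℓ : ℝ} (hK : 0 < K) {γ : ℝ → X}
    (hgeo : ∀ s ∈ Set.Icc 0 ℓ, ∀ t ∈ Set.Icc 0 ℓ, dist (γ s) (γ t) = |s - t|)
    {t : ℝ} (ht : t ∈ Set.Icc 0 ℓ) {a z : X} (P : Path a z)
    (hP : ∀ u, K / 2 < dist (P u) (γ t))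
    (ha : ∀ r ∈ Set.Icc 0 ℓ, r ≤ dist a (γ r))
    (hz : ∀ r ∈ Set.Icc 0 ℓ, ℓ - r ≤ dist z (γ r)) :
    ∃ u₀ u₁ : unitInterval, u₀ ≤ u₁ ∧
      (∀ u ∈ Set.Icc u₀ u₁, ∀ r ∈ Set.Icc 0 ℓ, K / 8 ≤ dist (P u) (γ r)) ∧
      (u₀ = 0 ∨ ∃ r ∈ Set.Icc 0 ℓ, r ≤ t - 3 * K / 8 ∧ dist (P u₀) (γ r) ≤ K / 8) ∧
      (u₁ = 1 ∨ ∃ r ∈ Set.Icc 0 ℓ, t + 3 * K / 8 ≤ r ∧ dist (P u₁) (γ r) ≤ K / 8) := by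
  have hγ : ContinuousOn γ (Set.Icc 0 ℓ) := by
    refine LipschitzOnWith.continuousOn (K := 1) (LipschitzOnWith.of_dist_le_mul ?_)
    intro r hr s hs
    rw [hgeo r hr s hs, NNReal.coe_one, one_mul, Real.dist_eq]
  -- a point of `P` close to `γ r` forces `r` to be far from `t`, as `P` is far from `γ t`
  have hnear : ∀ u, ∀ r ∈ Set.Icc 0 ℓ, dist (P u) (γ r) ≤ K / 8 → 3 * K / 8 < |r - t| := by
    intro u r hr hd
    have h1 := dist_triangle (P u) (γ r) (γ t)
    rw [hgeo r hr t ht] at h1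
    linarith [hP u]
  let TL : Set ℝ := Set.Icc 0 ℓ ∩ Set.Iic (t - 3 * K / 8)
  let TR : Set ℝ := Set.Icc 0 ℓ ∩ Set.Ici (t + 3 * K / 8)
  have hL := mem_cthickening_image_iff (isCompact_Icc.inter_right isClosed_Iic)
    (hγ.mono (Set.inter_subset_left (t := Set.Iic (t - 3 * K / 8)))) (δ := K / 8) (by positivity)
  have hR := mem_cthickening_image_iff (isCompact_Icc.inter_right isClosed_Ici)
    (hγ.mono (Set.inter_subset_left (t := Set.Ici (t + 3 * K / 8)))) (δ := K / 8) (by positivity)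
  let L : Set unitInterval := P ⁻¹' Metric.cthickening (K / 8) (γ '' TL)
  let R : Set unitInterval := P ⁻¹' Metric.cthickening (K / 8) (γ '' TR)
  have hLc : IsClosed L := Metric.isClosed_cthickening.preimage P.continuous
  have hRc : IsClosed R := Metric.isClosed_cthickening.preimage P.continuous
  have hLR : ∀ u, u ∈ L → u ∉ R := by
    intro u hu hu'
    obtain ⟨r, ⟨hr, hrt⟩, hrd⟩ := (hL _).1 hu
    obtain ⟨s, ⟨hs, hst⟩, hsd⟩ := (hR _).1 hu'
    have h1 := dist_triangle_left (γ r) (γ s) (P u)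
    rw [hgeo r hr s hs] at h1
    have h2 := neg_abs_le (r - s)
    simp only [Set.mem_Iic, Set.mem_Ici] at hrt hst
    linarith
  have h0R : (0 : unitInterval) ∉ R := by
    intro hu
    obtain ⟨r, ⟨hr, hrt⟩, hrd⟩ := (hR _).1 hu
    rw [P.source] at hrd
    simp only [Set.mem_Ici] at hrt
    linarith [ha r hr, ht.1]
  have h1L : (1 : unitInterval) ∉ L := by
    intro hu
    obtain ⟨r, ⟨hr, hrt⟩, hrd⟩ := (hL _).1 hu
    rw [P.target] at hrd
    simp only [Set.mem_Iic] at hrt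
    linarith [hz r hr, ht.2]
  obtain ⟨u₁, hu₁, hu₁min⟩ := (hRc.union isClosed_singleton).isCompact.exists_isLeast
    (⟨1, Or.inr rfl⟩ : (R ∪ {1}).Nonempty)
  obtain ⟨u₀, ⟨hu₀, hu₀₁⟩, hu₀max⟩ :=
    ((hLc.union isClosed_singleton).inter isClosed_Iic).isCompact.exists_isGreatest
      (⟨0, Or.inr rfl, unitInterval.nonneg'⟩ : ((L ∪ {0}) ∩ Set.Iic u₁).Nonempty)
  have hne : u₀ ≠ u₁ := by
    rintro rfl
    rcases hu₀ with h0 | h0 <;> rcases hu₁ with h1 | h1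
    · exact hLR _ h0 h1
    · rw [Set.mem_singleton_iff.1 h1] at h0
      exact h1L h0
    · rw [Set.mem_singleton_iff.1 h0] at h1
      exact h0R h1
    · exact zero_ne_one ((Set.mem_singleton_iff.1 h0).symm.trans (Set.mem_singleton_iff.1 h1))
  have hopen : ∀ r ∈ Set.Icc 0 ℓ, Set.Ioo u₀ u₁ ⊆ {u | K / 8 ≤ dist (P u) (γ r)} := by
    intro r hr u hu
    by_contra hlt
    have hlt : dist (P u) (γ r) ≤ K / 8 := (not_le.1 hlt).le
    rcases lt_abs.1 (hnear u r hr hlt) with h | h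
    · have huR : u ∈ R := (hR _).2 ⟨r, ⟨hr, by simp only [Set.mem_Ici]; linarith⟩, hlt⟩
      exact absurd (hu₁min (Or.inl huR)) (not_le.2 hu.2)
    · have huL : u ∈ L := (hL _).2 ⟨r, ⟨hr, by simp only [Set.mem_Iic]; linarith⟩, hlt⟩
      exact absurd (hu₀max ⟨Or.inl huL, hu.2.le⟩) (not_le.2 hu.1)
  refine ⟨u₀, u₁, hu₀₁, ?_, ?_, ?_⟩
  · intro u hu r hr
    have hcl : IsClosed {u | K / 8 ≤ dist (P u) (γ r)} :=
      isClosed_le continuous_const (P.continuous.dist continuous_const)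
    rw [← closure_Ioo hne] at hu
    exact closure_minimal (hopen r hr) hcl hu
  · rcases hu₀ with h | h
    · obtain ⟨r, ⟨hr, hrt⟩, hrd⟩ := (hL _).1 h
      exact Or.inr ⟨r, hr, hrt, hrd⟩
    · exact Or.inl h
  · rcases hu₁ with h | h
    · obtain ⟨r, ⟨hr, hrt⟩, hrd⟩ := (hR _).1 h
      exact Or.inr ⟨r, hr, hrt, hrd⟩
    · exact Or.inl h

/-- If `γ : [0,ℓ] → X` is a shortest path joining `A` to `Z` in a geodesic metric space
`X`, parametrized by arc length, and no set of diameter at most `K` separates `A` from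
`Z`, then every point of `γ` is `(3K/8)`-surrounded by some bridge. -/
theorem exists_bridge_surrounding
    {X : Type} [MetricSpace X] (hX : IsGeodesicSpace X)
    (A Z : Set X) (K : ℝ) (hK : 0 < K) (ℓ : ℝ) (hℓ : 0 ≤ ℓ) (γ : ℝ → X)
    (hγ0 : γ 0 ∈ A) (hγℓ : γ ℓ ∈ Z)
    (hgeo : ∀ s ∈ Set.Icc 0 ℓ, ∀ t ∈ Set.Icc 0 ℓ, dist (γ s) (γ t) = |s - t|)
    (hshort : ∀ a ∈ A, ∀ z ∈ Z, ∀ p : Path a z,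
      ENNReal.ofReal ℓ ≤ eVariationOn (fun t => p t) Set.univ)
    (hns : ∀ S : Set X, EMetric.diam S ≤ ENNReal.ofReal K →
      ∃ a ∈ A, ∃ z ∈ Z, ∃ p : Path a z, ∀ t, p t ∉ S) :
    ∀ t ∈ Set.Icc 0 ℓ, ∃ B : Bridge A Z K ℓ γ, B.Surrounds (3 * K / 8) t := by
  intro t ht
  have h0 : (0 : ℝ) ∈ Set.Icc 0 ℓ := ⟨le_rfl, hℓ⟩
  have hl : ℓ ∈ Set.Icc 0 ℓ := ⟨hℓ, le_rfl⟩
  have hAZ : ∀ a ∈ A, ∀ z ∈ Z, ℓ ≤ dist a z := by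
    intro a ha z hz
    obtain ⟨c, hc⟩ := hX.exists_path a z
    exact (ENNReal.ofReal_le_ofReal_iff dist_nonneg).1
      ((hshort a ha z hz c).trans (eVariationOn_le_of_dist_eq c dist_nonneg hc))
  obtain ⟨a, ha, z, hz, P, hP⟩ := hns (Metric.closedBall (γ t) (K / 2)) (by
    refine Metric.ediam_le_of_forall_dist_le fun x hx y hy => ?_
    have h1 := dist_triangle_right x y (γ t)
    rw [Metric.mem_closedBall] at hx hy
    linarith)
  obtain ⟨u₀, u₁, hu, hfar, hleft, hright⟩ := exists_far_subinterval hK hgeo ht P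
    (fun u => not_le.1 (hP u))
    (fun r hr => by
      have h1 := dist_triangle a (γ r) (γ ℓ)
      rw [hgeo r hr ℓ hl, abs_sub_comm, abs_of_nonneg (sub_nonneg.2 hr.2)] at h1
      linarith [hAZ a ha _ hγℓ])
    (fun r hr => by
      have h1 := dist_triangle_right (γ 0) z (γ r)
      rw [hgeo 0 h0 r hr, abs_sub_comm, sub_zero, abs_of_nonneg hr.1] at h1
      linarith [hAZ _ hγ0 z hz])
  let spine := P.subpath u₀ u₁
  have hspine : ∀ s, ∀ r ∈ Set.Icc 0 ℓ, K / 8 ≤ dist (spine s) (γ r) := by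
    intro s
    have hs : Set.Icc.convexComb u₀ u₁ s ∈ Set.uIcc u₀ u₁ :=
      Path.range_subpathAux u₀ u₁ ▸ Set.mem_range_self s
    rw [Set.uIcc_of_le hu] at hs
    exact hfar _ hs
  obtain ⟨t0, a1, leg1, ht0, ht0t, hleg1⟩ : ∃ (t0 : ℝ) (a1 : X) (leg1 : Path a1 (P u₀)),
      t0 ∈ Set.Icc 0 ℓ ∧ t0 ≤ max (t - 3 * K / 8) 0 ∧
      (((∃ s, spine s ∈ A) ∧ a1 = P u₀ ∧ (∀ s, leg1 s = P u₀) ∧ t0 = 0) ∨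
      ((∀ s, spine s ∉ A) ∧ a1 = γ t0 ∧
        ∀ s t : unitInterval, dist (leg1 s) (leg1 t) = K / 8 * |(s : ℝ) - (t : ℝ)|)) := by
    by_cases hA : ∃ s, spine s ∈ A
    · exact ⟨0, _, Path.refl _, h0, le_max_right _ _, Or.inl ⟨hA, rfl, fun _ => rfl, rfl⟩⟩
    · push Not at hA
      rcases hleft with rfl | ⟨r, hr, hrt, hrd⟩
      · refine absurd ?_ (hA 0)
        rw [spine.source, P.source]
        exact ha
      · obtain ⟨c, hc⟩ := hX.exists_path (γ r) (P u₀)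
        rw [dist_comm, hrd.antisymm (hfar u₀ ⟨le_rfl, hu⟩ r hr)] at hc
        exact ⟨r, _, c, hr, hrt.trans (le_max_left _ _), Or.inr ⟨hA, rfl, hc⟩⟩
  obtain ⟨t1, a2, leg2, ht1, ht1t, hleg2⟩ : ∃ (t1 : ℝ) (a2 : X) (leg2 : Path (P u₁) a2),
      t1 ∈ Set.Icc 0 ℓ ∧ min (t + 3 * K / 8) ℓ ≤ t1 ∧
      (((∃ s, spine s ∈ Z) ∧ a2 = P u₁ ∧ (∀ s, leg2 s = P u₁) ∧ t1 = ℓ) ∨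
      ((∀ s, spine s ∉ Z) ∧ a2 = γ t1 ∧
        ∀ s t : unitInterval, dist (leg2 s) (leg2 t) = K / 8 * |(s : ℝ) - (t : ℝ)|)) := by
    by_cases hZ : ∃ s, spine s ∈ Z
    · exact ⟨ℓ, _, Path.refl _, hl, min_le_right _ _, Or.inl ⟨hZ, rfl, fun _ => rfl, rfl⟩⟩
    · push Not at hZ
      rcases hright with rfl | ⟨r, hr, hrt, hrd⟩
      · refine absurd ?_ (hZ 1)
        rw [spine.target, P.target]
        exact hz
      · obtain ⟨c, hc⟩ := hX.exists_path (P u₁) (γ r)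
        rw [hrd.antisymm (hfar u₁ ⟨hu, le_rfl⟩ r hr)] at hc
        exact ⟨r, _, c, hr, (min_le_left _ _).trans hrt, Or.inr ⟨hZ, rfl, hc⟩⟩
  have h0t : t0 ≤ t := ht0t.trans (max_le (by linarith) ht.1)
  have ht1' : t ≤ t1 := (le_min (by linarith) ht.2).trans ht1t
  exact ⟨⟨P u₀, P u₁, spine, a1, a2, leg1, leg2, t0, t1, ht0, ht1, h0t.trans ht1', hspine,
    hleg1, hleg2⟩, ht0t, ht1t⟩
end
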